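/- arXiv:1005.1306 — 2 statements merged into one kernel-verified Lean document; each statement's English description precedes it below -/
import Mathlib

section
/- There exists a universal constant C > 0 such that the following holds. For all positive integers n and j, let M be distributed according to the Haar probability measure on SO(n,ℝ), and set W = Tr(M^j)/√j if j is odd and W = (Tr(M^j) − 1)/√j if j is even. Then for every real x₀, |P(W ≤ x₀) − Φ(x₀)| ≤ C·j/n. -/
open MeasureTheory ProbabilityTheory Matrix

/-- Matrices over a measurable space of entries carry the product σ-algebra
(the Borel σ-algebra, for matrices over `ℝ` or `ℂ`). -/
instance matrixMeasurableSpace {m n α : Type*} [MeasurableSpace α] :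
    MeasurableSpace (Matrix m n α) :=
  inferInstanceAs (MeasurableSpace (m → n → α))

/-- The special orthogonal group `SO(n,ℝ)`: real orthogonal `n × n` matrices of
determinant `1`, as a subgroup of the orthogonal group. -/
def SO (n : ℕ) : Subgroup (Matrix.orthogonalGroup (Fin n) ℝ) where
  carrier := {M | Matrix.det (M : Matrix (Fin n) (Fin n) ℝ) = 1}
  mul_mem' := by
    intro a b ha hb
    simp only [Set.mem_setOf_eq, Matrix.UnitaryGroup.mul_val, Matrix.det_mul] at *
    rw [ha, hb, mul_one]
  one_mem' := by
    simp only [Set.mem_setOf_eq, Matrix.UnitaryGroup.one_val, Matrix.det_one]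
  inv_mem' := by
    intro a ha
    simp only [Set.mem_setOf_eq, Matrix.UnitaryGroup.inv_val] at *
    rw [Matrix.star_eq_conjTranspose, Matrix.det_conjTranspose, ha, star_one]

/-- The trace of the `k`-th power (`k : ℤ`, negative powers via the inverse) of an
element of `SO(n,ℝ)`. -/
noncomputable def trSO {n : ℕ} (M : SO n) (k : ℤ) : ℝ :=
  Matrix.trace (((M ^ k : SO n) : Matrix.orthogonalGroup (Fin n) ℝ) :
    Matrix (Fin n) (Fin n) ℝ)

/-- The standard normal cumulative distribution function
`Φ(x₀) = (1/√(2π)) ∫_{-∞}^{x₀} e^{-x²/2} dx`. -/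
noncomputable def Phi (x₀ : ℝ) : ℝ :=
  (Real.sqrt (2 * Real.pi))⁻¹ * ∫ x in Set.Iic x₀, Real.exp (-x ^ 2 / 2)

namespace SOClt

open Filter Topology

instance matBorel (n : ℕ) : BorelSpace (Matrix (Fin n) (Fin n) ℝ) :=
  inferInstanceAs (BorelSpace (Fin n → Fin n → ℝ))

instance orthBorel (n : ℕ) : BorelSpace (Matrix.orthogonalGroup (Fin n) ℝ) :=
  inferInstanceAs (BorelSpace {x : Matrix (Fin n) (Fin n) ℝ // x ∈ Matrix.orthogonalGroup (Fin n) ℝ})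

instance soBorel (n : ℕ) : BorelSpace (SO n) :=
  inferInstanceAs (BorelSpace {x : Matrix.orthogonalGroup (Fin n) ℝ // x ∈ SO n})

/-- The underlying matrix. -/
def mat {n : ℕ} (M : SO n) : Matrix (Fin n) (Fin n) ℝ := M.1.1

lemma mat_mul {n : ℕ} (M N : SO n) : mat (M * N) = mat M * mat N := rfl

lemma continuous_mat {n : ℕ} : Continuous (mat : SO n → _) :=
  continuous_subtype_val.comp continuous_subtype_val

lemma mat_transpose_mul {n : ℕ} (M : SO n) : (mat M)ᵀ * mat M = 1 := by
  have := (Matrix.mem_orthogonalGroup_iff' (Fin n) ℝ).1 M.1.2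
  simpa [mat, Matrix.star_eq_conjTranspose] using this

lemma mat_mul_transpose {n : ℕ} (M : SO n) : mat M * (mat M)ᵀ = 1 := by
  have := (Matrix.mem_orthogonalGroup_iff (Fin n) ℝ).1 M.1.2
  simpa [mat, Matrix.star_eq_conjTranspose] using this

lemma mat_entry_le {n : ℕ} (M : SO n) (i j : Fin n) : |mat M i j| ≤ 1 := by
  have := entry_norm_bound_of_unitary (𝕜 := ℝ) M.1.2 i j
  simpa [mat] using this

instance soCompact (n : ℕ) : CompactSpace (SO n) := by
  have hK : IsCompact {A : Matrix (Fin n) (Fin n) ℝ | A * Aᵀ = 1 ∧ A.det = 1} := by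
    have h1 : IsCompact (Set.pi Set.univ (fun _ : Fin n => Set.pi Set.univ
        (fun _ : Fin n => Set.Icc (-1 : ℝ) 1))) :=
      isCompact_univ_pi fun _ => isCompact_univ_pi fun _ => isCompact_Icc
    refine IsCompact.of_isClosed_subset h1 ?_ ?_
    · apply IsClosed.inter
      · exact isClosed_eq (by fun_prop) (by fun_prop)
      · exact isClosed_eq (by fun_prop) (by fun_prop)
    · rintro A ⟨hA, -⟩ i - j -
      have hm : A ∈ Matrix.unitaryGroup (Fin n) ℝ := by
        rw [Matrix.mem_unitaryGroup_iff]
        simpa [Matrix.star_eq_conjTranspose] using hA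
      have := entry_norm_bound_of_unitary (𝕜 := ℝ) hm i j
      simpa [abs_le] using this
  have hind : Topology.IsInducing (mat : SO n → _) :=
    Topology.IsInducing.subtypeVal.comp Topology.IsInducing.subtypeVal
  refine ⟨?_⟩
  rw [hind.isCompact_iff]
  convert hK
  ext A
  constructor
  · rintro ⟨M, -, rfl⟩
    exact ⟨mat_mul_transpose M, M.2⟩
  · rintro ⟨h1, h2⟩
    refine ⟨⟨⟨A, ?_⟩, h2⟩, trivial, rfl⟩
    rw [Matrix.mem_orthogonalGroup_iff]
    simpa [Matrix.star_eq_conjTranspose] using h1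

lemma cont_integrable {n : ℕ} {μ : Measure (SO n)} [IsProbabilityMeasure μ] {f : SO n → ℝ}
    (hf : Continuous f) : Integrable f μ := by
  exact hf.integrable_of_hasCompactSupport (HasCompactSupport.of_compactSpace f)

section flow
attribute [local instance] Matrix.linftyOpNormedRing Matrix.linftyOpNormedAlgebra

lemma exp_det {n : ℕ} (X : Matrix (Fin n) (Fin n) ℝ) (hX : Xᵀ = -X) :
    NormedSpace.exp X * (NormedSpace.exp X)ᵀ = 1 ∧ (NormedSpace.exp X).det = 1 := by
  have key : ∀ Y : Matrix (Fin n) (Fin n) ℝ, Yᵀ = -Y →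
      NormedSpace.exp Y * (NormedSpace.exp Y)ᵀ = 1 := by
    intro Y hY
    rw [← Matrix.exp_transpose, hY, ← Matrix.exp_add_of_commute _ _ ((Commute.refl Y).neg_right)]
    simp
  refine ⟨key X hX, ?_⟩
  have h2 := key ((1/2 : ℝ) • X) (by simp [hX])
  have h3 : NormedSpace.exp X =
      NormedSpace.exp ((1/2 : ℝ) • X) * NormedSpace.exp ((1/2 : ℝ) • X) := by
    rw [← Matrix.exp_add_of_commute _ _ rfl, ← add_smul]
    norm_num
  have h4 := congrArg Matrix.det h2
  rw [Matrix.det_mul, Matrix.det_transpose, Matrix.det_one] at h4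
  rw [h3, Matrix.det_mul, h4]

/-- one parameter subgroup generated by a skew matrix -/
noncomputable def flow {n : ℕ} (X : Matrix (Fin n) (Fin n) ℝ) (hX : Xᵀ = -X) (t : ℝ) : SO n :=
  ⟨⟨NormedSpace.exp (t • X), by
    have := (exp_det (t • X) (by simp [hX])).1
    rw [Matrix.mem_orthogonalGroup_iff]
    simpa [Matrix.star_eq_conjTranspose] using this⟩, (exp_det (t • X) (by simp [hX])).2⟩

lemma flow_add {n : ℕ} (X : Matrix (Fin n) (Fin n) ℝ) (hX : Xᵀ = -X) (s t : ℝ) :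
    flow X hX (s + t) = flow X hX s * flow X hX t := by
  apply Subtype.ext; apply Subtype.ext
  change NormedSpace.exp ((s + t) • X) = NormedSpace.exp (s • X) * NormedSpace.exp (t • X)
  rw [add_smul]
  exact Matrix.exp_add_of_commute _ _ ((Commute.refl X).smul_left s |>.smul_right t)

lemma flow_zero {n : ℕ} (X : Matrix (Fin n) (Fin n) ℝ) (hX : Xᵀ = -X) :
    flow X hX 0 = 1 := by
  apply Subtype.ext; apply Subtype.ext
  change NormedSpace.exp ((0:ℝ) • X) = 1
  simp

/-- `dX F M = F'` : derivative along the flow. -/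
def FlowDeriv {n : ℕ} (X : Matrix (Fin n) (Fin n) ℝ) (hX : Xᵀ = -X) (F F' : SO n → ℝ) : Prop :=
  ∀ M, HasDerivAt (fun t => F (flow X hX t * M)) (F' M) 0

lemma FlowDeriv.at {n : ℕ} {X : Matrix (Fin n) (Fin n) ℝ} {hX : Xᵀ = -X} {F F' : SO n → ℝ}
    (h : FlowDeriv X hX F F') (M : SO n) (t : ℝ) :
    HasDerivAt (fun t => F (flow X hX t * M)) (F' (flow X hX t * M)) t := by
  have h1 := h (flow X hX t * M)
  have h2 : HasDerivAt (fun s : ℝ => s - t) 1 t := (hasDerivAt_id t).sub_const t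
  have h3 := HasDerivAt.scomp_of_eq (g₁ := fun s => F (flow X hX s * (flow X hX t * M))) t h1 h2
    (by simp)
  simp only [one_smul] at h3
  refine h3.congr_of_eventuallyEq (Eventually.of_forall fun s => ?_)
  simp only [Function.comp]
  rw [← mul_assoc, ← flow_add]
  simp

lemma ibp {n : ℕ} {μ : Measure (SO n)} [IsProbabilityMeasure μ] [μ.IsHaarMeasure]
    {X : Matrix (Fin n) (Fin n) ℝ} {hX : Xᵀ = -X} {F F' : SO n → ℝ}
    (hF : Continuous F) (hF' : Continuous F')
    (h : FlowDeriv X hX F F') : ∫ M, F' M ∂μ = 0 := by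
  obtain ⟨B, hB⟩ := (isCompact_range hF').isBounded.exists_norm_le
  have key := hasDerivAt_integral_of_dominated_loc_of_deriv_le (μ := μ) (𝕜 := ℝ) (x₀ := 0)
    (s := Set.univ) (bound := fun _ => B)
    (F := fun t M => F (flow X hX t * M)) (F' := fun t M => F' (flow X hX t * M))
    univ_mem
    (Eventually.of_forall fun t =>
      (hF.comp (continuous_const.mul continuous_id)).aestronglyMeasurable)
    (cont_integrable (hF.comp (continuous_const.mul continuous_id)))
    ((hF'.comp (continuous_const.mul continuous_id)).aestronglyMeasurable)
    (Eventually.of_forall fun M t _ => hB _ ⟨_, rfl⟩)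
    (integrable_const _)
    (Eventually.of_forall fun M t _ => h.at M t)
  have h2 := key.2
  simp only [integral_mul_left_eq_self (μ := μ) F, integral_mul_left_eq_self (μ := μ) F'] at h2
  exact h2.unique (hasDerivAt_const _ _)

lemma hasDerivAt_flow_mul {n : ℕ} (X : Matrix (Fin n) (Fin n) ℝ) (hX : Xᵀ = -X) (M : SO n) :
    HasDerivAt (fun t => mat (flow X hX t * M)) (X * mat M) 0 := by
  have h := (hasDerivAt_exp_smul_const' (𝕂 := ℝ) X (0 : ℝ)).mul_const (mat M)
  refine HasDerivAt.congr_deriv h ?_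
  simp

lemma hasDerivAt_flow_pow {n : ℕ} (X : Matrix (Fin n) (Fin n) ℝ) (hX : Xᵀ = -X) (M : SO n)
    (j : ℕ) :
    HasDerivAt (fun t => mat (flow X hX t * M) ^ j)
      (∑ i ∈ Finset.range j, mat M ^ i * X * mat M ^ (j - i)) 0 := by
  induction j with
  | zero => exact hasDerivAt_const (0:ℝ) (1 : Matrix (Fin n) (Fin n) ℝ)
  | succ j ih =>
    have h := ih.mul (hasDerivAt_flow_mul X hX M)
    simp only [pow_succ]
    refine h.congr_deriv ?_
    rw [flow_zero, one_mul, Finset.sum_mul, Finset.sum_range_succ]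
    congr 1
    · refine Finset.sum_congr rfl fun i hi => ?_
      have : j + 1 - i = (j - i) + 1 := by have := Finset.mem_range.1 hi; omega
      rw [this, pow_succ]; simp only [mul_assoc]
    · simp [mul_assoc]

lemma hasDerivAt_flow_trace {n : ℕ} (X : Matrix (Fin n) (Fin n) ℝ) (hX : Xᵀ = -X)
    (A : Matrix (Fin n) (Fin n) ℝ) (j : ℕ) :
    FlowDeriv X hX (fun M => Matrix.trace (A * mat M ^ j))
      (fun M => ∑ i ∈ Finset.range j, Matrix.trace (A * (mat M ^ i * X * mat M ^ (j - i)))) := by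
  intro M
  have h := (hasDerivAt_flow_pow X hX M j).const_mul A
  have h2 := (LinearMap.toContinuousLinearMap
    (Matrix.traceLinearMap (Fin n) ℝ ℝ)).hasFDerivAt.comp_hasDerivAt (0:ℝ) h
  refine h2.congr_deriv ?_
  change Matrix.trace (A * ∑ i ∈ Finset.range j, mat M ^ i * X * mat M ^ (j - i)) = _
  rw [Finset.mul_sum, Matrix.trace_sum]

end flow

end SOClt
namespace SOClt

open Filter Topology

/-- power sums -/
noncomputable def p {n : ℕ} (k : ℕ) (M : SO n) : ℝ := Matrix.trace (mat M ^ k)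

lemma p_zero {n : ℕ} (M : SO n) : p 0 M = n := by simp [p]

lemma continuous_p {n : ℕ} (k : ℕ) : Continuous (p k : SO n → ℝ) :=
  (continuous_mat.pow k).matrix_trace

lemma mat_pow {n : ℕ} (M : SO n) (k : ℕ) : mat (M ^ k) = mat M ^ k := by
  induction k with
  | zero => rfl
  | succ k ih => rw [pow_succ, pow_succ, mat_mul, ih]

lemma abs_p_le {n : ℕ} (k : ℕ) (M : SO n) : |p k M| ≤ n := by
  rw [p, ← mat_pow, Matrix.trace]
  refine (Finset.abs_sum_le_sum_abs _ _).trans ?_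
  refine (Finset.sum_le_sum fun i _ => mat_entry_le (M ^ k) i i).trans ?_
  simp

/-- absolute difference of naturals -/
abbrev ad (a b : ℕ) : ℕ := (a - b) + (b - a)

lemma trace_tr_mul {n : ℕ} (M : SO n) (i k : ℕ) :
    Matrix.trace ((mat M ^ i)ᵀ * mat M ^ k) = p (ad i k) M := by
  have key : ∀ i k : ℕ, i ≤ k → (mat M ^ i)ᵀ * mat M ^ k = mat M ^ (k - i) := by
    intro i k h
    obtain ⟨d, rfl⟩ := Nat.exists_eq_add_of_le h
    rw [pow_add, ← mul_assoc, ← mat_pow M i, mat_transpose_mul]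
    simp
  rcases le_total i k with h | h
  · rw [key i k h, p]; congr 2; simp only [ad]; omega
  · rw [← Matrix.trace_transpose, Matrix.transpose_mul, Matrix.transpose_transpose, key k i h, p]
    congr 2; simp only [ad]; omega

/-- the basis of skew matrices -/
def skew {n : ℕ} (a b : Fin n) : Matrix (Fin n) (Fin n) ℝ :=
  Matrix.single a b 1 - Matrix.single b a 1

lemma skew_tr {n : ℕ} (a b : Fin n) : (skew a b)ᵀ = - skew a b := by
  simp [skew, Matrix.transpose_single]

lemma trace_single_mul' {n : ℕ} (a b : Fin n) (A : Matrix (Fin n) (Fin n) ℝ) :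
    Matrix.trace (Matrix.single a b 1 * A) = A b a := by
  simp [Matrix.trace_single_mul]

lemma trace_skew {n : ℕ} (a b : Fin n) (A : Matrix (Fin n) (Fin n) ℝ) :
    Matrix.trace (skew a b * A) = A b a - A a b := by
  rw [skew, Matrix.sub_mul, Matrix.trace_sub, trace_single_mul', trace_single_mul']

lemma trace_ss {n : ℕ} (a b c d : Fin n) (A B : Matrix (Fin n) (Fin n) ℝ) :
    Matrix.trace (Matrix.single a b 1 * (A * Matrix.single c d 1 * B)) = A b c * B d a := by
  rw [trace_single_mul', mul_assoc, Matrix.mul_apply, Finset.sum_eq_single c]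
  · simp
  · intro x _ hx; simp [Matrix.single_mul_apply_of_ne, hx]
  · simp

lemma sum_skew1 {n : ℕ} (A B : Matrix (Fin n) (Fin n) ℝ) :
    ∑ a, ∑ b, Matrix.trace (skew a b * A) * Matrix.trace (skew a b * B)
      = 2 * (Matrix.trace (Aᵀ * B) - Matrix.trace (A * B)) := by
  have e1 : Matrix.trace (Aᵀ * B) = ∑ a, ∑ b, A b a * B b a := by
    simp [Matrix.trace, Matrix.mul_apply]
  have e2 : Matrix.trace (A * B) = ∑ a, ∑ b, A a b * B b a := by
    simp [Matrix.trace, Matrix.mul_apply]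
  have e3 : ∑ a, ∑ b, A b a * B b a = ∑ a, ∑ b, A a b * B a b := Finset.sum_comm
  have e4 : ∑ a, ∑ b, A a b * B b a = ∑ a, ∑ b, A b a * B a b := Finset.sum_comm
  simp only [trace_skew]
  have : ∀ a b, (A b a - A a b) * (B b a - B a b)
    = A b a * B b a + A a b * B a b - A a b * B b a - A b a * B a b := by intros; ring
  simp only [this, Finset.sum_sub_distrib, Finset.sum_add_distrib]
  rw [e1, e2]
  linarith

lemma sum_skew2 {n : ℕ} (A B : Matrix (Fin n) (Fin n) ℝ) :
    ∑ a, ∑ b, Matrix.trace (skew a b * (A * skew a b * B))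
      = 2 * (Matrix.trace (Aᵀ * B) - Matrix.trace A * Matrix.trace B) := by
  have e1 : Matrix.trace (Aᵀ * B) = ∑ a, ∑ b, A b a * B b a := by
    simp [Matrix.trace, Matrix.mul_apply]
  have e2 : Matrix.trace A * Matrix.trace B = ∑ a, ∑ b, A a a * B b b := by
    simp [Matrix.trace, Finset.sum_mul_sum]
  have e3 : ∑ a, ∑ b, A b a * B b a = ∑ a, ∑ b, A a b * B a b := Finset.sum_comm
  have e4 : ∑ a, ∑ b, A a a * B b b = ∑ a, ∑ b, A b b * B a a := Finset.sum_comm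
  have : ∀ a b, Matrix.trace (skew a b * (A * skew a b * B))
    = A b a * B b a + A a b * B a b - A a a * B b b - A b b * B a a := by
    intro a b
    simp only [skew, Matrix.sub_mul, Matrix.mul_sub, Matrix.trace_sub]
    simp only [trace_ss]
    ring
  simp only [this, Finset.sum_sub_distrib, Finset.sum_add_distrib]
  rw [e1, e2]
  linarith

lemma flowDeriv_p {n : ℕ} (X : Matrix (Fin n) (Fin n) ℝ) (hX : Xᵀ = -X) (j : ℕ) :
    FlowDeriv X hX (p j) (fun M => j * Matrix.trace (X * mat M ^ j)) := by
  intro M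
  have h := hasDerivAt_flow_trace X hX 1 j M
  simp only [one_mul] at h
  refine h.congr_deriv ?_
  rw [Finset.sum_congr rfl (g := fun _ => Matrix.trace (X * mat M ^ j))]
  · simp
  · intro i hi
    rw [Matrix.trace_mul_comm, ← mul_assoc, ← pow_add, Matrix.trace_mul_comm]
    congr 3
    have := Finset.mem_range.1 hi; omega

lemma sum3 {n : ℕ} (S : Finset ℕ) (f : Fin n → Fin n → ℕ → ℝ) :
    ∑ a, ∑ b, ∑ i ∈ S, f a b i = ∑ i ∈ S, ∑ a, ∑ b, f a b i := by
  rw [Finset.sum_comm]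
  rw [Finset.sum_congr rfl fun a _ => Finset.sum_comm]
  rw [Finset.sum_comm]
  exact Finset.sum_congr rfl fun a _ => Finset.sum_comm

lemma loop {n : ℕ} {μ : Measure (SO n)} [IsProbabilityMeasure μ] [μ.IsHaarMeasure]
    (j : ℕ) (B : Finset ℕ) (ψ : SO n → ℝ) (ψ' : ℕ → SO n → ℝ) (hψ : Continuous ψ)
    (hψ' : ∀ b ∈ B, Continuous (ψ' b))
    (hd : ∀ X hX, FlowDeriv X hX ψ
      (fun M => ∑ b ∈ B, b * Matrix.trace (X * mat M ^ b) * ψ' b M)) :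
    ∫ M, (ψ M * ∑ i ∈ Finset.range j, (p (ad j (2 * i)) M - p i M * p (j - i) M)
      + ∑ b ∈ B, b * ψ' b M * (p (ad j b) M - p (j + b) M)) ∂μ = 0 := by
  have hc : ∀ (a b : Fin n) (k : ℕ), Continuous fun M : SO n => Matrix.trace (skew a b * mat M ^ k) :=
    fun a b k => (continuous_const.mul (continuous_mat.pow k)).matrix_trace
  have h1 : ∀ a b : Fin n, ∫ M, (ψ M * ∑ i ∈ Finset.range j,
        Matrix.trace (skew a b * (mat M ^ i * skew a b * mat M ^ (j - i)))
      + ∑ c ∈ B, c * ψ' c M *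
        (Matrix.trace (skew a b * mat M ^ j) * Matrix.trace (skew a b * mat M ^ c))) ∂μ = 0 := by
    intro a b
    apply ibp (X := skew a b) (hX := skew_tr a b)
      (F := fun M => Matrix.trace (skew a b * mat M ^ j) * ψ M)
    · exact (hc a b j).mul hψ
    · refine (hψ.mul (continuous_finsetSum _ fun i _ => ?_)).add
        (continuous_finsetSum _ fun c hcB => ?_)
      · exact (continuous_const.mul (((continuous_mat.pow i).mul continuous_const).mul
          (continuous_mat.pow _))).matrix_trace
      · exact (continuous_const.mul (hψ' c hcB)).mul ((hc a b j).mul (hc a b c))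
    · intro M
      have e := (hasDerivAt_flow_trace (skew a b) (skew_tr a b) (skew a b) j M).mul
        (hd _ (skew_tr a b) M)
      refine e.congr_deriv ?_
      simp only [flow_zero, one_mul]
      rw [mul_comm (ψ M), Finset.mul_sum]
      congr 1
      refine Finset.sum_congr rfl fun c _ => ?_
      ring
  have h2 : ∑ a : Fin n, ∑ b : Fin n, ∫ M, (ψ M * ∑ i ∈ Finset.range j,
        Matrix.trace (skew a b * (mat M ^ i * skew a b * mat M ^ (j - i)))
      + ∑ c ∈ B, c * ψ' c M *
        (Matrix.trace (skew a b * mat M ^ j) * Matrix.trace (skew a b * mat M ^ c))) ∂μ = 0 := by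
    simp [h1]
  have hci : ∀ a b : Fin n, Continuous fun M => (ψ M * ∑ i ∈ Finset.range j,
        Matrix.trace (skew a b * (mat M ^ i * skew a b * mat M ^ (j - i)))
      + ∑ c ∈ B, c * ψ' c M *
        (Matrix.trace (skew a b * mat M ^ j) * Matrix.trace (skew a b * mat M ^ c))) := by
    intro a b
    refine (hψ.mul (continuous_finsetSum _ fun i _ => ?_)).add
        (continuous_finsetSum _ fun c hcB => ?_)
    · exact (continuous_const.mul (((continuous_mat.pow i).mul continuous_const).mul
          (continuous_mat.pow _))).matrix_trace
    · exact (continuous_const.mul (hψ' c hcB)).mul ((hc a b j).mul (hc a b c))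
  have h3 : ∀ M : SO n, ∑ a : Fin n, ∑ b : Fin n, (ψ M * ∑ i ∈ Finset.range j,
        Matrix.trace (skew a b * (mat M ^ i * skew a b * mat M ^ (j - i)))
      + ∑ c ∈ B, c * ψ' c M *
        (Matrix.trace (skew a b * mat M ^ j) * Matrix.trace (skew a b * mat M ^ c)))
      = 2 * (ψ M * ∑ i ∈ Finset.range j, (p (ad j (2 * i)) M - p i M * p (j - i) M)
      + ∑ b ∈ B, b * ψ' b M * (p (ad j b) M - p (j + b) M)) := by
    intro M
    have e1 : ∑ a : Fin n, ∑ b : Fin n, ψ M * ∑ i ∈ Finset.range j,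
        Matrix.trace (skew a b * (mat M ^ i * skew a b * mat M ^ (j - i)))
        = 2 * (ψ M * ∑ i ∈ Finset.range j, (p (ad j (2 * i)) M - p i M * p (j - i) M)) := by
      have : ∀ i ∈ Finset.range j, (p (ad j (2 * i)) M - p i M * p (j - i) M) = 1/2 *
          ∑ a : Fin n, ∑ b : Fin n, Matrix.trace (skew a b * (mat M ^ i * skew a b * mat M ^ (j - i))) := by
        intro i hi
        rw [sum_skew2, trace_tr_mul]
        have : ad j (2 * i) = ad i (j - i) := by
          have := Finset.mem_range.1 hi; simp only [ad]; omega
        rw [this]; simp only [p]; ring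
      rw [Finset.sum_congr rfl this, ← Finset.mul_sum, ← sum3]
      simp only [← Finset.mul_sum]
      ring
    have e2 : ∑ a : Fin n, ∑ b : Fin n, ∑ c ∈ B, c * ψ' c M *
        (Matrix.trace (skew a b * mat M ^ j) * Matrix.trace (skew a b * mat M ^ c))
        = 2 * ∑ b ∈ B, b * ψ' b M * (p (ad j b) M - p (j + b) M) := by
      have : ∀ b ∈ B, b * ψ' b M * (p (ad j b) M - p (j + b) M) = 
        ∑ x : Fin n, ∑ y : Fin n, 1 / 2 * (b * ψ' b M *
        (Matrix.trace (skew x y * mat M ^ j) * Matrix.trace (skew x y * mat M ^ b))) := by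
        intro b hb
        simp only [← Finset.mul_sum]
        rw [sum_skew1, trace_tr_mul, ← pow_add]; simp only [p]; ring
      rw [Finset.sum_congr rfl this, sum3, Finset.mul_sum]
      refine Finset.sum_congr rfl fun c _ => ?_
      simp only [← Finset.mul_sum]
      ring
    simp only [Finset.sum_add_distrib]
    rw [e1, e2]; ring
  have h4 : ∫ M, 2 * (ψ M * ∑ i ∈ Finset.range j, (p (ad j (2 * i)) M - p i M * p (j - i) M)
      + ∑ b ∈ B, b * ψ' b M * (p (ad j b) M - p (j + b) M)) ∂μ = 0 := by
    rw [← h2]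
    simp only [← h3]
    rw [integral_finsetSum _ fun a _ => cont_integrable (continuous_finsetSum _ fun b _ => hci a b)]
    refine Finset.sum_congr rfl fun a _ => ?_
    rw [integral_finsetSum _ fun b _ => cont_integrable (hci a b)]
  rw [integral_const_mul] at h4
  linarith

end SOClt
namespace SOClt

open Filter Topology MvPolynomial

/-- parity indicator -/
def eta (k : ℕ) : ℕ := if Even k then 1 else 0

lemma eta_add_two (k : ℕ) : eta (k + 2) = eta k := by
  simp [eta, Nat.even_add]

lemma eta_congr {a b : ℕ} (h : a % 2 = b % 2) : eta a = eta b := by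
  simp [eta, Nat.even_iff, h]

lemma eta_zero : eta 0 = 1 := rfl
lemma eta_one : eta 1 = 0 := rfl
lemma eta_two : eta 2 = 1 := rfl

lemma eta_sq (k : ℕ) : eta k * eta k = eta k := by
  unfold eta; split_ifs <;> rfl

/-- polynomial ring in power sums -/
abbrev PA := MvPolynomial ℕ ℝ

lemma pderiv_comm' (i j : ℕ) (Q : PA) : pderiv i (pderiv j Q) = pderiv j (pderiv i Q) := by
  have h : ⁅(pderiv i : Derivation ℝ PA PA), (pderiv j : Derivation ℝ PA PA)⁆ = 0 := by
    apply MvPolynomial.derivation_ext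
    intro k
    rw [Derivation.commutator_apply]
    simp only [pderiv_X, Pi.single_apply]
    split_ifs <;> simp
  have h2 := DFunLike.congr_fun h Q
  rw [Derivation.commutator_apply] at h2
  simpa [sub_eq_zero] using h2

/-- Stein operator -/
noncomputable def T (a : ℕ) (Q : PA) : PA := X a * Q - (eta a : PA) * Q - (a : PA) * pderiv a Q

lemma T_zero (Q : PA) : T 0 Q = X 0 * Q - Q := by simp [T, eta_zero]

lemma T_C_mul (a : ℕ) (c : ℝ) (Q : PA) : T a (C c * Q) = C c * T a Q := by
  simp only [T, pderiv_C_mul]; ring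

/-- loop polynomial -/
noncomputable def LoopP (a N : ℕ) (Q : PA) : PA :=
  Q * ∑ i ∈ Finset.range a, (X (ad a (2 * i)) - X i * X (a - i))
    + ∑ b ∈ Finset.range N, (b : PA) * pderiv b Q * (X (ad a b) - X (a + b))

lemma id1 (f : ℕ → PA) : ∀ a : ℕ, ∑ i ∈ Finset.range a, f (ad a (2 * i))
    = ∑ i ∈ Finset.range a, ((eta i : PA) * f (a - i) + (eta (a - i) : PA) * f i)
  | 0 => by simp
  | 1 => by simp [eta_zero, eta_one, ad]
  | (a + 2) => by
    have ih := id1 f a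
    rw [Finset.sum_add_distrib] at ih ⊢
    rw [Finset.sum_range_succ', Finset.sum_range_succ]
    have e1 : ∑ i ∈ Finset.range a, f (ad (a + 2) (2 * (i + 1)))
        = ∑ i ∈ Finset.range a, f (ad a (2 * i)) := by
      refine Finset.sum_congr rfl fun i _ => ?_
      congr 1; simp only [ad]; omega
    have e2 : f (ad (a + 2) (2 * (a + 1))) = f a := by congr 1; simp only [ad]; omega
    have e3 : f (ad (a + 2) (2 * 0)) = f (a + 2) := by simp [ad]
    rw [e1, e2, e3, ih]
    rw [Finset.sum_range_succ' (fun i => (eta i : PA) * f (a + 2 - i)), Finset.sum_range_succ']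
    rw [Finset.sum_range_succ (fun i => (eta (a + 2 - i) : PA) * f i), Finset.sum_range_succ (fun i => (eta (a + 2 - i) : PA) * f i)]
    have e4 : ∑ i ∈ Finset.range a, (eta (i + 1 + 1) : PA) * f (a + 2 - (i + 1 + 1))
        = ∑ i ∈ Finset.range a, (eta i : PA) * f (a - i) := by
      refine Finset.sum_congr rfl fun i _ => ?_
      rw [eta_add_two]
      congr 2; omega
    have e5 : ∑ i ∈ Finset.range a, (eta (a + 2 - i) : PA) * f i
        = ∑ i ∈ Finset.range a, (eta (a - i) : PA) * f i := by
      refine Finset.sum_congr rfl fun i hi => ?_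
      have := Finset.mem_range.1 hi
      rw [show a + 2 - i = (a - i) + 2 by omega, eta_add_two]
    rw [e4, e5]
    have e6 : a + 2 - a = 2 := by omega
    have e7 : a + 2 - (a + 1) = 1 := by omega
    rw [e6, e7]
    simp only [eta_zero, eta_one, eta_two]
    simp [eta_one]
    ring

lemma id0a : ∀ a : ℕ, 2 * ∑ i ∈ Finset.range a, eta i * eta (a - i) = a * eta a
  | 0 => by simp
  | 1 => by simp [eta_zero, eta_one]
  | (a + 2) => by
    have ih := id0a a
    rw [Finset.sum_range_succ', Finset.sum_range_succ']
    have e4 : ∑ i ∈ Finset.range a, eta (i + 1 + 1) * eta (a + 2 - (i + 1 + 1))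
        = ∑ i ∈ Finset.range a, eta i * eta (a - i) := by
      refine Finset.sum_congr rfl fun i _ => ?_
      rw [eta_add_two]
      congr 2; omega
    rw [e4]
    simp only [eta_zero, eta_one, eta_add_two, Nat.sub_zero]
    simp only [zero_add, eta_one]
    nlinarith [ih]

lemma id0b (a : ℕ) : 2 * ∑ i ∈ Finset.range a, (if i = a - i then i else 0) = a * eta a := by
  rcases Nat.even_or_odd' a with ⟨m, rfl | rfl⟩
  · rcases Nat.eq_zero_or_pos m with rfl | hm
    · simp
    rw [Finset.sum_eq_single m]
    · rw [if_pos (by omega)]; simp [eta]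
    · intro b _ hb
      rw [if_neg (by omega)]
    · intro h; simp at h; omega
  · rw [Finset.sum_eq_zero]
    · have : ¬ Even (2 * m + 1) := by simp
      simp [eta]
    · intro b _
      rw [if_neg (by omega)]

lemma id0 (a : ℕ) : (∑ i ∈ Finset.range a, ((eta a : PA) - (eta i : PA) * (eta (a - i) : PA)
    - (if i = a - i then (i : PA) else 0))) = 0 := by
  have h1 : (2 : PA) * ∑ i ∈ Finset.range a, (eta i : PA) * (eta (a - i) : PA) = a * eta a := by
    have := id0a a
    exact_mod_cast congrArg (Nat.cast : ℕ → PA) this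
  have h2 : (2 : PA) * ∑ i ∈ Finset.range a, (if i = a - i then (i : PA) else 0) = a * eta a := by
    have := id0b a
    have h3 := congrArg (Nat.cast : ℕ → PA) this
    push_cast at h3
    exact h3
  have h3 : (2 : PA) * (∑ i ∈ Finset.range a, ((eta a : PA) - (eta i : PA) * (eta (a - i) : PA)
    - (if i = a - i then (i : PA) else 0))) = 0 := by
    rw [Finset.sum_sub_distrib, Finset.sum_sub_distrib, Finset.sum_const, Finset.card_range,
      nsmul_eq_mul, mul_sub, mul_sub, h1, h2]
    ring
  have h4 : (2 : PA) ≠ 0 := two_ne_zero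
  exact (mul_eq_zero.1 h3).resolve_left h4

lemma id2 (a N : ℕ) (haN : a ≤ N) (H : ℕ → ℕ → PA) (hs : ∀ i j, H i j = H j i)
    (hN : ∀ i j, N ≤ i → H i j = 0) :
    ∑ b ∈ Finset.range N, ((b : PA) * (ad a b : ℕ) * H (ad a b) b - (b : PA) * (a + b : ℕ) * H (a + b) b)
     = ∑ i ∈ Finset.range a, (i : PA) * (a - i : ℕ) * H (a - i) i := by
  obtain ⟨d, rfl⟩ := Nat.exists_eq_add_of_le haN
  rw [Finset.sum_sub_distrib, Finset.sum_range_add]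
  have e1 : ∑ b ∈ Finset.range a, (b : PA) * (ad a b : ℕ) * H (ad a b) b
      = ∑ i ∈ Finset.range a, (i : PA) * (a - i : ℕ) * H (a - i) i := by
    refine Finset.sum_congr rfl fun i hi => ?_
    have := Finset.mem_range.1 hi
    have : ad a i = a - i := by simp only [ad]; omega
    rw [this]
  have e2 : ∑ b ∈ Finset.range (a + d), (b : PA) * (a + b : ℕ) * H (a + b) b
      = ∑ b ∈ Finset.range d, (b : PA) * (a + b : ℕ) * H (a + b) b := by
    symm
    apply Finset.sum_subset
    · intro x; simp only [Finset.mem_range]; omega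
    · intro x _ hx
      rw [hN]; · simp
      simp only [Finset.mem_range] at hx; omega
  rw [e1, e2]
  have e3 : ∑ x ∈ Finset.range d, ((a + x : ℕ) : PA) * (ad a (a + x) : ℕ) * H (ad a (a + x)) (a + x)
     = ∑ b ∈ Finset.range d, (b : PA) * (a + b : ℕ) * H (a + b) b := by
    refine Finset.sum_congr rfl fun i hi => ?_
    have : ad a (a + i) = i := by simp only [ad]; omega
    rw [this, hs]; ring
  rw [e3]; ring

lemma poly_id (a N : ℕ) (Q : PA) (haN : a ≤ N) (hN : ∀ b, N ≤ b → pderiv b Q = 0) :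
    LoopP a N Q = ∑ i ∈ Finset.range a, (T (ad a (2 * i)) Q - T i (X (a - i) * Q)
        - (eta i : PA) * T (a - i) Q - (i : PA) * T (a - i) (pderiv i Q))
      + ∑ b ∈ Finset.range N, (b : PA) * (T (ad a b) (pderiv b Q) - T (a + b) (pderiv b Q)) := by
  have h2 := id2 a N haN (fun i j => pderiv i (pderiv j Q)) (fun i j => pderiv_comm' i j Q)
    (fun i j h => by
      change pderiv i (pderiv j Q) = 0
      rw [pderiv_comm', hN i h, map_zero])
  have h1 := id1 (fun k => (k : PA) * pderiv k Q) a
  have h0 := id0 a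
  have hi : ∀ i ∈ Finset.range a, (T (ad a (2 * i)) Q - T i (X (a - i) * Q)
        - (eta i : PA) * T (a - i) Q - (i : PA) * T (a - i) (pderiv i Q))
      = Q * (X (ad a (2 * i)) - X i * X (a - i))
        - Q * ((eta a : PA) - (eta i : PA) * (eta (a - i) : PA)
           - (if i = a - i then (i : PA) else 0))
        - ((ad a (2 * i) : ℕ) : PA) * pderiv (ad a (2 * i)) Q
        + ((eta i : PA) * (((a - i : ℕ) : PA) * pderiv (a - i) Q)
           + (eta (a - i) : PA) * ((i : PA) * pderiv i Q))
        + (i : PA) * ((a - i : ℕ) : PA) * pderiv (a - i) (pderiv i Q) := by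
    intro i hi
    have e : eta (ad a (2 * i)) = eta a := eta_congr (by simp only [ad]; omega)
    simp only [T, pderiv_mul, pderiv_X, e]
    by_cases h : i = a - i
    · rw [if_pos h, ← h]; simp; ring
    · rw [if_neg h, Pi.single_eq_of_ne (Ne.symm h)]; ring
  have hb : ∀ b ∈ Finset.range N, (b : PA) * (T (ad a b) (pderiv b Q) - T (a + b) (pderiv b Q))
      = (b : PA) * pderiv b Q * (X (ad a b) - X (a + b))
        - ((b : PA) * ((ad a b : ℕ) : PA) * pderiv (ad a b) (pderiv b Q)
          - (b : PA) * ((a + b : ℕ) : PA) * pderiv (a + b) (pderiv b Q)) := by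
    intro b hb
    have e : eta (ad a b) = eta (a + b) := eta_congr (by simp only [ad]; omega)
    simp only [T, e]; ring
  rw [Finset.sum_congr rfl hi, Finset.sum_congr rfl hb, LoopP]
  simp only [Finset.sum_add_distrib, Finset.sum_sub_distrib, ← Finset.mul_sum] at h0 h1 h2 ⊢
  rw [h0, h1]
  linear_combination h2

end SOClt
namespace SOClt

open Filter Topology MvPolynomial

/-- evaluation at power sums -/
noncomputable def ev {n : ℕ} (M : SO n) (Q : PA) : ℝ := MvPolynomial.eval (fun k => p k M) Q

lemma continuous_ev {n : ℕ} (Q : PA) : Continuous (fun M : SO n => ev M Q) := by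
  unfold ev
  induction Q using MvPolynomial.induction_on with
  | C a => simpa using continuous_const
  | add P Q hP hQ => exact (hP.add hQ).congr fun M => by simp
  | mul_X P k hP => exact (hP.mul (continuous_p k)).congr fun M => by simp

lemma ev_flow {n : ℕ} (Q : PA) : ∀ᶠ N in atTop, ∀ X hX, FlowDeriv (n := n) X hX (fun M => ev M Q)
      (fun M => ∑ b ∈ Finset.range N, b * Matrix.trace (X * mat M ^ b) * ev M (pderiv b Q)) := by
  induction Q using MvPolynomial.induction_on with
  | C a =>
    refine Eventually.of_forall fun N X hX M => ?_
    simpa [ev] using hasDerivAt_const (0:ℝ) a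
  | add P Q hP hQ =>
    filter_upwards [hP, hQ] with N h1 h2 X hX M
    have h := (h1 X hX M).add (h2 X hX M)
    simp only [ev, map_add] at h ⊢
    refine h.congr_deriv ?_
    rw [← Finset.sum_add_distrib]
    exact Finset.sum_congr rfl fun b _ => by ring
  | mul_X P k hP =>
    filter_upwards [hP, eventually_gt_atTop k] with N h1 hk Y hY M
    have h := (h1 Y hY M).mul (flowDeriv_p Y hY k M)
    simp only [ev, map_mul, eval_X] at h ⊢
    refine h.congr_deriv ?_
    simp only [flow_zero, one_mul]
    have : ∀ b, eval (fun k => p k M) (pderiv b (P * X k))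
        = eval (fun k => p k M) (pderiv b P) * p k M
          + if k = b then eval (fun k => p k M) P else 0 := by
      intro b
      rw [pderiv_mul, pderiv_X]
      by_cases h : k = b
      · subst h; simp
      · simp [h]
    simp only [this, mul_add, Finset.sum_add_distrib, mul_ite, mul_zero]
    rw [Finset.sum_ite_eq, if_pos (Finset.mem_range.2 hk), Finset.sum_mul]
    congr 1
    · exact Finset.sum_congr rfl fun b _ => by ring
    · ring

lemma pderiv_eventually (Q : PA) : ∀ᶠ N in atTop, ∀ b, N ≤ b → pderiv b Q = 0 := by
  induction Q using MvPolynomial.induction_on with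
  | C a => exact Eventually.of_forall fun N b _ => by simp
  | add P Q hP hQ =>
    filter_upwards [hP, hQ] with N h1 h2 b hb
    rw [map_add, h1 b hb, h2 b hb, add_zero]
  | mul_X P k hP =>
    filter_upwards [hP, eventually_gt_atTop k] with N h1 h2 b hb
    rw [pderiv_mul, h1 b hb, pderiv_X_of_ne (by omega)]
    simp

section
set_option linter.unusedSectionVars false
variable {n : ℕ} (μ : Measure (SO n)) [IsProbabilityMeasure μ] [μ.IsHaarMeasure]

/-- expectation of polynomial -/
noncomputable def Ex : PA →ₗ[ℝ] ℝ where
  toFun Q := ∫ M, ev M Q ∂μ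
  map_add' P Q := by
    rw [← integral_add (cont_integrable (continuous_ev P)) (cont_integrable (continuous_ev Q))]
    simp [ev]
  map_smul' c P := by
    simp [ev, integral_const_mul]

lemma Ex_one : Ex μ 1 = 1 := by
  simp [Ex, ev]

lemma Ex_nat_mul (k : ℕ) (Q : PA) : Ex μ ((k : PA) * Q) = k * Ex μ Q := by
  rw [← nsmul_eq_mul, map_nsmul, nsmul_eq_mul]

lemma Ex_C_mul (c : ℝ) (Q : PA) : Ex μ (C c * Q) = c * Ex μ Q := by
  rw [← smul_eq_C_mul, map_smul, smul_eq_mul]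

lemma Ex_X0_mul (Q : PA) : Ex μ (X 0 * Q) = n * Ex μ Q := by
  simp [Ex, ev, p_zero, integral_const_mul]

lemma Ex_T0 (Q : PA) : Ex μ (T 0 Q) = (n - 1) * Ex μ Q := by
  rw [T_zero, map_sub, Ex_X0_mul]; ring

lemma Ex_loop (a : ℕ) (Q : PA) : ∀ᶠ N in atTop, Ex μ (LoopP a N Q) = 0 := by
  filter_upwards [ev_flow (n := n) Q] with N hN
  have h := loop (μ := μ) a (Finset.range N) (fun M => ev M Q) (fun b M => ev M (pderiv b Q))
    (continuous_ev Q) (fun b _ => continuous_ev _) hN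
  rw [← h]
  simp only [Ex, LinearMap.coe_mk, AddHom.coe_mk]
  refine integral_congr_ae (Eventually.of_forall fun M => ?_)
  simp [ev, LoopP, map_sum]

/-- weight of a monomial -/
def wt (s : ℕ →₀ ℕ) : ℕ := s.sum fun k m => m * k

lemma wt_add (s t : ℕ →₀ ℕ) : wt (s + t) = wt s + wt t := by
  unfold wt
  rw [Finsupp.sum_add_index'] <;> intros <;> ring

lemma wt_single (k m : ℕ) : wt (Finsupp.single k m) = m * k := by
  simp [wt]

/-- unit monomial -/
noncomputable def mon (s : ℕ →₀ ℕ) : PA := monomial s 1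

lemma X_mul_mon (k : ℕ) (s : ℕ →₀ ℕ) : X k * mon s = mon (s + Finsupp.single k 1) := by
  rw [mon, mon, X, monomial_mul, add_comm]; simp

lemma pderiv_mon (k : ℕ) (s : ℕ →₀ ℕ) :
    pderiv k (mon s) = C (s k : ℝ) * mon (s - Finsupp.single k 1) := by
  rw [mon, mon, pderiv_monomial, C_mul_monomial]; simp

lemma wt_sub {k : ℕ} {s : ℕ →₀ ℕ} (h : s k ≠ 0) : wt (s - Finsupp.single k 1) + k = wt s := by
  have : s - Finsupp.single k 1 + Finsupp.single k 1 = s := by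
    apply tsub_add_cancel_of_le
    rw [Finsupp.single_le_iff]; omega
  conv_rhs => rw [← this, wt_add, wt_single, one_mul]

lemma mul_le_wt (k : ℕ) (s : ℕ →₀ ℕ) : s k * k ≤ wt s := by
  by_cases h : s k = 0
  · simp [h]
  · exact Finset.single_le_sum (f := fun k => s k * k) (fun _ _ => Nat.zero_le _)
      (Finsupp.mem_support_iff.2 h)

/-- all Stein identities of total weight `< D` hold -/
def LZ (D : ℕ) : Prop :=
  ∀ c s, 1 ≤ c → s 0 = 0 → c + wt s < D → Ex μ (T c (mon s)) = 0

lemma LZ_pderiv {D : ℕ} (h : LZ μ D) {c b : ℕ} {s : ℕ →₀ ℕ} (hc : 1 ≤ c) (hs : s 0 = 0)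
    (hD : c + wt s < D + b) : Ex μ (T c (pderiv b (mon s))) = 0 := by
  rw [pderiv_mon, T_C_mul, Ex_C_mul]
  by_cases hb : s b = 0
  · simp [hb]
  · rw [h c _ hc (by simp [hs]) (by have := wt_sub hb; omega), mul_zero]

lemma sum_half (a' : ℕ) (x : ℝ) :
    ∑ i ∈ Finset.range a', (if 2 * (i + 1) = a' + 1 then x else 0) = eta (a' + 1) * x := by
  rcases Nat.even_or_odd' (a' + 1) with ⟨m, h | h⟩
  · rw [Finset.sum_eq_single (m - 1)]
    · rw [if_pos (by omega), h]; simp [eta]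
    · intro b _ hb; rw [if_neg (by omega)]
    · intro h'; simp at h'; omega
  · rw [Finset.sum_eq_zero]
    · rw [h]; simp [eta]
    · intro b _; rw [if_neg (by omega)]

lemma main_eq {a' D : ℕ} {s : ℕ →₀ ℕ} (hs : s 0 = 0) (hD : a' + 1 + wt s = D) (h : LZ μ D) :
    ∀ᶠ N in atTop, (n - 1) * Ex μ (T (a' + 1) (mon s))
      = - ∑ i ∈ Finset.range a', Ex μ (T (i + 1) (mon (s + Finsupp.single (a' - i) 1)))
        - ∑ b ∈ Finset.range N, (b * s b : ℝ) *
            Ex μ (T (a' + 1 + b) (mon (s - Finsupp.single b 1))) := by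
  filter_upwards [Ex_loop μ (a' + 1) (mon s), pderiv_eventually (mon s),
    eventually_ge_atTop (a' + 2)] with N h1 h2 h3
  rw [poly_id _ _ _ (by omega) h2, map_add, map_sum, map_sum, Finset.sum_range_succ'] at h1
  have e0 : Ex μ (T (ad (a' + 1) (2 * 0)) (mon s) - T 0 (X (a' + 1 - 0) * mon s)
        - (eta 0 : PA) * T (a' + 1 - 0) (mon s) - ((0 : ℕ) : PA) * T (a' + 1 - 0) (pderiv 0 (mon s)))
      = - ((n - 1) * Ex μ (X (a' + 1) * mon s)) := by
    have : ad (a' + 1) (2 * 0) = a' + 1 := by simp [ad]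
    rw [this, map_sub, map_sub, map_sub, Ex_nat_mul, Ex_nat_mul, Ex_T0, eta_zero]
    simp
  have ei : ∀ i ∈ Finset.range a', Ex μ (T (ad (a' + 1) (2 * (i + 1))) (mon s)
        - T (i + 1) (X (a' + 1 - (i + 1)) * mon s)
        - (eta (i + 1) : PA) * T (a' + 1 - (i + 1)) (mon s)
        - ((i + 1 : ℕ) : PA) * T (a' + 1 - (i + 1)) (pderiv (i + 1) (mon s)))
      = (if 2 * (i + 1) = a' + 1 then (n - 1) * Ex μ (mon s) else 0)
        - Ex μ (T (i + 1) (mon (s + Finsupp.single (a' - i) 1))) := by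
    intro i hi
    have hi' := Finset.mem_range.1 hi
    rw [map_sub, map_sub, map_sub, Ex_nat_mul, Ex_nat_mul, X_mul_mon,
      h (a' + 1 - (i + 1)) s (by omega) hs (by omega),
      LZ_pderiv μ h (by omega) hs (by omega)]
    have e1 : a' + 1 - (i + 1) = a' - i := by omega
    rw [e1]
    split_ifs with hif
    · have : ad (a' + 1) (2 * (i + 1)) = 0 := by simp only [ad]; omega
      rw [this, Ex_T0]; ring
    · rw [h _ s (by simp only [ad]; omega) hs (by simp only [ad]; omega)]; ring
  have eb : ∀ b ∈ Finset.range N, Ex μ ((b : PA) * (T (ad (a' + 1) b) (pderiv b (mon s))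
        - T (a' + 1 + b) (pderiv b (mon s))))
      = (if a' + 1 = b then (n - 1) * (b * Ex μ (pderiv b (mon s))) else 0)
        - (b * s b : ℝ) * Ex μ (T (a' + 1 + b) (mon (s - Finsupp.single b 1))) := by
    intro b _
    rw [Ex_nat_mul, map_sub]
    have e1 : Ex μ (T (a' + 1 + b) (pderiv b (mon s)))
      = s b * Ex μ (T (a' + 1 + b) (mon (s - Finsupp.single b 1))) := by
      rw [pderiv_mon, T_C_mul, Ex_C_mul]
    rw [e1]
    split_ifs with hif
    · have : ad (a' + 1) b = 0 := by simp only [ad]; omega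
      rw [this, Ex_T0]; ring
    · rcases Nat.eq_zero_or_pos b with rfl | hb
      · simp
      rw [LZ_pderiv μ h (by simp only [ad]; omega) hs (by simp only [ad]; omega)]; ring
  rw [e0, Finset.sum_congr rfl ei, Finset.sum_congr rfl eb, Finset.sum_sub_distrib,
    Finset.sum_sub_distrib, sum_half, Finset.sum_ite_eq, if_pos (Finset.mem_range.2 (by omega))] at h1
  have e : Ex μ (T (a' + 1) (mon s)) = Ex μ (X (a' + 1) * mon s) - eta (a' + 1) * Ex μ (mon s)
      - ((a' + 1 : ℕ) : ℝ) * Ex μ (pderiv (a' + 1) (mon s)) := by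
    rw [T, map_sub, map_sub, Ex_nat_mul, Ex_nat_mul]
  rw [e]
  linear_combination -h1

lemma sum_wt (s : ℕ →₀ ℕ) : ∀ᶠ N in atTop, ∑ b ∈ Finset.range N, b * s b = wt s := by
  obtain ⟨N0, hN0⟩ := s.support.exists_nat_subset_range
  filter_upwards [eventually_ge_atTop N0] with N hN
  rw [wt, Finsupp.sum]
  symm
  refine (Finset.sum_subset (hN0.trans (Finset.range_subset_range.2 hN)) ?_).trans
    (Finset.sum_congr rfl fun b _ => mul_comm _ _)
  intro x _ hx
  rw [Finsupp.notMem_support_iff.1 hx, zero_mul]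

lemma contract {a D : ℕ} {s : ℕ →₀ ℕ} (ha : 1 ≤ a) (hs : s 0 = 0) (hD : a + wt s = D)
    (h : LZ μ D) {B : ℝ} (hB : ∀ c t, 1 ≤ c → t 0 = 0 → c + wt t = D → |Ex μ (T c (mon t))| ≤ B)
    (hn : 1 ≤ n) :
    (n - 1) * |Ex μ (T a (mon s))| ≤ (D - 1) * B := by
  obtain ⟨a', rfl⟩ : ∃ a', a = a' + 1 := ⟨a - 1, by omega⟩
  obtain ⟨N, h1, h2⟩ := ((main_eq μ hs hD h).and (sum_wt s)).exists
  have hn' : (0:ℝ) ≤ n - 1 := by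
    have : (1:ℝ) ≤ n := by exact_mod_cast hn
    linarith
  rw [← abs_of_nonneg hn', ← abs_mul, h1]
  have b1 : |∑ i ∈ Finset.range a', Ex μ (T (i + 1) (mon (s + Finsupp.single (a' - i) 1)))|
      ≤ a' * B := by
    refine (Finset.abs_sum_le_sum_abs _ _).trans ?_
    refine (Finset.sum_le_card_nsmul _ _ B fun i hi => ?_).trans (by simp)
    have hi' := Finset.mem_range.1 hi
    apply hB
    · omega
    · have : a' - i ≠ 0 := by omega
      simp [hs, this]
    · rw [wt_add, wt_single]; omega
  have b2 : |∑ b ∈ Finset.range N, (b * s b : ℝ) *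
            Ex μ (T (a' + 1 + b) (mon (s - Finsupp.single b 1)))| ≤ wt s * B := by
    refine (Finset.abs_sum_le_sum_abs _ _).trans ?_
    rw [← h2]; push_cast; rw [Finset.sum_mul]
    refine Finset.sum_le_sum fun b _ => ?_
    rw [abs_mul, abs_of_nonneg (by positivity)]
    by_cases hb : s b = 0
    · simp [hb]
    · refine mul_le_mul_of_nonneg_left (hB _ _ (by omega) (by simp [hs]) ?_) (by positivity)
      have := wt_sub hb; omega
  have b3 : |(-∑ i ∈ Finset.range a', Ex μ (T (i + 1) (mon (s + Finsupp.single (a' - i) 1)))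
        - ∑ b ∈ Finset.range N, (b * s b : ℝ) *
            Ex μ (T (a' + 1 + b) (mon (s - Finsupp.single b 1))))| ≤ a' * B + wt s * B := by
    refine (abs_sub _ _).trans ?_
    rw [abs_neg]; linarith
  refine b3.trans (le_of_eq ?_)
  rw [← hD]; push_cast; ring

lemma LZ_succ {D : ℕ} (hDn : D < n) (h : LZ μ D) : LZ μ (D + 1) := by
  intro a s ha hs hD
  rcases Nat.lt_or_ge (a + wt s) D with hlt | hge
  · exact h a s ha hs hlt
  have hD' : a + wt s = D := by omega
  let S : Finset (ℕ × (ℕ →₀ ℕ)) :=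
    ((Finset.range (D + 1)) ×ˢ
      ((Finset.range (D + 1)).finsupp (fun _ => Finset.range (D + 1)))).filter
      (fun x => 1 ≤ x.1 ∧ x.2 0 = 0 ∧ x.1 + wt x.2 = D)
  have hS : ∀ c t, 1 ≤ c → t 0 = 0 → c + wt t = D → (c, t) ∈ S := by
    intro c t hc ht hct
    simp only [S, Finset.mem_filter, Finset.mem_product, Finset.mem_range]
    refine ⟨⟨by omega, ?_⟩, hc, ht, hct⟩
    rw [Finset.mem_finsupp_iff]
    refine ⟨fun k hk => ?_, fun k _ => ?_⟩
    · have h1 := mul_le_wt k t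
      have h2 := Finsupp.mem_support_iff.1 hk
      have h3 : k ≤ t k * k := Nat.le_mul_of_pos_left k (by omega)
      simp only [Finset.mem_range]; omega
    · simp only [Finset.mem_range]
      rcases Nat.eq_zero_or_pos k with rfl | hk
      · omega
      have h1 := mul_le_wt k t
      have h3 : t k ≤ t k * k := Nat.le_mul_of_pos_right _ hk
      omega
  obtain ⟨⟨c, t⟩, hct, hmax⟩ := Finset.exists_max_image S (fun x => |Ex μ (T x.1 (mon x.2))|)
    ⟨_, hS a s ha hs hD'⟩
  have hmem := (Finset.mem_filter.1 hct).2
  have hB : ∀ c' t', 1 ≤ c' → t' 0 = 0 → c' + wt t' = D →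
      |Ex μ (T c' (mon t'))| ≤ |Ex μ (T c (mon t))| := fun c' t' h1 h2 h3 =>
    hmax (c', t') (hS c' t' h1 h2 h3)
  have hc := contract μ hmem.1 hmem.2.1 hmem.2.2 h hB (by omega)
  have hz : |Ex μ (T c (mon t))| ≤ 0 := by
    have : (D:ℝ) < n := by exact_mod_cast hDn
    nlinarith [abs_nonneg (Ex μ (T c (mon t)))]
  have := (hB a s ha hs hD').trans hz
  exact abs_eq_zero.1 (le_antisymm this (abs_nonneg _))

lemma LZ_all : ∀ D : ℕ, D ≤ n → LZ μ D
  | 0, _ => fun _ _ _ _ h => absurd h (by omega)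
  | (D + 1), h => LZ_succ μ (by omega) (LZ_all D (by omega))

lemma stein {a : ℕ} {s : ℕ →₀ ℕ} (ha : 1 ≤ a) (hs : s 0 = 0) (h : a + wt s < n) :
    Ex μ (X a * mon s) = eta a * Ex μ (mon s) + a * Ex μ (pderiv a (mon s)) := by
  have := LZ_all μ n le_rfl a s ha hs h
  rw [T, map_sub, map_sub, Ex_nat_mul, Ex_nat_mul] at this
  linarith

lemma mon_zero : mon 0 = 1 := rfl
lemma mon_single (k : ℕ) : mon (Finsupp.single k 1) = X k := rfl

lemma Ex_X {a : ℕ} (ha : 1 ≤ a) (h : a < n) : Ex μ (X a) = eta a := by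
  have := stein μ (s := 0) ha rfl (by simpa [wt] using h)
  simpa [mon_zero, Ex_one] using this

lemma Ex_XX {a b : ℕ} (ha : 1 ≤ a) (hb : 1 ≤ b) (h : a + b < n) :
    Ex μ (X a * X b) = eta a * eta b + if a = b then (a : ℝ) else 0 := by
  have := stein μ (s := Finsupp.single b 1) ha
    (by rw [Finsupp.single_apply, if_neg (by omega)]) (by rw [wt_single]; omega)
  rw [mon_single, Ex_X μ hb (by omega)] at this
  rw [this]
  split_ifs with hab
  · subst hab; simp [Ex_one]
  · rw [pderiv_X_of_ne (Ne.symm hab)]; simp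

end

end SOClt
namespace SOClt

open Filter Topology MvPolynomial

section
set_option linter.unusedSectionVars false
variable {n : ℕ} (μ : Measure (SO n)) [IsProbabilityMeasure μ] [μ.IsHaarMeasure]

/-- remainder polynomial -/
noncomputable def Rp (n j : ℕ) : PA :=
  - (∑ i ∈ Finset.range j, (X (ad j (2 * i)) - X i * X (j - i))) - (n : PA) * (X j - (eta j : PA))

lemma Ex_R_mul {j : ℕ} {s : ℕ →₀ ℕ} (hj : 1 ≤ j) (hs : s 0 = 0) (h : j + wt s < n) :
    ∀ᶠ N in atTop, Ex μ (Rp n j * mon s) = - (n * j * Ex μ (pderiv j (mon s)))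
      + ∑ b ∈ Finset.range N, b * Ex μ (pderiv b (mon s) * (X (ad j b) - X (j + b))) := by
  filter_upwards [Ex_loop μ j (mon s)] with N hN
  rw [LoopP, map_add, map_sum] at hN
  simp only [mul_assoc, Ex_nat_mul] at hN
  have e : Rp n j * mon s = - (mon s * ∑ i ∈ Finset.range j, (X (ad j (2 * i)) - X i * X (j - i)))
      - (n : PA) * (X j * mon s - (eta j : PA) * mon s) := by
    rw [Rp]; ring
  rw [e, map_sub, map_neg, Ex_nat_mul, map_sub, Ex_nat_mul, stein μ hj hs h]
  linear_combination -hN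

lemma Ex_R_one {j : ℕ} (hj : 1 ≤ j) (h : 2 * j < n) : Ex μ (Rp n j) = 0 := by
  obtain ⟨N, hN⟩ := (Ex_R_mul μ (s := 0) hj rfl (by simp [wt]; omega)).exists
  rw [mon_zero, mul_one] at hN
  rw [hN]; simp

lemma Ex_R_X {j c : ℕ} (hj : 1 ≤ j) (hc : 1 ≤ c) (hcj : c ≤ j) (h : 2 * j < n) :
    Ex μ (Rp n j * X c) = if c = j then -(j : ℝ) else 0 := by
  obtain ⟨N, hN, hN'⟩ := ((Ex_R_mul μ (s := Finsupp.single c 1) hj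
    (by rw [Finsupp.single_apply, if_neg (by omega)]) (by rw [wt_single]; omega)).and
    (eventually_gt_atTop c)).exists
  rw [mon_single] at hN
  rw [hN, Finset.sum_eq_single c]
  · rw [pderiv_X_self, one_mul, map_sub, Ex_X μ (a := j + c) (by omega) (by omega)]
    split_ifs with hcj'
    · subst hcj'
      have : ad c c = 0 := by simp [ad]
      rw [this, pderiv_X_self, Ex_one, ← mul_one (X 0 : PA), Ex_X0_mul, Ex_one]
      have : eta (c + c) = 1 := by simp [eta]
      rw [this]; push_cast; ring
    · rw [pderiv_X_of_ne hcj', map_zero, Ex_X μ (by simp only [ad]; omega) (by simp only [ad]; omega)]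
      rw [show eta (ad j c) = eta (j + c) from eta_congr (by simp only [ad]; omega)]
      ring
  · intro b _ hb
    rw [pderiv_X_of_ne (Ne.symm hb)]; simp
  · intro hh; simp at hh; omega

lemma Ex_R_XX {j k l : ℕ} (hk : 1 ≤ k) (hl : 1 ≤ l) (hkl : k + l = j) (h : 2 * j < n) :
    Ex μ (Rp n j * (X k * X l)) = 2 * k * l := by
  obtain ⟨N, hN, hN'⟩ := ((Ex_R_mul μ (j := j) (s := Finsupp.single l 1 + Finsupp.single k 1)
    (by omega)
    (by rw [Finsupp.add_apply, Finsupp.single_apply, if_neg (by omega), Finsupp.single_apply,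
        if_neg (by omega), add_zero])
    (by rw [wt_add, wt_single, wt_single]; omega)).and
    (eventually_gt_atTop j)).exists
  rw [← X_mul_mon, mon_single] at hN
  rw [hN]
  have hd : ∀ b, pderiv b (X k * X l : PA) = (if b = k then X l else 0) + (if b = l then X k else 0) := by
    intro b
    rw [pderiv_mul]
    congr 1
    · split_ifs with hb
      · subst hb; simp
      · rw [pderiv_X_of_ne (Ne.symm hb), zero_mul]
    · split_ifs with hb
      · subst hb; simp
      · rw [pderiv_X_of_ne (Ne.symm hb), mul_zero]
  have key : ∀ k l : ℕ, 1 ≤ k → 1 ≤ l → k + l = j →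
      Ex μ (X l * (X (ad j k) - X (j + k))) = l := by
    intro k l hk hl hkl
    have e1 : ad j k = l := by simp only [ad]; omega
    rw [e1, mul_sub, map_sub, Ex_XX μ hl hl (by omega), Ex_XX μ hl (by omega) (by omega),
      if_pos rfl, if_neg (by omega), show eta (j + k) = eta l from eta_congr (by omega)]
    ring
  have e2 : ∀ b ∈ Finset.range N, (b : ℝ) * Ex μ (pderiv b (X k * X l : PA) * (X (ad j b) - X (j + b)))
      = (if b = k then (k * l : ℝ) else 0) + (if b = l then (k * l : ℝ) else 0) := by
    intro b _
    rw [hd, add_mul, map_add, mul_add]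
    congr 1
    · split_ifs with hb
      · subst hb; rw [key b l hk hl hkl]
      · simp
    · split_ifs with hb
      · subst hb; rw [key b k hl hk (by omega)]; ring
      · simp
  rw [Finset.sum_congr rfl e2, Finset.sum_add_distrib, Finset.sum_ite_eq', Finset.sum_ite_eq',
    if_pos (Finset.mem_range.2 (by omega)), if_pos (Finset.mem_range.2 (by omega)), hd,
    if_neg (by omega), if_neg (by omega)]
  simp; ring

lemma Ex_R_sq {j : ℕ} (hj : 1 ≤ j) (h : 2 * j < n) :
    Ex μ (Rp n j * Rp n j) = j + ∑ i ∈ Finset.range j, 2 * (i : ℝ) * (j - i : ℕ) := by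
  have e : Rp n j * Rp n j = - (∑ i ∈ Finset.range j,
      (Rp n j * X (ad j (2 * i)) - Rp n j * (X i * X (j - i))))
      - (n : PA) * (Rp n j * X j - (eta j : PA) * Rp n j) := by
    have hR : Rp n j = - (∑ i ∈ Finset.range j, (X (ad j (2 * i)) - X i * X (j - i)))
      - (n : PA) * (X j - (eta j : PA)) := rfl
    rw [Finset.sum_congr rfl (fun i _ => (mul_sub (Rp n j) _ _).symm), ← Finset.mul_sum]
    linear_combination (Rp n j) * hR
  rw [e, map_sub, map_neg, map_sum, Ex_nat_mul, map_sub, Ex_nat_mul, Ex_R_one μ hj h,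
    Ex_R_X μ hj hj le_rfl h, if_pos rfl]
  obtain ⟨j', rfl⟩ : ∃ a', j = a' + 1 := ⟨j - 1, by omega⟩
  rw [Finset.sum_range_succ', Finset.sum_range_succ']
  have e0 : Ex μ (Rp n (j' + 1) * X (ad (j' + 1) (2 * 0)) - Rp n (j' + 1) * (X 0 * X (j' + 1 - 0)))
      = (1 - n) * (- ((j' + 1 : ℕ) : ℝ)) := by
    have : ad (j' + 1) (2 * 0) = j' + 1 := by simp [ad]
    rw [this, map_sub, mul_left_comm, Ex_X0_mul, Nat.sub_zero, Ex_R_X μ hj hj le_rfl h, if_pos rfl]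
    ring
  have ei : ∀ i ∈ Finset.range j', Ex μ (Rp n (j' + 1) * X (ad (j' + 1) (2 * (i + 1)))
      - Rp n (j' + 1) * (X (i + 1) * X (j' + 1 - (i + 1))))
      = - (2 * ((i + 1 : ℕ) : ℝ) * ((j' + 1 - (i + 1) : ℕ) : ℝ)) := by
    intro i hi
    have hi' := Finset.mem_range.1 hi
    rw [map_sub, Ex_R_XX μ (by omega) (by omega) (by omega) h]
    have : Ex μ (Rp n (j' + 1) * X (ad (j' + 1) (2 * (i + 1)))) = 0 := by
      by_cases h0 : ad (j' + 1) (2 * (i + 1)) = 0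
      · rw [h0, mul_comm, Ex_X0_mul, Ex_R_one μ hj h, mul_zero]
      · rw [Ex_R_X μ hj (by omega) (by simp only [ad] at *; omega) h,
          if_neg (by simp only [ad] at *; omega)]
    rw [this]; ring
  rw [e0, Finset.sum_congr rfl ei, Finset.sum_neg_distrib]
  push_cast
  ring

lemma Ex_R_sq_le {j : ℕ} (hj : 1 ≤ j) (h : 2 * j < n) :
    Ex μ (Rp n j * Rp n j) ≤ 3 * (j : ℝ) ^ 3 := by
  rw [Ex_R_sq μ hj h]
  have h1 : ∑ i ∈ Finset.range j, 2 * (i : ℝ) * (j - i : ℕ) ≤ j • (2 * (j : ℝ) ^ 2) := by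
    refine (Finset.sum_le_card_nsmul _ _ (2 * (j : ℝ) ^ 2) fun i hi => ?_).trans (by simp)
    have h2 : (i : ℝ) ≤ j := by exact_mod_cast (Finset.mem_range.1 hi).le
    have h3 : ((j - i : ℕ) : ℝ) ≤ j := by exact_mod_cast Nat.sub_le _ _
    have h4 : (0:ℝ) ≤ ((j - i : ℕ) : ℝ) := Nat.cast_nonneg _
    have h5 : (0:ℝ) ≤ i := Nat.cast_nonneg _
    nlinarith
  have h6 : (1:ℝ) ≤ j := by exact_mod_cast hj
  rw [nsmul_eq_mul] at h1
  have h7 : (j:ℝ) ≤ (j:ℝ)^3 := by nlinarith [sq_nonneg (j:ℝ), mul_self_nonneg ((j:ℝ)-1)]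
  nlinarith

end

end SOClt
namespace SOClt

open Filter Topology

/-- unnormalised Gaussian weight -/
noncomputable def gw (x : ℝ) : ℝ := Real.exp (-x ^ 2 / 2)

lemma gw_pos (x : ℝ) : 0 < gw x := Real.exp_pos _

lemma continuous_gw : Continuous gw := by unfold gw; fun_prop

lemma gw_neg (x : ℝ) : gw (-x) = gw x := by simp [gw]

lemma gw_eq : gw = fun x : ℝ => Real.exp (-(1 / 2) * x ^ 2) := by
  ext x; rw [gw]; congr 1; ring

lemma integrable_gw : Integrable gw := by
  rw [gw_eq]; exact integrable_exp_neg_mul_sq (by norm_num)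

lemma integral_gw : ∫ x, gw x = Real.sqrt (2 * Real.pi) := by
  rw [gw_eq, integral_gaussian]; congr 1; ring

lemma integrable_mul_gw {k : ℝ → ℝ} (hk : Continuous k) (hb : ∀ x, |k x| ≤ 1) :
    Integrable (fun x => k x * gw x) := by
  refine integrable_gw.mono' (hk.mul continuous_gw).aestronglyMeasurable (ae_of_all _ fun x => ?_)
  rw [Real.norm_eq_abs, abs_mul, abs_of_pos (gw_pos x)]
  nlinarith [hb x, gw_pos x]

lemma abs_tail_le {k : ℝ → ℝ} (hb : ∀ x, |k x| ≤ 1) (w : ℝ) :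
    |∫ x in Set.Ioi w, k x * gw x| ≤ ∫ x in Set.Ioi w, gw x := by
  rw [← Real.norm_eq_abs]
  refine norm_integral_le_of_norm_le integrable_gw.integrableOn (ae_of_all _ fun x => ?_)
  rw [Real.norm_eq_abs, abs_mul, abs_of_pos (gw_pos x)]
  nlinarith [hb x, gw_pos x]

lemma tail_le_three {w : ℝ} (hw : 0 ≤ w) : ∫ x in Set.Ioi w, gw x ≤ 3 * gw w := by
  have h1 : ∫ x in Set.Ioi w, gw x ≤ ∫ x in Set.Ioi w, gw (x - w) * gw w := by
    refine setIntegral_mono_on integrable_gw.integrableOn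
      ((integrable_gw.comp_sub_right w).mul_const _).integrableOn measurableSet_Ioi fun x hx => ?_
    rw [gw, gw, gw, ← Real.exp_add]
    refine Real.exp_le_exp.2 ?_
    have : w < x := hx
    nlinarith
  have h2 : ∫ x in Set.Ioi w, gw (x - w) * gw w ≤ ∫ x, gw (x - w) * gw w :=
    setIntegral_le_integral ((integrable_gw.comp_sub_right w).mul_const _)
      (ae_of_all _ fun x => (mul_pos (gw_pos _) (gw_pos _)).le)
  have h4 : ∫ x, gw (x - w) * gw w = Real.sqrt (2 * Real.pi) * gw w := by
    rw [integral_mul_const, integral_sub_right_eq_self gw w, integral_gw]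
  rw [h4] at h2
  have h3 : Real.sqrt (2 * Real.pi) ≤ 3 := by
    rw [Real.sqrt_le_left (by norm_num)]
    nlinarith [Real.pi_lt_four]
  nlinarith [gw_pos w]

lemma hasDerivAt_gw (x : ℝ) : HasDerivAt gw (-(x * gw x)) x := by
  have h : HasDerivAt (fun x : ℝ => -x ^ 2 / 2) (-x) x := by
    have := ((hasDerivAt_pow 2 x).neg.div_const 2)
    exact this.congr_deriv (by simp; ring)
  have h2 := h.exp
  exact h2.congr_deriv (by rw [gw]; ring)

lemma integrable_x_gw : Integrable (fun x => x * gw x) := by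
  rw [gw_eq]; exact integrable_mul_exp_neg_mul_sq (by norm_num)

lemma tendsto_gw : Tendsto gw atTop (𝓝 0) := by
  unfold gw
  refine Real.tendsto_exp_atBot.comp ?_
  have : Tendsto (fun x : ℝ => x ^ 2 / 2) atTop atTop :=
    (tendsto_pow_atTop two_ne_zero).atTop_div_const (by norm_num)
  have h := tendsto_neg_atTop_atBot.comp this
  refine h.congr fun x => ?_
  simp [neg_div]

lemma tail_le_inv {w : ℝ} : w * ∫ x in Set.Ioi w, gw x ≤ gw w := by
  have h1 : ∫ x in Set.Ioi w, -(x * gw x) = 0 - gw w :=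
    integral_Ioi_of_hasDerivAt_of_tendsto' (fun x _ => hasDerivAt_gw x)
      integrable_x_gw.neg.integrableOn tendsto_gw
  rw [integral_neg] at h1
  have h2 : ∫ x in Set.Ioi w, w * gw x ≤ ∫ x in Set.Ioi w, x * gw x := by
    refine setIntegral_mono_on (integrable_gw.const_mul w).integrableOn
      integrable_x_gw.integrableOn measurableSet_Ioi fun x hx => ?_
    have : w < x := hx
    nlinarith [gw_pos x]
  rw [integral_const_mul] at h2
  linarith

lemma tail_bounds {k : ℝ → ℝ} (hb : ∀ x, |k x| ≤ 1) {w : ℝ} (hw : 0 ≤ w) :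
    |∫ x in Set.Ioi w, k x * gw x| ≤ 3 * gw w ∧
    w * |∫ x in Set.Ioi w, k x * gw x| ≤ gw w := by
  have h := abs_tail_le hb w
  exact ⟨h.trans (tail_le_three hw), (mul_le_mul_of_nonneg_left h hw).trans tail_le_inv⟩

/-- solution of the Stein equation -/
lemma stein_exists {h : ℝ → ℝ} (hc : Continuous h) (h0 : ∀ x, 0 ≤ h x) (h1 : ∀ x, h x ≤ 1) :
    ∃ g g' : ℝ → ℝ, Continuous g' ∧ (∀ w, HasDerivAt g (g' w) w) ∧ (∀ w, |g w| ≤ 3) ∧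
      (∀ w, |g' w| ≤ 2) ∧ ∀ w, g' w - w * g w = h w - ∫ x, h x ∂(gaussianReal 0 1) := by
  have hint : Integrable h (gaussianReal 0 1) := by
    refine Integrable.of_bound hc.aestronglyMeasurable 1 (ae_of_all _ fun x => ?_)
    rw [Real.norm_eq_abs, abs_of_nonneg (h0 x)]; exact h1 x
  set m := ∫ x, h x ∂(gaussianReal 0 1) with hm
  have hm0 : 0 ≤ m := integral_nonneg h0
  have hm1 : m ≤ 1 := by
    have := integral_mono hint (integrable_const (1:ℝ)) h1
    simpa using this
  set k : ℝ → ℝ := fun x => h x - m with hkdef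
  have hk : Continuous k := hc.sub continuous_const
  have hb : ∀ x, |k x| ≤ 1 := fun x => by
    rw [abs_le]; constructor <;> simp only [hkdef] <;> linarith [h0 x, h1 x]
  have hki := integrable_mul_gw hk hb
  have hz : ∫ x, k x * gw x = 0 := by
    have e1 : ∫ x, k x ∂(gaussianReal 0 1) = 0 := by
      simp only [hkdef]
      rw [integral_sub hint (integrable_const _)]; simp [hm]
    rw [integral_gaussianReal_eq_integral_smul (by norm_num)] at e1
    have e2 : ∀ x, gaussianPDFReal 0 1 x • k x = (Real.sqrt (2 * Real.pi))⁻¹ * (k x * gw x) := by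
      intro x
      simp only [gaussianPDFReal, gw, smul_eq_mul]
      simp; ring
    simp_rw [e2] at e1
    rw [integral_const_mul] at e1
    have : (Real.sqrt (2 * Real.pi))⁻¹ ≠ 0 := by positivity
    exact (mul_eq_zero.1 e1).resolve_left this
  set F : ℝ → ℝ := fun w => ∫ x in Set.Iic w, k x * gw x with hF
  have hFd : ∀ w, HasDerivAt F (k w * gw w) w := by
    intro w
    have e : F = fun w => F 0 + ∫ x in (0:ℝ)..w, k x * gw x := by
      ext w
      rw [← intervalIntegral.integral_Iic_sub_Iic hki.integrableOn hki.integrableOn]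
      simp [hF]
    rw [e]
    exact (intervalIntegral.integral_hasDerivAt_right (hki.intervalIntegrable)
      ((hk.mul continuous_gw).stronglyMeasurableAtFilter _ _)
      (hk.mul continuous_gw).continuousAt).const_add _
  have hFb : ∀ w, |F w| ≤ 3 * gw w ∧ |w| * |F w| ≤ gw w := by
    intro w
    rcases le_total 0 w with hw | hw
    · have e : F w = - ∫ x in Set.Ioi w, k x * gw x := by
        have := intervalIntegral.integral_Iic_add_Ioi (b := w) hki.integrableOn hki.integrableOn
        rw [hz] at this
        simp only [hF]; linarith
      rw [e, abs_neg, abs_of_nonneg hw]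
      exact tail_bounds hb hw
    · have e : F w = ∫ x in Set.Ioi (-w), k (-x) * gw x := by
        rw [← integral_comp_neg_Iic w (fun x => k (-x) * gw x)]
        simp [hF, gw_neg]
      rw [e, abs_of_nonpos hw, ← gw_neg w]
      exact tail_bounds (k := fun x => k (-x)) (fun x => hb _)
        (by linarith)
  have hgi : ∀ w, HasDerivAt (fun w => (gw w)⁻¹) (w * (gw w)⁻¹) w := by
    intro w
    have := (hasDerivAt_gw w).inv (gw_pos w).ne'
    refine this.congr_deriv ?_
    have := (gw_pos w).ne'
    field_simp
    try ring
  set g : ℝ → ℝ := fun w => (gw w)⁻¹ * F w with hg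
  have hgd : ∀ w, HasDerivAt g (w * g w + k w) w := by
    intro w
    have := (hgi w).mul (hFd w)
    refine this.congr_deriv ?_
    have := (gw_pos w).ne'
    simp only [hg]
    field_simp
  have hgc : Continuous g := continuous_iff_continuousAt.2 fun w => (hgd w).continuousAt
  have hg3 : ∀ w, |g w| ≤ 3 := by
    intro w
    simp only [hg]
    rw [abs_mul, abs_of_pos (inv_pos.2 (gw_pos w)), inv_mul_le_iff₀ (gw_pos w)]
    linarith [(hFb w).1]
  have hg1 : ∀ w, |w * g w| ≤ 1 := by
    intro w
    simp only [hg]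
    rw [mul_left_comm, abs_mul, abs_of_pos (inv_pos.2 (gw_pos w)), inv_mul_le_iff₀ (gw_pos w),
      abs_mul]
    linarith [(hFb w).2]
  refine ⟨g, fun w => w * g w + k w, (continuous_id.mul hgc).add hk, hgd, hg3, fun w => ?_,
    fun w => by simp only [hkdef]; ring⟩
  exact (abs_add_le _ _).trans (by linarith [hg1 w, hb w])

lemma Phi_eq (x : ℝ) : Phi x = (gaussianReal 0 1).real (Set.Iic x) := by
  rw [Measure.real, gaussianReal_apply_eq_integral 0 (by norm_num), ENNReal.toReal_ofReal
    (integral_nonneg fun x => gaussianPDFReal_nonneg 0 1 x), Phi, ← integral_const_mul]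
  congr 1
  ext x
  simp [gaussianPDFReal]

end SOClt
namespace SOClt

open Filter Topology MvPolynomial

section
set_option linter.unusedSectionVars false
variable {n : ℕ} (μ : Measure (SO n)) [IsProbabilityMeasure μ] [μ.IsHaarMeasure]

/-- the normalised trace -/
noncomputable def Wt (j : ℕ) (M : SO n) : ℝ := (p j M - eta j) / Real.sqrt j

lemma continuous_Wt (j : ℕ) : Continuous (Wt j : SO n → ℝ) :=
  ((continuous_p j).sub continuous_const).div_const _

lemma ev_R (j : ℕ) (M : SO n) : ev M (Rp n j) =
    -(∑ i ∈ Finset.range j, (p (ad j (2 * i)) M - p i M * p (j - i) M)) - n * (p j M - eta j) := by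
  simp [ev, Rp]

lemma smooth_bound {j : ℕ} (hj : 1 ≤ j) (hn : 4 * j < n) {g g' : ℝ → ℝ} (hg' : Continuous g')
    (hd : ∀ w, HasDerivAt g (g' w) w) (h3 : ∀ w, |g w| ≤ 3) (h2 : ∀ w, |g' w| ≤ 2) :
    |∫ M, (g' (Wt j M) - Wt j M * g (Wt j M)) ∂μ| ≤ 10 * j / n := by
  have hgc : Continuous g := continuous_iff_continuousAt.2 fun w => (hd w).continuousAt
  have hW := continuous_Wt (n := n) j
  have hj1 : (1:ℝ) ≤ j := by exact_mod_cast hj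
  set s := Real.sqrt j with hs
  have hs0 : 0 < s := Real.sqrt_pos.2 (by linarith)
  have hss : s * s = j := Real.mul_self_sqrt (by linarith)
  have hn0 : (0:ℝ) < n := by exact_mod_cast (by omega : 0 < n)
  have hloop := loop (μ := μ) j {j} (fun M => g (Wt j M)) (fun _ M => g' (Wt j M) / s)
    (hgc.comp hW) (fun _ _ => (hg'.comp hW).div_const _) (by
      intro X hX M
      have h1 := flowDeriv_p X hX j M
      have h4 : HasDerivAt (fun t => Wt j (flow X hX t * M))
          ((j * Matrix.trace (X * mat M ^ j)) / s) 0 := (h1.sub_const _).div_const _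
      have h5 := HasDerivAt.comp (0:ℝ) (hd (Wt j (flow X hX 0 * M))) h4
      refine h5.congr_deriv ?_
      dsimp only
      rw [Finset.sum_singleton, flow_zero, one_mul]; ring)
  have hpt : ∀ M : SO n, n * s * (g' (Wt j M) - Wt j M * g (Wt j M)) =
      (g (Wt j M) * ∑ i ∈ Finset.range j, (p (ad j (2 * i)) M - p i M * p (j - i) M)
      + ∑ b ∈ ({j} : Finset ℕ), b * (g' (Wt j M) / s) * (p (ad j b) M - p (j + b) M)) +
      (g (Wt j M) * ev M (Rp n j) + s * g' (Wt j M) * p (2 * j) M) := by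
    intro M
    have had : ad j j = 0 := by simp [ad]
    rw [Finset.sum_singleton, had, p_zero, ← two_mul, ev_R]
    have e1 : (j:ℝ) * (g' (Wt j M) / s) = s * g' (Wt j M) := by
      rw [← hss]; field_simp
    have e2 : p j M - eta j = s * Wt j M := by
      rw [Wt, ← hs]; field_simp
    rw [e1, e2]; ring
  have hc2 : Continuous fun M : SO n =>
      g (Wt j M) * ev M (Rp n j) + s * g' (Wt j M) * p (2 * j) M :=
    ((hgc.comp hW).mul (continuous_ev _)).add
      ((continuous_const.mul (hg'.comp hW)).mul (continuous_p _))
  have hc1 : Continuous fun M : SO n =>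
      n * s * (g' (Wt j M) - Wt j M * g (Wt j M)) :=
    continuous_const.mul ((hg'.comp hW).sub (hW.mul (hgc.comp hW)))
  have hint : n * s * ∫ M, (g' (Wt j M) - Wt j M * g (Wt j M)) ∂μ
      = ∫ M, (g (Wt j M) * ev M (Rp n j) + s * g' (Wt j M) * p (2 * j) M) ∂μ := by
    rw [← integral_const_mul]
    have e := integral_sub (cont_integrable (μ := μ) hc1) (cont_integrable (μ := μ) hc2)
    have e' : ∀ M : SO n, n * s * (g' (Wt j M) - Wt j M * g (Wt j M))
      - (g (Wt j M) * ev M (Rp n j) + s * g' (Wt j M) * p (2 * j) M) =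
      (g (Wt j M) * ∑ i ∈ Finset.range j, (p (ad j (2 * i)) M - p i M * p (j - i) M)
      + ∑ b ∈ ({j} : Finset ℕ), b * (g' (Wt j M) / s) * (p (ad j b) M - p (j + b) M)) := by
      intro M; rw [hpt]; ring
    simp_rw [e'] at e
    rw [hloop] at e
    linarith

  have hRR : ∫ M, ev M (Rp n j * Rp n j) ∂μ ≤ 3 * (j:ℝ) ^ 3 := Ex_R_sq_le μ hj (by omega)
  have hPP : ∫ M, ev M (X (2 * j) * X (2 * j)) ∂μ = 1 + 2 * j := by
    have := Ex_XX μ (a := 2 * j) (b := 2 * j) (by omega) (by omega) (by omega)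
    rw [if_pos rfl] at this
    have e : eta (2 * j) = 1 := by simp [eta]
    rw [e] at this
    push_cast at this
    rw [one_mul] at this
    exact this
  have hbd : |∫ M, (g (Wt j M) * ev M (Rp n j) + s * g' (Wt j M) * p (2 * j) M) ∂μ| ≤
      ∫ M, (3 / 2 * (j * s) + 3 / 2 / (j * s) * ev M (Rp n j * Rp n j)
        + (s + s * ev M (X (2 * j) * X (2 * j)))) ∂μ := by
    rw [← Real.norm_eq_abs]
    refine norm_integral_le_of_norm_le (cont_integrable ?_) (ae_of_all _ fun M => ?_)
    · exact (continuous_const.add (continuous_const.mul (continuous_ev _))).add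
        (continuous_const.add (continuous_const.mul (continuous_ev _)))
    · rw [Real.norm_eq_abs]
      refine (abs_add_le _ _).trans (add_le_add ?_ ?_)
      · rw [abs_mul]
        have e : ev M (Rp n j * Rp n j) = |ev M (Rp n j)| * |ev M (Rp n j)| := by
          rw [abs_mul_abs_self]; simp [ev]
        rw [e]
        set r := |ev M (Rp n j)| with hr
        have hr0 : 0 ≤ r := abs_nonneg _
        have hc : 0 < j * s := by positivity
        have h6 : |g (Wt j M)| * r ≤ 3 * r := mul_le_mul_of_nonneg_right (h3 _) hr0
        refine h6.trans ?_
        have : 3 / 2 * (j * s) + 3 / 2 / (j * s) * (r * r) - 3 * r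
          = 3 / 2 / (j * s) * (j * s - r) ^ 2 := by field_simp; ring
        have h7 : 0 ≤ 3 / 2 / (j * s) * (j * s - r) ^ 2 := by positivity
        linarith
      · have e : ev M (X (2 * j) * X (2 * j)) = |p (2 * j) M| * |p (2 * j) M| := by
          rw [abs_mul_abs_self]; simp [ev]
        rw [e, abs_mul, abs_mul, abs_of_pos hs0]
        set r := |p (2 * j) M| with hr
        have hr0 : 0 ≤ r := abs_nonneg _
        have h6 : s * |g' (Wt j M)| * r ≤ s * 2 * r :=
          mul_le_mul_of_nonneg_right (mul_le_mul_of_nonneg_left (h2 _) hs0.le) hr0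
        refine h6.trans ?_
        nlinarith [mul_nonneg hs0.le (sq_nonneg (r - 1))]
  have i1 : Integrable (fun M : SO n => 3 / 2 / (j * s) * ev M (Rp n j * Rp n j)) μ :=
    (cont_integrable (continuous_ev _)).const_mul _
  have i2 : Integrable (fun M : SO n => s * ev M (X (2 * j) * X (2 * j))) μ :=
    (cont_integrable (continuous_ev _)).const_mul _
  have i3 : Integrable (fun M : SO n => 3 / 2 * (j * s)
      + 3 / 2 / (j * s) * ev M (Rp n j * Rp n j)) μ := (integrable_const _).add i1
  have i4 : Integrable (fun M : SO n => s + s * ev M (X (2 * j) * X (2 * j))) μ :=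
    (integrable_const _).add i2
  rw [integral_add i3 i4, integral_add (integrable_const _) i1,
    integral_add (integrable_const _) i2,
    integral_const_mul (3 / 2 / (j * s)) (fun M : SO n => ev M (Rp n j * Rp n j)),
    integral_const_mul s (fun M : SO n => ev M (X (2 * j) * X (2 * j))), hPP, ← hint, abs_mul,
    abs_of_pos (by positivity : 0 < n * s)] at hbd
  simp only [integral_const, probReal_univ, one_smul, smul_eq_mul, one_mul] at hbd
  have h8 : 3 / 2 / (j * s) * ∫ M, ev M (Rp n j * Rp n j) ∂μ ≤ 3 / 2 / (j * s) * (3 * (j:ℝ) ^ 3) :=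
    mul_le_mul_of_nonneg_left hRR (by positivity)
  have h9 : 3 / 2 / (j * s) * (3 * (j:ℝ) ^ 3) = 9 / 2 * (j * s) := by
    rw [← hss]; field_simp; try ring
  rw [le_div_iff₀ hn0]
  have h10 : s ≤ j * s := by nlinarith
  refine le_of_mul_le_mul_right ?_ hs0
  nlinarith

lemma cont_bound {j : ℕ} (hj : 1 ≤ j) (hn : 4 * j < n) {h : ℝ → ℝ} (hc : Continuous h)
    (h0 : ∀ x, 0 ≤ h x) (h1 : ∀ x, h x ≤ 1) :
    |∫ M, h (Wt j M) ∂μ - ∫ x, h x ∂(gaussianReal 0 1)| ≤ 10 * j / n := by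
  obtain ⟨g, g', hg', hd, h3, h2, he⟩ := stein_exists hc h0 h1
  have := smooth_bound μ hj hn hg' hd h3 h2
  simp_rw [he] at this
  have i1 : Integrable (fun M : SO n => h (Wt j M)) μ :=
    cont_integrable (hc.comp (continuous_Wt j))
  rw [integral_sub i1 (integrable_const _)] at this
  simpa using this

lemma ind_bound {j : ℕ} (hj : 1 ≤ j) (hn : 4 * j < n) (x : ℝ) :
    |μ.real {M | Wt j M ≤ x} - Phi x| ≤ 10 * j / n := by
  have hW := continuous_Wt (n := n) j
  have hWm : Measurable (Wt j : SO n → ℝ) := hW.measurable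
  have : IsProbabilityMeasure (μ.map (Wt j)) := Measure.isProbabilityMeasure_map hWm.aemeasurable
  have hδ : ∀ m : ℕ, (0:ℝ) < 1 / ((m:ℝ) + 1) := fun m => by positivity
  have t1 := tendsto_integral_thickenedIndicator_of_isClosed (μ.map (Wt j))
    (isClosed_Iic (a := x)) hδ tendsto_one_div_add_atTop_nhds_zero_nat
  have t2 := tendsto_integral_thickenedIndicator_of_isClosed (gaussianReal 0 1)
    (isClosed_Iic (a := x)) hδ tendsto_one_div_add_atTop_nhds_zero_nat
  rw [← Phi_eq] at t2
  have e : (μ.map (Wt j)).real (Set.Iic x) = μ.real {M | Wt j M ≤ x} := by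
    rw [Measure.real, Measure.map_apply hWm measurableSet_Iic]; rfl
  rw [e] at t1
  refine le_of_tendsto (t1.sub t2).abs (Eventually.of_forall fun m => ?_)
  have hcont : Continuous fun y => (thickenedIndicator (hδ m) (Set.Iic x) y : ℝ) := by fun_prop
  rw [integral_map hWm.aemeasurable hcont.aestronglyMeasurable]
  exact cont_bound μ hj hn hcont (fun y => NNReal.coe_nonneg _)
    (fun y => by exact_mod_cast thickenedIndicator_le_one (hδ m) _ y)

lemma trSO_eq (M : SO n) (j : ℕ) : trSO M j = p j M := by
  rw [trSO, p, ← mat_pow, zpow_natCast]; rfl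

lemma W_eq (M : SO n) (j : ℕ) : (if Odd j then trSO M j / Real.sqrt j
    else (trSO M j - 1) / Real.sqrt j) = Wt j M := by
  rw [trSO_eq, Wt, eta]
  split_ifs with h1 h2 h2
  · exact absurd h2 (Nat.not_even_iff_odd.2 h1)
  · simp
  · simp
  · exact absurd (Nat.not_even_iff_odd.1 h2) h1

end

end SOClt
/-- CLT with rate `O(j/n)` for traces of powers of Haar-distributed elements of `SO(n,ℝ)`:
there is a universal constant `C > 0` such that for all `n, j ≥ 1`, all `x₀`,
`|P(W ≤ x₀) − Φ(x₀)| ≤ C·j/n`, where `W = Tr(M^j)/√j` (`j` odd) or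
`W = (Tr(M^j) − 1)/√j` (`j` even). -/
theorem so_trace_power_clt :
    ∃ C : ℝ, 0 < C ∧
      ∀ (n j : ℕ), 0 < n → 0 < j →
        ∀ (μ : Measure (SO n)), IsProbabilityMeasure μ → μ.IsHaarMeasure →
          ∀ x₀ : ℝ,
            |(μ {M : SO n |
                (if Odd j then trSO M j / Real.sqrt j
                 else (trSO M j - 1) / Real.sqrt j) ≤ x₀}).toReal - Phi x₀|
              ≤ C * j / n := by
  refine ⟨10, by norm_num, fun n j hn hj μ hμ hμ' x₀ => ?_⟩
  have hn0 : (0:ℝ) < n := by exact_mod_cast hn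
  simp only [SOClt.W_eq]
  by_cases h : 4 * j < n
  · exact SOClt.ind_bound μ hj h x₀
  · have h1 : (n:ℝ) ≤ 4 * j := by exact_mod_cast not_lt.1 h
    have h2 : (1:ℝ) ≤ 10 * j / n := by
      rw [le_div_iff₀ hn0]
      have : (0:ℝ) ≤ j := Nat.cast_nonneg _
      linarith
    refine le_trans ?_ h2
    rw [SOClt.Phi_eq]
    have a1 : μ.real {M : SO n | SOClt.Wt j M ≤ x₀} ≤ 1 := measureReal_le_one
    have a2 : 0 ≤ μ.real {M : SO n | SOClt.Wt j M ≤ x₀} := measureReal_nonneg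
    have a3 : (gaussianReal 0 1).real (Set.Iic x₀) ≤ 1 := measureReal_le_one
    have a4 : 0 ≤ (gaussianReal 0 1).real (Set.Iic x₀) := measureReal_nonneg
    rw [Measure.real] at a1 a2
    rw [abs_le]; constructor <;> linarith
end

section
/- There exists a universal constant C > 0 such that the following holds. For all positive integers n and j, let M be distributed according to the Haar probability measure on USp(2n,ℂ), and set W = Tr(M^j)/√j if j is odd and W = (Tr(M^j) + 1)/√j if j is even (these are real numbers). Then for every real x₀, |P(W ≤ x₀) − Φ(x₀)| ≤ C·j/n. -/
open MeasureTheory ProbabilityTheory Matrix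

/-- The compact symplectic group `USp(2n,ℂ)`: the `2n × 2n` complex unitary matrices `M`
with `M * J * Mᵀ = J`, where `J` is the `2n × 2n` block matrix `[[0, I], [−I, 0]]`
(equivalently, `Matrix.symplecticGroup`, whose defining matrix is `−J`; the two
conditions `M * J * Mᵀ = J` and `M * (−J) * Mᵀ = −J` are equivalent),
as a subgroup of the unitary group. -/
def USp (n : ℕ) : Subgroup (Matrix.unitaryGroup (Fin n ⊕ Fin n) ℂ) where
  carrier :=
    {M | (M : Matrix (Fin n ⊕ Fin n) (Fin n ⊕ Fin n) ℂ) ∈ Matrix.symplecticGroup (Fin n) ℂ}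
  mul_mem' := by
    intro a b ha hb
    simp only [Set.mem_setOf_eq, Matrix.UnitaryGroup.mul_val] at *
    exact mul_mem ha hb
  one_mem' := by
    simp only [Set.mem_setOf_eq, Matrix.UnitaryGroup.one_val]
    exact one_mem _
  inv_mem' := by
    intro M hM
    simp only [Set.mem_setOf_eq, Matrix.UnitaryGroup.inv_val] at *
    have h1 : (star (M : Matrix (Fin n ⊕ Fin n) (Fin n ⊕ Fin n) ℂ)) =
        (M : Matrix (Fin n ⊕ Fin n) (Fin n ⊕ Fin n) ℂ)⁻¹ :=
      (Matrix.inv_eq_left_inv (Matrix.UnitaryGroup.star_mul_self M)).symm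
    rw [h1, SymplecticGroup.inv_eq_symplectic_inv _ hM]
    exact mul_mem (mul_mem (SymplecticGroup.neg_mem (SymplecticGroup.J_mem _ _))
      (SymplecticGroup.transpose_mem hM)) (SymplecticGroup.J_mem _ _)

/-- The trace of the `k`-th power (`k : ℤ`, negative powers via the inverse) of an
element of `USp(2n,ℂ)`. -/
noncomputable def trUSp {n : ℕ} (M : USp n) (k : ℤ) : ℂ :=
  Matrix.trace (((M ^ k : USp n) : Matrix.unitaryGroup (Fin n ⊕ Fin n) ℂ) :
    Matrix (Fin n ⊕ Fin n) (Fin n ⊕ Fin n) ℂ)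

namespace USpCLT

/-- distance of naturals -/
def dd (k l : ℕ) : ℕ := (k - l) + (l - k)

/-- indicator of even numbers -/
noncomputable def eta (k : ℕ) : ℝ := if Even k then 1 else 0

/-- polynomial representing the trace of the `k`-th power; the variable `X k` stands for
the trace plus `eta k`. -/
noncomputable def PP (n k : ℕ) : MvPolynomial ℕ ℝ :=
  if k = 0 then MvPolynomial.C (2 * n : ℝ) else MvPolynomial.X k - MvPolynomial.C (eta k)

noncomputable def dK (n k : ℕ) : Derivation ℝ (MvPolynomial ℕ ℝ) (MvPolynomial ℕ ℝ) :=
  MvPolynomial.mkDerivation ℝ (fun l => (l : ℝ) • (PP n (dd k l) - PP n (k + l)))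

noncomputable def lk (n k : ℕ) : MvPolynomial ℕ ℝ :=
  ∑ i ∈ Finset.range k, (PP n i * PP n (k - i) + PP n (dd k (2 * i)))

/-- Gaussian moments, variance `k`. -/
noncomputable def mom (k : ℕ) : ℕ → ℝ
  | 0 => 1
  | 1 => 0
  | (a + 2) => (a + 1) * k * mom k a

noncomputable def gw (s : ℕ →₀ ℕ) : ℝ := s.prod (fun k a => mom k a)

noncomputable def gE : MvPolynomial ℕ ℝ →ₗ[ℝ] ℝ :=
  (MvPolynomial.basisMonomials ℕ ℝ).constr ℝ gw

lemma gE_monomial (s : ℕ →₀ ℕ) (c : ℝ) : gE (MvPolynomial.monomial s c) = c * gw s := by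
  have h : MvPolynomial.monomial s c = c • (MvPolynomial.basisMonomials ℕ ℝ) s := by
    simp [MvPolynomial.smul_monomial]
  rw [h, map_smul, gE, Module.Basis.constr_basis, smul_eq_mul]

lemma gE_one : gE 1 = 1 := by
  have := gE_monomial 0 1
  simpa [gw] using this

lemma gw_split (s : ℕ →₀ ℕ) (k : ℕ) : gw s = mom k (s k) * gw (s.erase k) := by
  unfold gw
  exact (Finsupp.mul_prod_erase' s k _ (fun i => by simp [mom])).symm

lemma mom_succ (k a : ℕ) : mom k (a + 1) = k * (a * mom k (a - 1)) := by
  cases a with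
  | zero => simp [mom]
  | succ a => simp [mom]; ring

lemma gE_X_mul (k : ℕ) (F : MvPolynomial ℕ ℝ) :
    gE (MvPolynomial.X k * F) = k * gE (MvPolynomial.pderiv k F) := by
  induction F using MvPolynomial.induction_on' with
  | monomial s c =>
    rw [MvPolynomial.X, MvPolynomial.monomial_mul, MvPolynomial.pderiv_monomial, gE_monomial,
      gE_monomial, gw_split _ k, gw_split (s - _) k]
    have h1 : (Finsupp.single k 1 + s).erase k = s.erase k := by
      ext i
      by_cases h : i = k
      · simp [h]
      · simp [h, Finsupp.single_apply, Ne.symm h]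
    have h2 : (s - Finsupp.single k 1).erase k = s.erase k := by
      ext i
      by_cases h : i = k
      · simp [h]
      · simp [h, Finsupp.single_apply, Ne.symm h]
    rw [h1, h2]
    simp only [Finsupp.add_apply, Finsupp.single_eq_same, Finsupp.tsub_apply]
    rw [add_comm 1, mom_succ]; ring
  | add p q hp hq => rw [mul_add, map_add, map_add, map_add, hp, hq]; ring

lemma PP_pos {n k : ℕ} (hk : 0 < k) :
    PP n k = MvPolynomial.X k - MvPolynomial.C (eta k) := by
  simp [PP, hk.ne']

lemma PP_zero (n : ℕ) : PP n 0 = MvPolynomial.C (2 * n : ℝ) := by simp [PP]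

lemma gE_C_mul (c : ℝ) (F : MvPolynomial ℕ ℝ) : gE (MvPolynomial.C c * F) = c * gE F := by
  rw [← MvPolynomial.smul_eq_C_mul, map_smul, smul_eq_mul]

lemma gE_PP_mul {n k : ℕ} (hk : 0 < k) (F : MvPolynomial ℕ ℝ) :
    gE (PP n k * F) = k * gE (MvPolynomial.pderiv k F) - eta k * gE F := by
  rw [PP_pos hk, sub_mul, map_sub, gE_X_mul, gE_C_mul]

lemma pderiv_PP {n k l : ℕ} (hk : 0 < k) :
    MvPolynomial.pderiv l (PP n k) = if k = l then 1 else 0 := by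
  rw [PP_pos hk]
  simp only [map_sub, MvPolynomial.pderiv_C, sub_zero]
  split_ifs with h
  · subst h; simp
  · exact MvPolynomial.pderiv_X_of_ne h

lemma deriv_sum_apply (s : Finset ℕ)
    (f : ℕ → Derivation ℝ (MvPolynomial ℕ ℝ) (MvPolynomial ℕ ℝ)) (F : MvPolynomial ℕ ℝ) :
    (∑ l ∈ s, f l) F = ∑ l ∈ s, f l F := by
  rw [← Derivation.coeFnAddMonoidHom_apply, map_sum, Finset.sum_apply]
  rfl

lemma dK_eq (n k N : ℕ) (F : MvPolynomial ℕ ℝ) (hN : ∀ i ∈ F.vars, i < N) :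
    dK n k F = ∑ l ∈ Finset.range N,
      ((l : ℝ) • (PP n (dd k l) - PP n (k + l))) * MvPolynomial.pderiv l F := by
  have : dK n k F = (∑ l ∈ Finset.range N,
      ((l : ℝ) • (PP n (dd k l) - PP n (k + l))) • MvPolynomial.pderiv (R := ℝ) l) F := by
    apply MvPolynomial.derivation_eq_of_forall_mem_vars
    intro i hi
    rw [dK, MvPolynomial.mkDerivation_X, deriv_sum_apply,
      Finset.sum_eq_single i]
    · simp
    · intro b _ hb
      rw [Derivation.smul_apply, MvPolynomial.pderiv_X_of_ne hb.symm, smul_zero]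
    · intro h; exact absurd (Finset.mem_range.2 (hN i hi)) h
  rw [this, deriv_sum_apply]
  simp

/-! combinatorial lemmas -/

lemma sum_dd (c : ℕ → ℝ) : ∀ k : ℕ,
    ∑ i ∈ Finset.range k, c (dd (k + 1) (2 * (i + 1))) =
      eta (k + 1) * c 0 + 2 * ∑ m ∈ Finset.range k, eta (k + 1 + (m + 1)) * c (m + 1) := by
  intro k
  induction k using Nat.strong_induction_on with
  | _ k ih =>
  match k with
  | 0 => simp [eta]
  | 1 => simp [eta, dd]; intro h; exact absurd h (by decide)
  | k + 2 =>
    have := ih k (by omega)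
    rw [Finset.sum_range_succ, Finset.sum_range_succ', Finset.sum_range_succ,
      Finset.sum_range_succ]
    have e1 : ∀ i ∈ Finset.range k, c (dd (k + 2 + 1) (2 * (i + 1 + 1))) =
        c (dd (k + 1) (2 * (i + 1))) := by
      intro i _; congr 1; unfold dd; omega
    rw [Finset.sum_congr rfl e1, this]
    have e2 : dd (k + 2 + 1) (2 * (0 + 1)) = k + 1 := by unfold dd; omega
    have e3 : dd (k + 2 + 1) (2 * (k + 1 + 1)) = k + 1 := by unfold dd; omega
    have p2 : ∀ a, eta (a + 2) = eta a := by
      intro a; unfold eta; congr 1; simp [Nat.even_add]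
    have e4 : eta (k + 2 + 1 + (k + 1)) = 1 := by
      unfold eta; rw [if_pos]; exact ⟨k + 2, by omega⟩
    have e5 : eta (k + 2 + 1 + (k + 1 + 1)) = 0 := by
      unfold eta; rw [if_neg]; rintro ⟨r, hr⟩; omega
    have e6 : eta (k + 2 + 1) = eta (k + 1) := p2 (k + 1)
    have e7 : ∀ m, eta (k + 2 + 1 + (m + 1)) = eta (k + 1 + (m + 1)) := by
      intro m; rw [← p2 (k + 1 + (m + 1))]; congr 1; omega
    rw [e2, e3, e4, e5, e6]
    simp only [e7]
    ring

lemma sum_eta (N : ℕ) : ∀ k, Even k →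
    ∑ i ∈ Finset.range k, eta (N + i + 1) = (k / 2 : ℝ) := by
  rintro k ⟨r, rfl⟩
  induction r with
  | zero => simp
  | succ r ih =>
    have : r + 1 + (r + 1) = r + r + 1 + 1 := by omega
    rw [this, Finset.sum_range_succ, Finset.sum_range_succ, ih]
    have : eta (N + (r + r) + 1) + eta (N + (r + r + 1) + 1) = 1 := by
      unfold eta
      by_cases h : Even (N + (r + r) + 1)
      · rw [if_pos h, if_neg]; · simp
        intro h'
        have : N + (r + r + 1) + 1 = (N + (r + r) + 1) + 1 := by omega
        rw [this, Nat.even_add_one] at h'; exact h' h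
      · rw [if_neg h, if_pos]; · simp
        have : N + (r + r + 1) + 1 = (N + (r + r) + 1) + 1 := by omega
        rw [this, Nat.even_add_one]; exact h
    push_cast; linarith

lemma eta_parity (a b : ℕ) (h : a % 2 = b % 2) : eta a = eta b := by
  unfold eta; simp only [Nat.even_iff, h]

/-- The Gaussian functional satisfies the loop equations. -/
lemma gE_SD (n k : ℕ) (hk : 0 < k) (F : MvPolynomial ℕ ℝ) :
    gE (lk n k * F) = gE (dK n k F) := by
  obtain ⟨q, rfl⟩ : ∃ q, k = q + 1 := ⟨k - 1, by omega⟩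
  obtain ⟨K, hK⟩ : ∃ K, ∀ i ∈ F.vars, i < K := ⟨F.vars.sup id + 1, fun i hi =>
    Nat.lt_succ_of_le (Finset.le_sup (f := id) hi)⟩
  set a : ℕ → ℝ := fun m => gE (PP n m * F) with ha
  set e : ℝ := gE F with he
  set b : ℕ → ℝ := fun m => gE (PP n m * PP n (q + 1 + m) * F) with hb
  have hpd : ∀ l, K ≤ l → MvPolynomial.pderiv l F = 0 := by
    intro l hl
    apply MvPolynomial.pderiv_eq_zero_of_notMem_vars
    intro h; exact absurd (hK l h) (by omega)
  have htail : ∀ m, K ≤ m → 0 < m → a m = - eta m * e := by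
    intro m hm h0
    simp only [ha]; rw [gE_PP_mul h0, hpd m hm]; simp [he]
  -- basic integration by parts
  have ibp : ∀ (l : ℕ) (G : MvPolynomial ℕ ℝ), 0 < l → (l : ℝ) * gE (G * MvPolynomial.pderiv l F) =
      gE (PP n l * G * F) + eta l * gE (G * F) - l * gE (MvPolynomial.pderiv l G * F) := by
    intro l G hl
    rw [mul_assoc, gE_PP_mul hl, Derivation.leibniz]
    simp only [smul_eq_mul, map_add]
    rw [mul_comm F]; ring
  -- the three ranges
  have hlow : ∀ i ∈ Finset.range q,
      ((i + 1 : ℕ) : ℝ) * gE (PP n (dd (q + 1) (i + 1)) * MvPolynomial.pderiv (i + 1) F) =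
      gE (PP n (i + 1) * PP n (q + 1 - (i + 1)) * F) + eta (i + 1) * a (q - i)
        - (if 2 * (i + 1) = q + 1 then ((i + 1 : ℕ) : ℝ) else 0) * e := by
    intro i hi
    have hi := Finset.mem_range.1 hi
    have e1 : dd (q + 1) (i + 1) = q - i := by unfold dd; omega
    have e2 : q + 1 - (i + 1) = q - i := by omega
    rw [e1, ibp _ _ (by omega), pderiv_PP (by omega), e2]
    simp only [ha, he]
    by_cases h : q - i = i + 1
    · rw [if_pos h, if_pos (by omega), one_mul]
    · rw [if_neg h, if_neg (by omega)]; simp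
  have hmid : ((q + 1 : ℕ) : ℝ) * gE (PP n (dd (q + 1) (q + 1)) * MvPolynomial.pderiv (q + 1) F)
      = 2 * n * (a (q + 1) + eta (q + 1) * e) := by
    have e1 : dd (q + 1) (q + 1) = 0 := by unfold dd; omega
    rw [e1, PP_zero, gE_C_mul]
    simp only [ha, he]; rw [gE_PP_mul (by omega)]; ring
  have hhigh : ∀ m ∈ Finset.range K,
      ((q + 1 + (m + 1) : ℕ) : ℝ) * gE (PP n (dd (q + 1) (q + 1 + (m + 1))) *
        MvPolynomial.pderiv (q + 1 + (m + 1)) F) =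
      b (m + 1) + eta (q + 1 + (m + 1)) * a (m + 1) := by
    intro m _
    have e1 : dd (q + 1) (q + 1 + (m + 1)) = m + 1 := by unfold dd; omega
    rw [e1, ibp _ _ (by omega), pderiv_PP (by omega), if_neg (by omega)]
    simp only [ha, hb, zero_mul, map_zero, mul_zero, sub_zero]
    rw [mul_comm (PP n (q + 1 + (m + 1)))]
  have hB : ∀ m ∈ Finset.range K,
      ((m + 1 : ℕ) : ℝ) * gE (PP n (q + 1 + (m + 1)) * MvPolynomial.pderiv (m + 1) F) =
      b (m + 1) + eta (m + 1) * a (q + 1 + (m + 1)) := by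
    intro m _
    rw [ibp _ _ (by omega), pderiv_PP (by omega), if_neg (by omega)]
    simp only [ha, hb, zero_mul, map_zero, mul_zero, sub_zero]
  -- RHS
  have hR : gE (dK n (q + 1) F) =
      (∑ l ∈ Finset.range (q + 1 + K + 1), (l : ℝ) * gE (PP n (dd (q + 1) l) *
        MvPolynomial.pderiv l F))
      - ∑ l ∈ Finset.range (K + 1), (l : ℝ) * gE (PP n (q + 1 + l) *
        MvPolynomial.pderiv l F) := by
    have hx : ∑ l ∈ Finset.range (q + 1 + K + 1), (l : ℝ) * gE (PP n (q + 1 + l) *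
        MvPolynomial.pderiv l F) = ∑ l ∈ Finset.range (K + 1), (l : ℝ) * gE (PP n (q + 1 + l) *
        MvPolynomial.pderiv l F) := by
      symm
      apply Finset.sum_subset
      · intro i hi; simp only [Finset.mem_range] at *; omega
      · intro i _ hi
        simp only [Finset.mem_range, not_lt] at hi
        rw [hpd i (by omega)]; simp
    rw [← hx, ← Finset.sum_sub_distrib, dK_eq n (q + 1) (q + 1 + K + 1) F
      (fun i hi => by have := hK i hi; omega), map_sum]
    apply Finset.sum_congr rfl
    intro l _
    rw [smul_mul_assoc, map_smul, sub_mul, map_sub, smul_eq_mul]; ring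
  have hR1 : ∑ l ∈ Finset.range (q + 1 + K + 1), (l : ℝ) * gE (PP n (dd (q + 1) l) *
        MvPolynomial.pderiv l F) =
      (∑ i ∈ Finset.range q, (gE (PP n (i + 1) * PP n (q + 1 - (i + 1)) * F)
        + eta (i + 1) * a (q - i)
        - (if 2 * (i + 1) = q + 1 then ((i + 1 : ℕ) : ℝ) else 0) * e))
      + 2 * n * (a (q + 1) + eta (q + 1) * e)
      + ∑ m ∈ Finset.range K, (b (m + 1) + eta (q + 1 + (m + 1)) * a (m + 1)) := by
    rw [Finset.sum_range_succ', add_assoc q 1 K, Finset.sum_range_add, add_comm 1 K,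
      Finset.sum_range_succ']
    rw [← Finset.sum_congr rfl hlow, ← hmid, ← Finset.sum_congr rfl hhigh]
    have : ∀ x, q + (x + 1) + 1 = q + 1 + (x + 1) := by intro x; omega
    simp only [this]
    simp; ring
  have hR2 : ∑ l ∈ Finset.range (K + 1), (l : ℝ) * gE (PP n (q + 1 + l) *
        MvPolynomial.pderiv l F) =
      ∑ m ∈ Finset.range K, (b (m + 1) + eta (m + 1) * a (q + 1 + (m + 1))) := by
    rw [Finset.sum_range_succ', ← Finset.sum_congr rfl hB]; simp
  set g : ℕ → ℝ := fun m => eta (q + 1 + m) * a m with hg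
  have hG1 : ∀ m, eta (m + 1) * a (q + 1 + (m + 1)) = g (q + 1 + (m + 1)) := by
    intro m; simp only [hg]; rw [eta_parity (m + 1) (q + 1 + (q + 1 + (m + 1))) (by omega)]
  have hG2 : ∑ i ∈ Finset.range q, eta (i + 1) * a (q - i) =
      ∑ m ∈ Finset.range q, g (m + 1) := by
    rw [← Finset.sum_range_reflect]
    apply Finset.sum_congr rfl
    intro m hm
    have hm := Finset.mem_range.1 hm
    simp only [hg]
    rw [eta_parity (q - 1 - m + 1) (q + 1 + (m + 1)) (by omega)]
    congr 2; omega
  have hG3 : ∑ m ∈ Finset.range K, g (m + 1) - ∑ m ∈ Finset.range K, g (q + 1 + (m + 1)) =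
      ∑ m ∈ Finset.range (q + 1), g (m + 1) + eta (q + 1) * ((q + 1 : ℝ) / 2) * e := by
    have h1 : ∑ m ∈ Finset.range (K + (q + 1)), g (m + 1) =
        ∑ m ∈ Finset.range K, g (m + 1) + ∑ m ∈ Finset.range (q + 1), g (K + m + 1) :=
      Finset.sum_range_add _ _ _
    have h2 : ∑ m ∈ Finset.range (q + 1 + K), g (m + 1) =
        ∑ m ∈ Finset.range (q + 1), g (m + 1) + ∑ m ∈ Finset.range K, g (q + 1 + m + 1) :=
      Finset.sum_range_add _ _ _
    have h3 : ∑ m ∈ Finset.range (q + 1), g (K + m + 1) =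
        - (eta (q + 1) * ((q + 1 : ℝ) / 2) * e) := by
      have : ∀ m ∈ Finset.range (q + 1), g (K + m + 1) =
          - (eta (q + 1) * e) * eta (K + m + 1) := by
        intro m _
        simp only [hg]
        rw [htail _ (by omega) (by omega)]
        have : eta (q + 1 + (K + m + 1)) * eta (K + m + 1) = eta (q + 1) * eta (K + m + 1) := by
          unfold eta
          by_cases h : Even (K + m + 1)
          · simp [h, Nat.even_add]
          · simp [h]
        linear_combination (-e) * this
      rw [Finset.sum_congr rfl this, ← Finset.mul_sum]
      by_cases h : Even (q + 1)
      · rw [sum_eta K (q + 1) h]; push_cast; ring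
      · simp [eta, h]
    have h4 : ∀ m, q + 1 + (m + 1) = q + 1 + m + 1 := by intro m; omega
    simp only [h4]
    rw [add_comm K] at h1
    linarith
  have hI : ∑ i ∈ Finset.range q, (if 2 * (i + 1) = q + 1 then ((i + 1 : ℕ) : ℝ) else 0) =
      eta (q + 1) * ((q + 1 : ℝ) / 2) := by
    by_cases h : Even (q + 1)
    · obtain ⟨r, hr⟩ := h
      rw [Finset.sum_eq_single (r - 1)]
      · rw [if_pos (by omega), eta, if_pos ⟨r, hr⟩]
        have h1 : r - 1 + 1 = r := by omega
        have h2 : (q : ℝ) + 1 = r + r := by exact_mod_cast hr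
        rw [h1, h2]; ring
      · intro b _ hb; rw [if_neg]; omega
      · intro h; simp only [Finset.mem_range] at h; omega
    · rw [eta, if_neg h, Finset.sum_eq_zero]; · simp
      intro i _; rw [if_neg]; intro h'; exact h ⟨i + 1, by omega⟩
  -- LHS
  have hL : gE (lk n (q + 1) * F) = 2 * n * a (q + 1) + a (q + 1)
      + ∑ i ∈ Finset.range q, gE (PP n (i + 1) * PP n (q + 1 - (i + 1)) * F)
      + ∑ i ∈ Finset.range q, gE (PP n (dd (q + 1) (2 * (i + 1))) * F) := by
    rw [lk, Finset.sum_mul, map_sum, Finset.sum_range_succ']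
    simp only [add_mul, map_add, Finset.sum_add_distrib]
    have e1 : dd (q + 1) (2 * 0) = q + 1 := by unfold dd; omega
    rw [e1, PP_zero, Nat.sub_zero, mul_assoc (MvPolynomial.C _), gE_C_mul]
    simp only [ha]; ring
  rw [hL, sum_dd (fun m => gE (PP n m * F)) q, hR, hR1, hR2]
  simp only [hG1, Finset.sum_add_distrib, Finset.sum_sub_distrib, ← Finset.sum_mul, hI, hG2]
  simp only [PP_zero, gE_C_mul]
  have hg' : ∀ m, eta (q + 1 + (m + 1)) * a (m + 1) = g (m + 1) := fun m => rfl
  have hg'' : ∀ m, eta (q + 1 + (m + 1)) * gE (PP n (m + 1) * F) = g (m + 1) := fun m => rfl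
  simp only [hg', hg'']
  have hk' : g (q + 1) = a (q + 1) := by
    simp only [hg]; rw [eta, if_pos ⟨q + 1, rfl⟩, one_mul]
  rw [Finset.sum_range_succ] at hG3
  linear_combination (-1 : ℝ) * hG3 - hk'

end USpCLT


namespace USpCLT

noncomputable def QQ (n : ℕ) (s : Multiset ℕ) : MvPolynomial ℕ ℝ := (s.map (PP n)).prod

lemma QQ_cons (n k : ℕ) (s : Multiset ℕ) : QQ n (k ::ₘ s) = PP n k * QQ n s := by
  simp [QQ]

lemma QQ_add (n : ℕ) (s t : Multiset ℕ) : QQ n (s + t) = QQ n s * QQ n t := by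
  simp [QQ]

lemma QQ_zero (n : ℕ) : QQ n 0 = 1 := by simp [QQ]

section
variable {n N : ℕ} {m : ℝ} {D : MvPolynomial ℕ ℝ →ₗ[ℝ] ℝ}

lemma low_aux (Hlow : ∀ s : Multiset ℕ, (∀ i ∈ s, 0 < i) → s.sum < N → D (QQ n s) = 0)
    (d : ℕ) (s : Multiset ℕ) (hs : ∀ i ∈ s, 0 < i) (hd : d + s.sum < N) :
    D (PP n d * QQ n s) = 0 := by
  by_cases h : d = 0
  · subst h
    rw [PP_zero, ← MvPolynomial.smul_eq_C_mul, map_smul, Hlow s hs (by omega), smul_zero]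
  · rw [← QQ_cons]
    apply Hlow
    · intro i hi
      rcases Multiset.mem_cons.1 hi with rfl | hi
      · omega
      · exact hs i hi
    · simpa using hd

lemma deriv_bound (Hlow : ∀ s : Multiset ℕ, (∀ i ∈ s, 0 < i) → s.sum < N → D (QQ n s) = 0)
    (Hm : ∀ s : Multiset ℕ, (∀ i ∈ s, 0 < i) → s.sum = N → |D (QQ n s)| ≤ m)
    (k : ℕ) (hk : 0 < k) (μ : Multiset ℕ) : ∀ ν : Multiset ℕ,
    (∀ i ∈ μ, 0 < i) → (∀ i ∈ ν, 0 < i) →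
    ν.sum + μ.sum + k = N → |D (QQ n ν * dK n k (QQ n μ))| ≤ μ.sum * m := by
  induction μ using Multiset.induction_on with
  | empty => intro ν _ _ _; simp [QQ_zero]
  | cons l μ ih =>
    intro ν hμ hν hs
    have hl : 0 < l := hμ l (Multiset.mem_cons_self _ _)
    have hμ' : ∀ i ∈ μ, 0 < i := fun i hi => hμ i (Multiset.mem_cons_of_mem hi)
    rw [Multiset.sum_cons] at hs
    have h1 := ih (l ::ₘ ν) hμ' (by
      intro i hi
      rcases Multiset.mem_cons.1 hi with rfl | hi
      · exact hl
      · exact hν i hi) (by rw [Multiset.sum_cons]; omega)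
    have hpos : ∀ i ∈ ν + μ, 0 < i := by
      intro i hi
      rcases Multiset.mem_add.1 hi with hi | hi
      · exact hν i hi
      · exact hμ' i hi
    have h2 : D (PP n (dd k l) * QQ n (ν + μ)) = 0 := by
      apply low_aux Hlow _ _ hpos
      rw [Multiset.sum_add]; unfold dd; omega
    have h3 : |D (QQ n ((k + l) ::ₘ (ν + μ)))| ≤ m := by
      apply Hm
      · intro i hi
        rcases Multiset.mem_cons.1 hi with rfl | hi
        · omega
        · exact hpos i hi
      · rw [Multiset.sum_cons, Multiset.sum_add]; omega
    have hdl : dK n k (PP n l) = (l : ℝ) • (PP n (dd k l) - PP n (k + l)) := by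
      rw [PP_pos hl, map_sub, MvPolynomial.derivation_C, sub_zero, dK,
        MvPolynomial.mkDerivation_X]
    have key : QQ n ν * dK n k (QQ n (l ::ₘ μ)) = QQ n (l ::ₘ ν) * dK n k (QQ n μ)
        + (l : ℝ) • (PP n (dd k l) * QQ n (ν + μ) - QQ n ((k + l) ::ₘ (ν + μ))) := by
      rw [QQ_cons, Derivation.leibniz, hdl, QQ_cons, QQ_cons, QQ_add]
      simp only [smul_eq_mul, MvPolynomial.smul_eq_C_mul]; ring
    rw [key, map_add, map_smul, map_sub, h2, zero_sub, Multiset.sum_cons, Nat.cast_add,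
      add_mul, add_comm (_ * m)]
    refine (abs_add_le _ _).trans (add_le_add h1 ?_)
    rw [smul_eq_mul, abs_mul, abs_neg, Nat.abs_cast]
    gcongr

lemma step_aux (hSD : ∀ k, 0 < k → ∀ F, D (lk n k * F) = D (dK n k F))
    (Hlow : ∀ s : Multiset ℕ, (∀ i ∈ s, 0 < i) → s.sum < N → D (QQ n s) = 0)
    (Hm : ∀ s : Multiset ℕ, (∀ i ∈ s, 0 < i) → s.sum = N → |D (QQ n s)| ≤ m)
    (k : ℕ) (μ : Multiset ℕ) (hk : 0 < k) (hμ : ∀ i ∈ μ, 0 < i) (hs : k + μ.sum = N) :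
    (2 * n + 1) * |D (QQ n (k ::ₘ μ))| ≤ (N - 1) * m := by
  have h1 := deriv_bound Hlow Hm k hk μ 0 hμ (by simp) (by simp; omega)
  rw [QQ_zero, one_mul, ← hSD k hk] at h1
  obtain ⟨q, rfl⟩ : ∃ q, k = q + 1 := ⟨k - 1, by omega⟩
  have h2 : D (lk n (q + 1) * QQ n μ) = (2 * n + 1) * D (QQ n ((q + 1) ::ₘ μ))
      + ∑ i ∈ Finset.range q, D (QQ n ((i + 1) ::ₘ (q - i) ::ₘ μ)) := by
    rw [lk, Finset.sum_mul, map_sum, Finset.sum_range_succ', add_comm]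
    congr 1
    · have e1 : dd (q + 1) (2 * 0) = q + 1 := by unfold dd; omega
      rw [e1, PP_zero, Nat.sub_zero, add_mul, map_add, mul_assoc, ← QQ_cons,
        ← MvPolynomial.smul_eq_C_mul, map_smul, smul_eq_mul]; ring
    · apply Finset.sum_congr rfl
      intro i hi
      have hi := Finset.mem_range.1 hi
      rw [add_mul, map_add, low_aux Hlow _ _ hμ (by unfold dd; omega), add_zero, QQ_cons, QQ_cons,
        mul_assoc]
      have : q + 1 - (i + 1) = q - i := by omega
      rw [this]
  have h3 : |∑ i ∈ Finset.range q, D (QQ n ((i + 1) ::ₘ (q - i) ::ₘ μ))| ≤ q * m := by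
    refine (Finset.abs_sum_le_sum_abs _ _).trans ?_
    refine (Finset.sum_le_card_nsmul _ _ m ?_).trans (by simp)
    intro i hi
    have hi := Finset.mem_range.1 hi
    apply Hm
    · intro x hx
      rcases Multiset.mem_cons.1 hx with rfl | hx
      · omega
      rcases Multiset.mem_cons.1 hx with rfl | hx
      · omega
      · exact hμ x hx
    · rw [Multiset.sum_cons, Multiset.sum_cons]; omega
  have hN : (N : ℝ) = q + 1 + (μ.sum : ℝ) := by rw [← hs]; push_cast; ring
  rw [h2] at h1
  have h4 : (2 * n + 1) * |D (QQ n ((q + 1) ::ₘ μ))| =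
      |(2 * n + 1) * D (QQ n ((q + 1) ::ₘ μ))| := by
    rw [abs_mul, abs_of_nonneg (by positivity : (0:ℝ) ≤ 2 * n + 1)]
  rw [h4, hN]
  have h5 := abs_sub_abs_le_abs_sub ((2 * n + 1) * D (QQ n ((q + 1) ::ₘ μ)))
    (-∑ i ∈ Finset.range q, D (QQ n ((i + 1) ::ₘ (q - i) ::ₘ μ)))
  rw [sub_neg_eq_add, abs_neg] at h5
  linarith

lemma zero_of_SD (h1 : D 1 = 0) (hSD : ∀ k, 0 < k → ∀ F, D (lk n k * F) = D (dK n k F)) :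
    ∀ N, N ≤ 2 * n → ∀ s : Multiset ℕ, (∀ i ∈ s, 0 < i) → s.sum = N → D (QQ n s) = 0 := by
  intro N
  induction N using Nat.strong_induction_on with
  | _ N ih =>
  intro hN s hs hsum
  have Hlow : ∀ s : Multiset ℕ, (∀ i ∈ s, 0 < i) → s.sum < N → D (QQ n s) = 0 :=
    fun s hs h => ih s.sum h (by omega) s hs rfl
  obtain ⟨p0, hp0⟩ := Finite.exists_max (fun p : Nat.Partition N => |D (QQ n p.parts)|)
  have Hm : ∀ s : Multiset ℕ, (∀ i ∈ s, 0 < i) → s.sum = N →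
      |D (QQ n s)| ≤ |D (QQ n p0.parts)| := fun s hs h =>
    hp0 ⟨s, fun {i} hi => hs i hi, h⟩
  have hz : |D (QQ n p0.parts)| = 0 := by
    have hpp : ∀ i ∈ p0.parts, 0 < i := fun i hi => p0.parts_pos hi
    have hps := p0.parts_sum
    generalize p0.parts = t at *
    induction t using Multiset.induction_on with
    | empty => rw [QQ_zero, h1, abs_zero]
    | cons k μ _ =>
      have := step_aux hSD Hlow Hm k μ (hpp k (Multiset.mem_cons_self _ _))
        (fun i hi => hpp i (Multiset.mem_cons_of_mem hi)) (by rw [← hps, Multiset.sum_cons])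
      have hnn := abs_nonneg (D (QQ n (k ::ₘ μ)))
      have hN' : (N : ℝ) ≤ 2 * n := by exact_mod_cast hN
      nlinarith
  have := Hm s hs hsum
  rw [hz] at this
  exact abs_nonpos_iff.1 this

end

lemma eq_gE (n : ℕ) (L : MvPolynomial ℕ ℝ →ₗ[ℝ] ℝ) (h1 : L 1 = 1)
    (hSD : ∀ k, 0 < k → ∀ F, L (lk n k * F) = L (dK n k F))
    (s : Multiset ℕ) (hs : ∀ i ∈ s, 0 < i) (hN : s.sum ≤ 2 * n) :
    L (QQ n s) = gE (QQ n s) := by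
  have := zero_of_SD (n := n) (D := L - gE) (by simp [h1, gE_one])
    (fun k hk F => by simp [hSD k hk F, gE_SD n k hk F]) s.sum hN s hs rfl
  simpa [sub_eq_zero] using this

/-! low order Gaussian moments -/

noncomputable def cv (a b : ℕ) : ℝ := if a = b then (a : ℝ) else 0

lemma gE_two {n a b : ℕ} (ha : 0 < a) (hb : 0 < b) :
    gE (PP n a * PP n b) = cv a b + eta a * eta b := by
  have h1 : gE (PP n b) = - eta b := by
    have := gE_PP_mul (n := n) hb 1
    simpa [gE_one] using this
  rw [gE_PP_mul ha, pderiv_PP hb, h1]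
  unfold cv
  by_cases h : a = b
  · subst h; simp [gE_one]
  · simp [h, Ne.symm h]

lemma cv_eq (n a b : ℕ) (hb : 0 < b) (F : MvPolynomial ℕ ℝ) :
    (a : ℝ) * gE (F * MvPolynomial.pderiv a (PP n b)) = cv a b * gE F := by
  rw [pderiv_PP hb]; unfold cv
  by_cases h : a = b
  · subst h; simp
  · simp [h, Ne.symm h]

lemma gE_one' {n b : ℕ} (hb : 0 < b) : gE (PP n b) = - eta b := by
  have := gE_PP_mul (n := n) hb 1
  simpa [gE_one] using this

lemma gE_three {n a b c : ℕ} (ha : 0 < a) (hb : 0 < b) (hc : 0 < c) :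
    gE (PP n a * (PP n b * PP n c)) = - cv a b * eta c - cv a c * eta b - cv b c * eta a
      - eta a * eta b * eta c := by
  rw [gE_PP_mul ha, Derivation.leibniz, map_add, smul_eq_mul, smul_eq_mul, mul_add,
    cv_eq n a c hc, cv_eq n a b hb, gE_one' hb, gE_one' hc, gE_two hb hc]
  ring

lemma gE_four {n a b c d : ℕ} (ha : 0 < a) (hb : 0 < b) (hc : 0 < c) (hd : 0 < d) :
    gE (PP n a * (PP n b * (PP n c * PP n d))) = cv a b * cv c d + cv a c * cv b d + cv a d * cv b c
      + (cv a b * (eta c * eta d) + cv a c * (eta b * eta d) + cv a d * (eta b * eta c)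
        + cv b c * (eta a * eta d)
        + cv b d * (eta a * eta c) + cv c d * (eta a * eta b))
      + (eta a * eta b) * (eta c * eta d) := by
  have h : gE (PP n a * (PP n b * (PP n c * PP n d))) =
      cv a b * gE (PP n c * PP n d) + cv a c * gE (PP n b * PP n d) + cv a d * gE (PP n b * PP n c)
      - eta a * gE (PP n b * (PP n c * PP n d)) := by
    rw [gE_PP_mul ha, Derivation.leibniz, Derivation.leibniz]
    simp only [smul_eq_mul, mul_add, map_add]
    rw [← mul_assoc (PP n b), ← mul_assoc (PP n b), cv_eq n a d hd, cv_eq n a c hc, cv_eq n a b hb]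
    ring
  rw [h, gE_two hc hd, gE_two hb hd, gE_two hb hc, gE_three hb hc hd]
  ring

lemma eta_nonneg (a : ℕ) : 0 ≤ eta a := by unfold eta; split_ifs <;> norm_num
lemma eta_le (a : ℕ) : eta a ≤ 1 := by unfold eta; split_ifs <;> norm_num
lemma eta2_le (a b : ℕ) : eta a * eta b ≤ 1 :=
  mul_le_one₀ (eta_le a) (eta_nonneg b) (eta_le b)
lemma eta2_nonneg (a b : ℕ) : 0 ≤ eta a * eta b := mul_nonneg (eta_nonneg a) (eta_nonneg b)
lemma cv_nonneg (a b : ℕ) : 0 ≤ cv a b := by unfold cv; split_ifs <;> simp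
lemma cv_le {a j : ℕ} (b : ℕ) (h : a ≤ j) : cv a b ≤ j := by
  unfold cv; split_ifs
  · exact_mod_cast h
  · simp
lemma cv_le' {a j : ℕ} (b : ℕ) (h : a ≤ j) : cv a b ≤ j * (if a = b then 1 else 0) := by
  unfold cv; split_ifs
  · simpa using h
  · simp

lemma gE_four_le {n a b c d j : ℕ} (ha : 0 < a) (hb : 0 < b) (hc : 0 < c) (hd : 0 < d)
    (haj : a ≤ j) (hbj : b ≤ j) (hcj : c ≤ j) (hj : 0 < j) :
    gE (PP n a * (PP n b * (PP n c * PP n d))) ≤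
      j ^ 2 * ((if a = b then 1 else 0) * (if c = d then 1 else 0) + (if a = c then 1 else 0)
        + (if a = d then 1 else 0)) + 7 * j := by
  have hj1 : (1 : ℝ) ≤ j := by exact_mod_cast hj
  rw [gE_four ha hb hc hd]
  have t : ∀ {x : ℝ} (u v : ℕ), 0 ≤ x → x ≤ j → x * (eta u * eta v) ≤ j := fun u v h0 h =>
    (mul_le_of_le_one_right h0 (eta2_le u v)).trans h
  have t1 := t c d (cv_nonneg a b) (cv_le b haj)
  have t2 := t b d (cv_nonneg a c) (cv_le c haj)
  have t3 := t b c (cv_nonneg a d) (cv_le d haj)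
  have t4 := t a d (cv_nonneg b c) (cv_le c hbj)
  have t5 := t a c (cv_nonneg b d) (cv_le d hbj)
  have t6 := t a b (cv_nonneg c d) (cv_le d hcj)
  have t7 := t c d (eta2_nonneg a b) ((eta2_le a b).trans hj1)
  have s1 := mul_le_mul (cv_le' b haj) (cv_le' d hcj) (cv_nonneg _ _)
    (by positivity)
  have s2 := mul_le_mul (cv_le' c haj) (cv_le d hbj) (cv_nonneg _ _)
    (by positivity)
  have s3 := mul_le_mul (cv_le' d haj) (cv_le c hbj) (cv_nonneg _ _)
    (by positivity)
  nlinarith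

/-- sum of fourth moments -/
lemma sum_four_le (n q : ℕ) :
    ∑ i ∈ Finset.range q, ∑ k ∈ Finset.range q,
      gE (PP n (i + 1) * (PP n (q - i) * (PP n (k + 1) * PP n (q - k)))) ≤
      10 * (q + 1 : ℝ) ^ 3 := by
  have h1 : ∀ i ∈ Finset.range q, ∑ k ∈ Finset.range q,
      gE (PP n (i + 1) * (PP n (q - i) * (PP n (k + 1) * PP n (q - k)))) ≤
      3 * (q + 1 : ℝ) ^ 2 + 7 * (q + 1) * q := by
    intro i hi
    have hi := Finset.mem_range.1 hi
    have : ∀ k ∈ Finset.range q,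
      gE (PP n (i + 1) * (PP n (q - i) * (PP n (k + 1) * PP n (q - k)))) ≤
        (q + 1 : ℝ) ^ 2 * ((if k = (q - 1) / 2 then 1 else 0) + (if k = i then 1 else 0)
          + (if k = q - 1 - i then 1 else 0)) + 7 * (q + 1) := by
      intro k hk
      have hk := Finset.mem_range.1 hk
      refine (gE_four_le (j := q + 1) (by omega) (by omega) (by omega) (by omega) (by omega)
        (by omega) (by omega) (by omega)).trans ?_
      push_cast
      have a1 : (if i + 1 = q - i then (1:ℝ) else 0) * (if k + 1 = q - k then 1 else 0) ≤
          if k = (q - 1) / 2 then 1 else 0 := by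
        split_ifs <;> first | omega | norm_num
      have a2 : (if i = k then (1:ℝ) else 0) ≤ if k = i then 1 else 0 := by
        split_ifs <;> first | omega | norm_num
      have a3 : (if i + 1 = q - k then (1:ℝ) else 0) ≤ if k = q - 1 - i then 1 else 0 := by
        split_ifs <;> first | omega | norm_num
      have hq : (0:ℝ) ≤ (q + 1 : ℝ) ^ 2 := by positivity
      exact add_le_add (mul_le_mul_of_nonneg_left (add_le_add (add_le_add a1 a2) a3) hq) le_rfl
    refine (Finset.sum_le_sum this).trans ?_
    rw [Finset.sum_add_distrib, ← Finset.mul_sum, Finset.sum_add_distrib, Finset.sum_add_distrib]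
    simp only [Finset.sum_ite_eq', Finset.sum_const, Finset.card_range, nsmul_eq_mul]
    have : ∀ P : Prop, ∀ [Decidable P], (if P then (1:ℝ) else 0) ≤ 1 := by
      intro P _; split_ifs <;> norm_num
    have b1 := this ((q - 1) / 2 ∈ Finset.range q)
    have b2 := this (i ∈ Finset.range q)
    have b3 := this (q - 1 - i ∈ Finset.range q)
    have : (0:ℝ) ≤ (q + 1 : ℝ) ^ 2 := by positivity
    nlinarith
  refine (Finset.sum_le_sum h1).trans ?_
  simp only [Finset.sum_const, Finset.card_range, nsmul_eq_mul]
  have : (0:ℝ) ≤ q := by positivity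
  nlinarith [mul_nonneg this this, mul_nonneg this (mul_nonneg this this)]

end USpCLT


namespace USpCLT

section matrices
variable {n : ℕ}

/-- symplectic adjoint -/
noncomputable def sst (A : Matrix (Fin n ⊕ Fin n) (Fin n ⊕ Fin n) ℂ) :
    Matrix (Fin n ⊕ Fin n) (Fin n ⊕ Fin n) ℂ := -(J (Fin n) ℂ * Aᵀ * J (Fin n) ℂ)

lemma JJ : J (Fin n) ℂ * J (Fin n) ℂ = -1 := J_squared _ _

lemma sst_mul (A B : Matrix (Fin n ⊕ Fin n) (Fin n ⊕ Fin n) ℂ) :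
    sst (A * B) = sst B * sst A := by
  unfold sst
  rw [transpose_mul, neg_mul_neg]
  have : J (Fin n) ℂ * Bᵀ * J (Fin n) ℂ * (J (Fin n) ℂ * Aᵀ * J (Fin n) ℂ) =
    J (Fin n) ℂ * Bᵀ * (J (Fin n) ℂ * J (Fin n) ℂ) * Aᵀ * J (Fin n) ℂ := by noncomm_ring
  rw [this, JJ]; noncomm_ring

lemma sst_one : sst (1 : Matrix (Fin n ⊕ Fin n) (Fin n ⊕ Fin n) ℂ) = 1 := by
  unfold sst; rw [transpose_one, mul_one, JJ, neg_neg]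

lemma sst_pow (A : Matrix (Fin n ⊕ Fin n) (Fin n ⊕ Fin n) ℂ) (k : ℕ) :
    sst (A ^ k) = sst A ^ k := by
  induction k with
  | zero => simp [sst_one]
  | succ k ih => rw [pow_succ, sst_mul, ih, pow_succ']

lemma sst_add (A B : Matrix (Fin n ⊕ Fin n) (Fin n ⊕ Fin n) ℂ) : sst (A + B) = sst A + sst B := by
  unfold sst; rw [transpose_add]; noncomm_ring

lemma sst_sub (A B : Matrix (Fin n ⊕ Fin n) (Fin n ⊕ Fin n) ℂ) : sst (A - B) = sst A - sst B := by
  unfold sst; rw [transpose_sub]; noncomm_ring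

lemma sst_smul (c : ℂ) (A : Matrix (Fin n ⊕ Fin n) (Fin n ⊕ Fin n) ℂ) :
    sst (c • A) = c • sst A := by
  unfold sst; rw [transpose_smul]; simp

lemma sst_sst (A : Matrix (Fin n ⊕ Fin n) (Fin n ⊕ Fin n) ℂ) : sst (sst A) = A := by
  unfold sst
  simp only [transpose_neg, transpose_mul, J_transpose, transpose_transpose]
  have : -(J (Fin n) ℂ * -(-J (Fin n) ℂ * (A * -J (Fin n) ℂ)) * J (Fin n) ℂ) =
    (J (Fin n) ℂ * J (Fin n) ℂ) * A * (J (Fin n) ℂ * J (Fin n) ℂ) := by noncomm_ring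
  rw [this, JJ]; noncomm_ring

lemma J_conjTranspose : (J (Fin n) ℂ)ᴴ = -J (Fin n) ℂ := by
  rw [conjTranspose, J_transpose]
  unfold J
  ext i j
  rcases i with i | i <;> rcases j with j | j <;> simp [Matrix.one_apply, apply_ite star]

lemma sst_conjTranspose (A : Matrix (Fin n ⊕ Fin n) (Fin n ⊕ Fin n) ℂ) : (sst A)ᴴ = sst Aᴴ := by
  unfold sst
  rw [conjTranspose_neg, conjTranspose_mul, conjTranspose_mul, J_conjTranspose]
  have : Aᵀᴴ = Aᴴᵀ := by ext; simp [conjTranspose]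
  rw [this]; noncomm_ring

lemma trace_sst (A : Matrix (Fin n ⊕ Fin n) (Fin n ⊕ Fin n) ℂ) : trace (sst A) = trace A := by
  unfold sst
  rw [trace_neg, trace_mul_comm, ← mul_assoc, JJ]; simp

/-- the group element as a matrix -/
abbrev mt (M : USp n) : Matrix (Fin n ⊕ Fin n) (Fin n ⊕ Fin n) ℂ :=
  ((M : Matrix.unitaryGroup (Fin n ⊕ Fin n) ℂ) : Matrix (Fin n ⊕ Fin n) (Fin n ⊕ Fin n) ℂ)

lemma mt_mul (M N : USp n) : mt (M * N) = mt M * mt N := rfl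

lemma mt_star_mul (M : USp n) : (mt M)ᴴ * mt M = 1 :=
  Matrix.UnitaryGroup.star_mul_self (M : Matrix.unitaryGroup (Fin n ⊕ Fin n) ℂ)

lemma mt_mul_star (M : USp n) : mt M * (mt M)ᴴ = 1 := mul_eq_one_comm.1 (mt_star_mul M)

lemma sst_mt (M : USp n) : sst (mt M) = (mt M)ᴴ := by
  have h : mt M ∈ Matrix.symplecticGroup (Fin n) ℂ := M.2
  have h1 := SymplecticGroup.inv_eq_symplectic_inv _ h
  rw [Matrix.inv_eq_left_inv (mt_star_mul M)] at h1
  rw [h1, sst]; noncomm_ring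

lemma mt_pow (M : USp n) (k : ℕ) : mt (M ^ k) = mt M ^ k := by
  induction k with
  | zero => rfl
  | succ k ih => rw [pow_succ, mt_mul, ih, pow_succ]

/-- real trace of powers -/
noncomputable def pt (M : USp n) (k : ℕ) : ℝ := (trace (mt M ^ k)).re

lemma trace_eq_pt (M : USp n) (k : ℕ) : trace (mt M ^ k) = (pt M k : ℂ) := by
  have h : star (trace (mt M ^ k)) = trace (mt M ^ k) := by
    rw [← trace_conjTranspose, conjTranspose_pow, ← sst_mt, ← sst_pow, trace_sst]
  exact ((Complex.conj_eq_iff_re (z := trace (mt M ^ k))).1 h).symm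

lemma trace_star_pow (M : USp n) (k : ℕ) : trace ((mt M)ᴴ ^ k) = (pt M k : ℂ) := by
  rw [← sst_mt, ← sst_pow, trace_sst, trace_eq_pt]

lemma trUSp_eq (M : USp n) (k : ℕ) : (trUSp M (k : ℤ)).re = pt M k := by
  unfold trUSp pt
  rw [zpow_natCast, ← mt_pow]

lemma pt_zero (M : USp n) : pt M 0 = 2 * n := by
  unfold pt; simp; ring

lemma trace_pow_star_pow (M : USp n) (k l : ℕ) :
    trace (mt M ^ k * (mt M)ᴴ ^ l) = (pt M (dd k l) : ℂ) := by
  have hc : Commute (mt M) (mt M)ᴴ := by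
    rw [Commute, SemiconjBy, mt_mul_star, mt_star_mul]
  rcases le_total l k with h | h
  · obtain ⟨d, rfl⟩ := Nat.exists_eq_add_of_le' h
    rw [pow_add, mul_assoc, ← hc.mul_pow, mt_mul_star, one_pow, mul_one, trace_eq_pt]
    congr 2; unfold dd; omega
  · obtain ⟨d, rfl⟩ := Nat.exists_eq_add_of_le h
    rw [pow_add, ← mul_assoc, ← hc.mul_pow, mt_mul_star, one_pow, one_mul, trace_star_pow]
    congr 2; unfold dd; omega

/-! Lie algebra -/

def IsLie (X : Matrix (Fin n ⊕ Fin n) (Fin n ⊕ Fin n) ℂ) : Prop := Xᴴ = -X ∧ sst X = -X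

lemma trace_lie_real {X : Matrix (Fin n ⊕ Fin n) (Fin n ⊕ Fin n) ℂ} (hX : IsLie X) (M : USp n)
    (k : ℕ) : trace (X * mt M ^ k) = ((trace (X * mt M ^ k)).re : ℂ) := by
  have h : star (trace (X * mt M ^ k)) = trace (X * mt M ^ k) := by
    rw [← trace_conjTranspose, conjTranspose_mul, conjTranspose_pow, ← sst_mt, ← sst_pow, hX.1,
      ← trace_sst (X * mt M ^ k), sst_mul, hX.2]
  exact ((Complex.conj_eq_iff_re (z := trace (X * mt M ^ k))).1 h).symm

noncomputable def pj (A : Matrix (Fin n ⊕ Fin n) (Fin n ⊕ Fin n) ℂ) :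
    Matrix (Fin n ⊕ Fin n) (Fin n ⊕ Fin n) ℂ := A - sst A

/-- spanning families of the Lie algebra -/
noncomputable def XA (p q : Fin n ⊕ Fin n) : Matrix (Fin n ⊕ Fin n) (Fin n ⊕ Fin n) ℂ :=
  pj (single p q 1) - pj (single q p 1)

noncomputable def XB (p q : Fin n ⊕ Fin n) : Matrix (Fin n ⊕ Fin n) (Fin n ⊕ Fin n) ℂ :=
  Complex.I • (pj (single p q 1) + pj (single q p 1))

lemma pj_conj (p q : Fin n ⊕ Fin n) : (pj (single p q (1:ℂ)))ᴴ = pj (single q p 1) := by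
  unfold pj; rw [conjTranspose_sub, sst_conjTranspose, conjTranspose_single]; simp

lemma pj_sst (A : Matrix (Fin n ⊕ Fin n) (Fin n ⊕ Fin n) ℂ) : sst (pj A) = - pj A := by
  unfold pj; rw [sst_sub, sst_sst]; noncomm_ring

lemma XA_lie (p q : Fin n ⊕ Fin n) : IsLie (XA p q) := by
  constructor
  · unfold XA; rw [conjTranspose_sub, pj_conj, pj_conj]; noncomm_ring
  · unfold XA; rw [sst_sub, pj_sst, pj_sst]; noncomm_ring

lemma XB_lie (p q : Fin n ⊕ Fin n) : IsLie (XB p q) := by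
  constructor
  · unfold XB; rw [conjTranspose_smul, conjTranspose_add, pj_conj, pj_conj]
    simp [add_comm]
  · unfold XB; rw [sst_smul, sst_add, pj_sst, pj_sst, ← smul_neg]; congr 1; abel

lemma trace_pj (A Y : Matrix (Fin n ⊕ Fin n) (Fin n ⊕ Fin n) ℂ) :
    trace (pj Y * A) = trace (Y * pj A) := by
  unfold pj
  rw [sub_mul, mul_sub, trace_sub, trace_sub, ← trace_sst (sst Y * A), sst_mul, sst_sst,
    trace_mul_comm (sst A)]

lemma sum_gen (β : LinearMap.BilinMap ℂ (Matrix (Fin n ⊕ Fin n) (Fin n ⊕ Fin n) ℂ) ℂ) :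
    ∑ p, ∑ q, (β (XA p q) (XA p q) + β (XB p q) (XB p q)) =
      -4 * ∑ p, ∑ q, β (pj (single p q 1)) (pj (single q p 1)) := by
  have h : ∀ p q : Fin n ⊕ Fin n, β (XA p q) (XA p q) + β (XB p q) (XB p q) =
    -2 * β (pj (single p q 1)) (pj (single q p 1)) -
      2 * β (pj (single q p 1)) (pj (single p q 1)) := by
    intro p q
    unfold XA XB
    simp only [map_sub, map_add, map_smul, LinearMap.sub_apply, LinearMap.add_apply,
      LinearMap.smul_apply, smul_eq_mul]
    ring_nf
    simp only [Complex.I_sq]; ring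
  simp only [h, Finset.sum_sub_distrib, ← Finset.mul_sum]
  rw [Finset.sum_comm (f := fun p q => β (pj (single q p 1)) (pj (single p q 1)))]
  ring

lemma trace_single_mul' (p q : Fin n ⊕ Fin n) (A : Matrix (Fin n ⊕ Fin n) (Fin n ⊕ Fin n) ℂ) :
    trace (single p q 1 * A) = A q p := by
  rw [trace_single_mul]; simp

lemma trace_ss (p q r s : Fin n ⊕ Fin n) (A B : Matrix (Fin n ⊕ Fin n) (Fin n ⊕ Fin n) ℂ) :
    trace (single p q 1 * A * single r s 1 * B) = A q r * B s p := by
  rw [mul_assoc, mul_assoc, trace_single_mul', mul_apply,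
    Finset.sum_eq_single r]
  · simp [single_mul_apply_same]
  · intro b _ hb
    simp [single_mul_apply_of_ne _ _ _ _ _ hb]
  · simp

lemma sst_single (p q : Fin n ⊕ Fin n) :
    sst (single p q (1:ℂ)) = -(J (Fin n) ℂ * single q p 1 * J (Fin n) ℂ) := by
  unfold sst; rw [transpose_single]

lemma cas_T1 (C D : Matrix (Fin n ⊕ Fin n) (Fin n ⊕ Fin n) ℂ) :
    ∑ p, ∑ q, trace (single p q 1 * C * single q p 1 * D) = trace C * trace D := by
  simp only [trace_ss]
  rw [Finset.sum_comm]
  simp only [trace, diag, Finset.sum_mul_sum]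

lemma cas_T2 (C D : Matrix (Fin n ⊕ Fin n) (Fin n ⊕ Fin n) ℂ) :
    ∑ p, ∑ q, trace (single p q 1 * C * sst (single q p 1) * D) = - trace (C * sst D) := by
  have h : ∀ p q : Fin n ⊕ Fin n, trace (single p q 1 * C * sst (single q p 1) * D) =
      - ((C * J (Fin n) ℂ) q p * (J (Fin n) ℂ * D) q p) := by
    intro p q
    rw [sst_single, ← trace_ss p q p q, ← trace_neg]
    congr 1
    noncomm_ring
  simp only [h, Finset.sum_neg_distrib]
  congr 1
  have h2 : C * sst D = C * J (Fin n) ℂ * (J (Fin n) ℂ * D)ᵀ := by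
    unfold sst; rw [transpose_mul, J_transpose]; noncomm_ring
  rw [h2, trace, Finset.sum_comm]
  apply Finset.sum_congr rfl
  intro p _
  rw [diag_apply, mul_apply]
  rfl

lemma cas_T3 (C D : Matrix (Fin n ⊕ Fin n) (Fin n ⊕ Fin n) ℂ) :
    ∑ p, ∑ q, trace (sst (single p q 1) * C * single q p 1 * D) = - trace (C * sst D) := by
  have h : ∀ p q : Fin n ⊕ Fin n, trace (sst (single p q 1) * C * single q p 1 * D) =
      trace (single q p 1 * D * sst (single p q 1) * C) := by
    intro p q
    rw [mul_assoc, trace_mul_comm]; congr 1; noncomm_ring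
  simp only [h]
  rw [Finset.sum_comm, cas_T2, ← trace_sst (D * sst C), sst_mul, sst_sst]

lemma cas_T4 (C D : Matrix (Fin n ⊕ Fin n) (Fin n ⊕ Fin n) ℂ) :
    ∑ p, ∑ q, trace (sst (single p q 1) * C * sst (single q p 1) * D) = trace C * trace D := by
  have h : ∀ p q : Fin n ⊕ Fin n, trace (sst (single p q 1) * C * sst (single q p 1) * D) =
      trace (single p q 1 * sst D * single q p 1 * sst C) := by
    intro p q
    rw [← trace_sst, sst_mul, sst_mul, sst_mul, sst_sst, sst_sst, ← mul_assoc, ← mul_assoc,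
      trace_mul_comm]
    congr 1; noncomm_ring
  simp only [h]
  rw [cas_T1, trace_sst, trace_sst, mul_comm]

noncomputable def bil1 (C D : Matrix (Fin n ⊕ Fin n) (Fin n ⊕ Fin n) ℂ) :
    LinearMap.BilinMap ℂ (Matrix (Fin n ⊕ Fin n) (Fin n ⊕ Fin n) ℂ) ℂ :=
  LinearMap.mk₂ ℂ (fun Y Y' => trace (Y * C) * trace (Y' * D))
    (by intros; simp only [add_mul, trace_add]) (by intros; simp [mul_assoc])
    (by intros; simp only [add_mul, trace_add, mul_add]) (by intros; simp; ring)

noncomputable def bil2 (C D : Matrix (Fin n ⊕ Fin n) (Fin n ⊕ Fin n) ℂ) :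
    LinearMap.BilinMap ℂ (Matrix (Fin n ⊕ Fin n) (Fin n ⊕ Fin n) ℂ) ℂ :=
  LinearMap.mk₂ ℂ (fun Y Y' => trace (Y * C * Y' * D))
    (by intros; simp only [add_mul, trace_add]) (by intros; simp)
    (by intros; simp only [add_mul, trace_add, mul_add]) (by intros; simp)

lemma cas1 (M : USp n) (k l : ℕ) :
    ∑ p, ∑ q, (trace (XA p q * mt M ^ l) * trace (XA p q * mt M ^ k) +
      trace (XB p q * mt M ^ l) * trace (XB p q * mt M ^ k)) =
      ((8 * (pt M (dd k l) - pt M (k + l)) : ℝ) : ℂ) := by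
  have h := sum_gen (bil1 (mt M ^ l) (mt M ^ k))
  simp only [bil1, LinearMap.mk₂_apply] at h
  rw [h]
  simp only [trace_pj, trace_single_mul']
  have h1 : ∑ p, ∑ q, pj (mt M ^ l) q p * pj (mt M ^ k) p q =
      trace (pj (mt M ^ l) * pj (mt M ^ k)) := by
    rw [Finset.sum_comm]; simp only [trace, diag, mul_apply]
  have h2 : pj (mt M ^ l) * pj (mt M ^ k) = mt M ^ (l + k) - mt M ^ l * (mt M)ᴴ ^ k
      - (mt M)ᴴ ^ l * mt M ^ k + (mt M)ᴴ ^ (l + k) := by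
    unfold pj; rw [sst_pow, sst_pow, sst_mt]; simp only [pow_add]; noncomm_ring
  rw [h1, h2, trace_add, trace_sub, trace_sub, trace_eq_pt, trace_star_pow,
    trace_mul_comm ((mt M)ᴴ ^ l), trace_pow_star_pow, trace_pow_star_pow]
  have h3 : dd l k = dd k l := by unfold dd; omega
  rw [h3, add_comm l k]; push_cast; ring

lemma cas2 (M : USp n) (i j : ℕ) :
    ∑ p, ∑ q, (trace (XA p q * mt M ^ i * XA p q * mt M ^ j) +
      trace (XB p q * mt M ^ i * XB p q * mt M ^ j)) =
      ((-8 * (pt M i * pt M j + pt M (dd i j)) : ℝ) : ℂ) := by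
  have h := sum_gen (bil2 (mt M ^ i) (mt M ^ j))
  simp only [bil2, LinearMap.mk₂_apply] at h
  rw [h]
  have h1 : ∀ p q : Fin n ⊕ Fin n,
      trace (pj (single p q 1) * mt M ^ i * pj (single q p 1) * mt M ^ j) =
      trace (single p q 1 * mt M ^ i * single q p 1 * mt M ^ j)
      - trace (single p q 1 * mt M ^ i * sst (single q p 1) * mt M ^ j)
      - trace (sst (single p q 1) * mt M ^ i * single q p 1 * mt M ^ j)
      + trace (sst (single p q 1) * mt M ^ i * sst (single q p 1) * mt M ^ j) := by
    intro p q
    rw [← trace_sub, ← trace_sub, ← trace_add]; congr 1; unfold pj; noncomm_ring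
  simp only [h1, Finset.sum_add_distrib, Finset.sum_sub_distrib]
  rw [cas_T1, cas_T2, cas_T3, cas_T4, sst_pow, sst_mt, trace_pow_star_pow, trace_eq_pt,
    trace_eq_pt]
  push_cast; ring

end matrices
end USpCLT


namespace USpCLT

section path
variable {n : ℕ}

lemma exp_mem_unitary {X : Matrix (Fin n ⊕ Fin n) (Fin n ⊕ Fin n) ℂ} (hX : IsLie X) :
    NormedSpace.exp X ∈ Matrix.unitaryGroup (Fin n ⊕ Fin n) ℂ := by
  rw [Matrix.mem_unitaryGroup_iff, star_eq_conjTranspose, ← Matrix.exp_conjTranspose, hX.1,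
    ← Matrix.exp_add_of_commute _ _ (Commute.neg_right (Commute.refl X)), add_neg_cancel,
    NormedSpace.exp_zero]

lemma exp_mem_symplectic {X : Matrix (Fin n ⊕ Fin n) (Fin n ⊕ Fin n) ℂ} (hX : IsLie X) :
    NormedSpace.exp X ∈ Matrix.symplecticGroup (Fin n) ℂ := by
  rw [SymplecticGroup.mem_iff, ← Matrix.exp_transpose]
  have hU : J (Fin n) ℂ * (-J (Fin n) ℂ) = 1 := by rw [mul_neg, JJ, neg_neg]
  have hinv : (J (Fin n) ℂ)⁻¹ = -J (Fin n) ℂ := Matrix.inv_eq_right_inv hU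
  have hunit : IsUnit (J (Fin n) ℂ) := IsUnit.of_mul_eq_one _ hU
  have h := Matrix.exp_conj (J (Fin n) ℂ) Xᵀ hunit
  rw [hinv] at h
  have h2 : J (Fin n) ℂ * Xᵀ * -J (Fin n) ℂ = -X := by
    rw [← hX.2, sst]; noncomm_ring
  rw [h2] at h
  have h3 : J (Fin n) ℂ * NormedSpace.exp Xᵀ = NormedSpace.exp (-X) * J (Fin n) ℂ := by
    rw [h, mul_assoc, neg_mul, JJ, neg_neg, mul_one]
  rw [mul_assoc, h3, ← mul_assoc,
    ← Matrix.exp_add_of_commute _ _ (Commute.neg_right (Commute.refl X)), add_neg_cancel,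
    NormedSpace.exp_zero, one_mul]

lemma IsLie.smul {X : Matrix (Fin n ⊕ Fin n) (Fin n ⊕ Fin n) ℂ} (hX : IsLie X) (t : ℝ) :
    IsLie (t • X) := by
  constructor
  · rw [conjTranspose_smul, hX.1]; simp
  · have : t • X = (t : ℂ) • X := by ext; simp
    rw [this, sst_smul, hX.2, smul_neg]

noncomputable def ex {X : Matrix (Fin n ⊕ Fin n) (Fin n ⊕ Fin n) ℂ} (hX : IsLie X) (t : ℝ) :
    USp n :=
  ⟨⟨NormedSpace.exp (t • X), exp_mem_unitary (hX.smul t)⟩, exp_mem_symplectic (hX.smul t)⟩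

lemma mt_ex {X : Matrix (Fin n ⊕ Fin n) (Fin n ⊕ Fin n) ℂ} (hX : IsLie X) (t : ℝ) :
    mt (ex hX t) = NormedSpace.exp (t • X) := rfl

attribute [local instance] Matrix.linftyOpNormedRing Matrix.linftyOpNormedAlgebra

lemma hasDeriv_mt {X : Matrix (Fin n ⊕ Fin n) (Fin n ⊕ Fin n) ℂ} (hX : IsLie X) (M : USp n)
    (t : ℝ) : HasDerivAt (fun t : ℝ => mt (ex hX t * M)) (X * mt (ex hX t * M)) t := by
  have h := (hasDerivAt_exp_smul_const' X t).mul_const (mt M)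
  rw [mul_assoc] at h
  exact h

lemma hasDeriv_mt_pow {X : Matrix (Fin n ⊕ Fin n) (Fin n ⊕ Fin n) ℂ} (hX : IsLie X) (M : USp n)
    (t : ℝ) (k : ℕ) : HasDerivAt (fun t : ℝ => mt (ex hX t * M) ^ k)
      (∑ i ∈ Finset.range k, mt (ex hX t * M) ^ i * X * mt (ex hX t * M) ^ (k - i)) t := by
  induction k with
  | zero =>
    simp only [pow_zero, Finset.range_zero, Finset.sum_empty]
    exact hasDerivAt_const t _
  | succ k ih =>
    have h := ih.mul (hasDeriv_mt hX M t)
    simp only [pow_succ _ k]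
    refine h.congr_deriv ?_
    rw [Finset.sum_range_succ, Finset.sum_mul]
    congr 1
    · apply Finset.sum_congr rfl
      intro i hi
      have hi := Finset.mem_range.1 hi
      have : k + 1 - i = (k - i) + 1 := by omega
      rw [this, pow_succ]; simp only [mul_assoc]
    · simp [mul_assoc]

/-- the real-linear functional `Re tr (Y * ·)` -/
noncomputable def rtr (Y : Matrix (Fin n ⊕ Fin n) (Fin n ⊕ Fin n) ℂ) :
    Matrix (Fin n ⊕ Fin n) (Fin n ⊕ Fin n) ℂ →ₗ[ℝ] ℝ where
  toFun A := (trace (Y * A)).re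
  map_add' := by intros; simp [mul_add]
  map_smul' := by intros; simp

lemma rtr_apply (Y A : Matrix (Fin n ⊕ Fin n) (Fin n ⊕ Fin n) ℂ) :
    rtr Y A = (trace (Y * A)).re := rfl

lemma hasDeriv_rtr {X : Matrix (Fin n ⊕ Fin n) (Fin n ⊕ Fin n) ℂ} (hX : IsLie X) (M : USp n)
    (Y : Matrix (Fin n ⊕ Fin n) (Fin n ⊕ Fin n) ℂ)
    (t : ℝ) (k : ℕ) : HasDerivAt (fun t : ℝ => rtr Y (mt (ex hX t * M) ^ k))
      (∑ i ∈ Finset.range k, rtr Y (mt (ex hX t * M) ^ i * X * mt (ex hX t * M) ^ (k - i))) t := by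
  have h := (LinearMap.toContinuousLinearMap (rtr Y)).hasFDerivAt.comp_hasDerivAt t
    (hasDeriv_mt_pow hX M t k)
  rw [← map_sum]
  exact h

lemma hasDeriv_pt {X : Matrix (Fin n ⊕ Fin n) (Fin n ⊕ Fin n) ℂ} (hX : IsLie X) (M : USp n)
    (t : ℝ) (k : ℕ) : HasDerivAt (fun t : ℝ => pt (ex hX t * M) k)
      (k * rtr X (mt (ex hX t * M) ^ k)) t := by
  have h := hasDeriv_rtr hX M 1 t k
  simp only [rtr_apply, one_mul] at h
  refine h.congr_deriv ?_
  rw [Finset.sum_congr rfl (g := fun _ => rtr X (mt (ex hX t * M) ^ k))]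
  · simp
  · intro i hi
    have hi := Finset.mem_range.1 hi
    rw [rtr_apply, mul_assoc, trace_mul_comm, mul_assoc, ← pow_add]
    congr 4; omega

end path

section meas
variable {n : ℕ}

instance borelMat : BorelSpace (Matrix (Fin n ⊕ Fin n) (Fin n ⊕ Fin n) ℂ) :=
  inferInstanceAs (BorelSpace ((Fin n ⊕ Fin n) → (Fin n ⊕ Fin n) → ℂ))

instance borelU : BorelSpace (Matrix.unitaryGroup (Fin n ⊕ Fin n) ℂ) :=
  Subtype.borelSpace _

instance borelUSp : BorelSpace (USp n) := Subtype.borelSpace _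

lemma continuous_mt : Continuous (fun M : USp n => mt M) :=
  continuous_subtype_val.comp continuous_subtype_val

instance compactUSp : CompactSpace (USp n) := by
  have hemb : Topology.IsEmbedding (fun M : USp n => mt M) :=
    Topology.IsEmbedding.subtypeVal.comp Topology.IsEmbedding.subtypeVal
  have hr : Set.range (fun M : USp n => mt M) =
      {A | A * star A = 1} ∩ {A | A * J (Fin n) ℂ * Aᵀ = J (Fin n) ℂ} := by
    ext A
    constructor
    · rintro ⟨M, rfl⟩
      exact ⟨Matrix.mem_unitaryGroup_iff.1 M.1.2, SymplecticGroup.mem_iff.1 M.2⟩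
    · rintro ⟨h1, h2⟩
      exact ⟨⟨⟨A, Matrix.mem_unitaryGroup_iff.2 h1⟩, SymplecticGroup.mem_iff.2 h2⟩, rfl⟩
  have hcl : IsClosed (Set.range (fun M : USp n => mt M)) := by
    rw [hr]
    apply IsClosed.inter
    · exact isClosed_eq (by fun_prop) continuous_const
    · exact isClosed_eq (by fun_prop) continuous_const
  have hK : IsCompact (Set.univ.pi fun _ : Fin n ⊕ Fin n => Set.univ.pi
      fun _ : Fin n ⊕ Fin n => Metric.closedBall (0:ℂ) 1) :=
    isCompact_univ_pi fun _ => isCompact_univ_pi fun _ => isCompact_closedBall _ _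
  have hc : IsCompact (Set.range (fun M : USp n => mt M)) := by
    refine IsCompact.of_isClosed_subset hK hcl ?_
    rintro _ ⟨M, rfl⟩
    intro i _ j _
    simpa using entry_norm_bound_of_unitary M.1.2 i j
  rw [← isCompact_univ_iff, hemb.isCompact_iff, Set.image_univ]
  exact hc

end meas
end USpCLT


namespace USpCLT

section ibp
variable {n : ℕ}

lemma continuous_rtr (Y : Matrix (Fin n ⊕ Fin n) (Fin n ⊕ Fin n) ℂ) : Continuous (rtr Y) := by
  have : (rtr Y : Matrix (Fin n ⊕ Fin n) (Fin n ⊕ Fin n) ℂ → ℝ) = fun A => (trace (Y * A)).re := rfl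
  rw [this]; fun_prop

lemma continuous_pt (k : ℕ) : Continuous (fun M : USp n => pt M k) := by
  unfold pt
  have := continuous_mt (n := n)
  fun_prop

lemma integrable_cont (μ : Measure (USp n)) [IsProbabilityMeasure μ] {f : USp n → ℝ}
    (hf : Continuous f) : Integrable f μ := by
  have := hf.continuousOn.integrableOn_compact (μ := μ) isCompact_univ
  exact integrableOn_univ.1 this

/-- invariance gives vanishing integral of a directional derivative -/
lemma integral_deriv_zero (μ : Measure (USp n)) [IsProbabilityMeasure μ] [μ.IsMulLeftInvariant]
    {X : Matrix (Fin n ⊕ Fin n) (Fin n ⊕ Fin n) ℂ} (hX : IsLie X) (f f' : USp n → ℝ)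
    (hf : Continuous f) (hf' : Continuous f')
    (hd : ∀ M t, HasDerivAt (fun t => f (ex hX t * M)) (f' (ex hX t * M)) t) :
    ∫ M, f' M ∂μ = 0 := by
  obtain ⟨B, hB⟩ : ∃ B, ∀ M, ‖f' M‖ ≤ B := by
    obtain ⟨B, hB⟩ := isCompact_univ.exists_bound_of_continuousOn (f := f') hf'.continuousOn
    exact ⟨B, fun M => hB M (Set.mem_univ _)⟩
  have hm : ∀ t, Continuous (fun M => ex hX t * M) := fun t => continuous_const.mul continuous_id
  have key := hasDerivAt_integral_of_dominated_loc_of_deriv_le (μ := μ) (𝕜 := ℝ)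
    (F := fun t M => f (ex hX t * M)) (F' := fun t M => f' (ex hX t * M)) (x₀ := (0:ℝ))
    (s := Set.univ) (bound := fun _ => B) Filter.univ_mem
    (Filter.Eventually.of_forall fun t => (hf.comp (hm t)).aestronglyMeasurable)
    (integrable_cont μ (hf.comp (hm 0)))
    ((hf'.comp (hm 0)).aestronglyMeasurable)
    (Filter.Eventually.of_forall fun M t _ => hB _)
    (integrable_const _)
    (Filter.Eventually.of_forall fun M t _ => hd M t)
  have h1 := key.2
  simp only [integral_mul_left_eq_self f, integral_mul_left_eq_self f'] at h1
  exact h1.unique (hasDerivAt_const _ _)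

lemma ibp_single (μ : Measure (USp n)) [IsProbabilityMeasure μ] [μ.IsMulLeftInvariant]
    (u : USp n → ℝ) (S : Finset ℕ) (v : ℕ → USp n → ℝ) (hu : Continuous u)
    (hv : ∀ l, Continuous (v l))
    (hd : ∀ X (hX : IsLie X) (M : USp n) (t : ℝ), HasDerivAt (fun t => u (ex hX t * M))
      (∑ l ∈ S, v l (ex hX t * M) * (l * rtr X (mt (ex hX t * M) ^ l))) t) (k : ℕ)
    (X : Matrix (Fin n ⊕ Fin n) (Fin n ⊕ Fin n) ℂ) (hX : IsLie X) :
    ∫ M, ((∑ l ∈ S, v l M * (l * rtr X (mt M ^ l))) * rtr X (mt M ^ k)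
      + u M * ∑ i ∈ Finset.range k, rtr X (mt M ^ i * X * mt M ^ (k - i))) ∂μ = 0 := by
  have := continuous_mt (n := n)
  have hr := continuous_rtr X
  refine integral_deriv_zero μ hX (fun M => u M * rtr X (mt M ^ k)) _ ?_ ?_ ?_
  · fun_prop
  · fun_prop
  · intro M t
    exact (hd X hX M t).mul (hasDeriv_rtr hX M X t k)

lemma rtr_mul_eq {X : Matrix (Fin n ⊕ Fin n) (Fin n ⊕ Fin n) ℂ} (hX : IsLie X) (M : USp n)
    (k l : ℕ) : rtr X (mt M ^ l) * rtr X (mt M ^ k) =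
      (trace (X * mt M ^ l) * trace (X * mt M ^ k)).re := by
  rw [trace_lie_real hX M k, trace_lie_real hX M l, ← Complex.ofReal_mul, Complex.ofReal_re]
  rfl

lemma cas1_re (M : USp n) (k l : ℕ) :
    ∑ p, ∑ q, (rtr (XA p q) (mt M ^ l) * rtr (XA p q) (mt M ^ k) +
      rtr (XB p q) (mt M ^ l) * rtr (XB p q) (mt M ^ k)) =
      8 * (pt M (dd k l) - pt M (k + l)) := by
  have h := congrArg Complex.re (cas1 M k l)
  rw [Complex.ofReal_re] at h
  rw [← h]
  simp only [Complex.re_sum, Complex.add_re, rtr_mul_eq (XA_lie _ _), rtr_mul_eq (XB_lie _ _)]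

lemma cas2_re (M : USp n) (i j : ℕ) :
    ∑ p, ∑ q, (rtr (XA p q) (mt M ^ i * XA p q * mt M ^ j) +
      rtr (XB p q) (mt M ^ i * XB p q * mt M ^ j)) =
      -8 * (pt M i * pt M j + pt M (dd i j)) := by
  have h := congrArg Complex.re (cas2 M i j)
  rw [Complex.ofReal_re] at h
  rw [← h]
  simp only [Complex.re_sum, Complex.add_re, rtr_apply, ← mul_assoc]

/-- loop equation -/
lemma ibp (μ : Measure (USp n)) [IsProbabilityMeasure μ] [μ.IsMulLeftInvariant]
    (u : USp n → ℝ) (S : Finset ℕ) (v : ℕ → USp n → ℝ) (hu : Continuous u)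
    (hv : ∀ l, Continuous (v l))
    (hd : ∀ X (hX : IsLie X) (M : USp n) (t : ℝ), HasDerivAt (fun t => u (ex hX t * M))
      (∑ l ∈ S, v l (ex hX t * M) * (l * rtr X (mt (ex hX t * M) ^ l))) t) (k : ℕ) :
    ∫ M, u M * ∑ i ∈ Finset.range k, (pt M i * pt M (k - i) + pt M (dd k (2 * i))) ∂μ =
    ∫ M, ∑ l ∈ S, l * v l M * (pt M (dd k l) - pt M (k + l)) ∂μ := by
  have hmt := continuous_mt (n := n)
  have hpt := continuous_pt (n := n)
  have hr := fun X => continuous_rtr (n := n) X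
  set f : Matrix (Fin n ⊕ Fin n) (Fin n ⊕ Fin n) ℂ → USp n → ℝ := fun X M =>
    ((∑ l ∈ S, v l M * (l * rtr X (mt M ^ l))) * rtr X (mt M ^ k)
      + u M * ∑ i ∈ Finset.range k, rtr X (mt M ^ i * X * mt M ^ (k - i))) with hf
  have hfint : ∀ X, Integrable (f X) μ := fun X => integrable_cont μ (by
    have := hr X
    simp only [hf]; fun_prop)
  have hfint2 : ∀ X Y, Integrable (fun M => f X M + f Y M) μ := fun X Y => (hfint X).add (hfint Y)
  have h0 : ∫ M, ∑ p, ∑ q, (f (XA p q) M + f (XB p q) M) ∂μ = 0 := by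
    rw [integral_finsetSum _ (fun p _ => integrable_finsetSum _ fun q _ =>
      hfint2 _ _)]
    apply Finset.sum_eq_zero; intro p _
    rw [integral_finsetSum _ (fun q _ => hfint2 _ _)]
    apply Finset.sum_eq_zero; intro q _
    rw [integral_add (hfint _) (hfint _), ibp_single μ u S v hu hv hd k _ (XA_lie p q),
      ibp_single μ u S v hu hv hd k _ (XB_lie p q), add_zero]
  have hpoint : ∀ M, ∑ p, ∑ q, (f (XA p q) M + f (XB p q) M) =
      8 * ((∑ l ∈ S, l * v l M * (pt M (dd k l) - pt M (k + l))) -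
      u M * ∑ i ∈ Finset.range k, (pt M i * pt M (k - i) + pt M (dd k (2 * i)))) := by
    intro M
    have e1 : ∀ p q : Fin n ⊕ Fin n, f (XA p q) M + f (XB p q) M =
      (∑ l ∈ S, v l M * l * (rtr (XA p q) (mt M ^ l) * rtr (XA p q) (mt M ^ k) +
        rtr (XB p q) (mt M ^ l) * rtr (XB p q) (mt M ^ k)))
      + ∑ i ∈ Finset.range k, u M * (rtr (XA p q) (mt M ^ i * XA p q * mt M ^ (k - i)) +
        rtr (XB p q) (mt M ^ i * XB p q * mt M ^ (k - i))) := by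
      intro p q
      simp only [hf, mul_add, Finset.sum_add_distrib, ← Finset.mul_sum, Finset.sum_mul]
      simp only [mul_assoc]; ring
    have e0 : ∀ A B : (Fin n ⊕ Fin n) → (Fin n ⊕ Fin n) → ℝ, ∑ p, ∑ q, (A p q + B p q) =
        ∑ p, ∑ q, A p q + ∑ p, ∑ q, B p q := by
      intro A B; simp only [Finset.sum_add_distrib]
    simp only [e1]
    rw [e0]
    have e2 : ∑ p, ∑ q, ∑ l ∈ S, v l M * l * (rtr (XA p q) (mt M ^ l) * rtr (XA p q) (mt M ^ k) +
        rtr (XB p q) (mt M ^ l) * rtr (XB p q) (mt M ^ k)) =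
        ∑ l ∈ S, v l M * l * (8 * (pt M (dd k l) - pt M (k + l))) := by
      simp only [Finset.sum_comm (t := S)]
      apply Finset.sum_congr rfl; intro l _
      rw [← cas1_re]; simp only [Finset.mul_sum]
    have e3 : ∑ p, ∑ q, ∑ i ∈ Finset.range k,
        u M * (rtr (XA p q) (mt M ^ i * XA p q * mt M ^ (k - i)) +
        rtr (XB p q) (mt M ^ i * XB p q * mt M ^ (k - i))) =
        ∑ i ∈ Finset.range k, u M * (-8 * (pt M i * pt M (k - i) + pt M (dd k (2 * i)))) := by
      simp only [Finset.sum_comm (t := Finset.range k)]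
      apply Finset.sum_congr rfl; intro i hi
      have hi := Finset.mem_range.1 hi
      have : dd k (2 * i) = dd i (k - i) := by unfold dd; omega
      rw [this, ← cas2_re]; simp only [Finset.mul_sum]
    rw [e2, e3, mul_sub, Finset.mul_sum, Finset.mul_sum, Finset.mul_sum, sub_eq_add_neg,
      ← Finset.sum_neg_distrib]
    congr 1
    · apply Finset.sum_congr rfl; intros; ring
    · apply Finset.sum_congr rfl; intros; ring
  simp only [hpoint] at h0
  rw [integral_const_mul, integral_sub] at h0
  · linarith
  · exact integrable_cont μ (by fun_prop)
  · exact integrable_cont μ (by fun_prop)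

end ibp

section moments
variable {n : ℕ}

/-- evaluation point -/
noncomputable def ev (M : USp n) : ℕ → ℝ := fun k => pt M k + eta k

lemma continuous_eval (F : MvPolynomial ℕ ℝ) :
    Continuous (fun M : USp n => MvPolynomial.eval (ev M) F) := by
  have hpt := continuous_pt (n := n)
  induction F using MvPolynomial.induction_on with
  | C a => simpa using continuous_const
  | add p q hp hq => simp only [map_add]; exact hp.add hq
  | mul_X p i hp =>
    simp only [map_mul, MvPolynomial.eval_X, ev]
    exact hp.mul ((hpt i).add continuous_const)

lemma eval_PP (M : USp n) (k : ℕ) : MvPolynomial.eval (ev M) (PP n k) = pt M k := by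
  unfold PP
  split_ifs with h
  · subst h; rw [pt_zero]; simp
  · simp [ev]

noncomputable def En (μ : Measure (USp n)) [IsProbabilityMeasure μ] :
    MvPolynomial ℕ ℝ →ₗ[ℝ] ℝ where
  toFun F := ∫ M, MvPolynomial.eval (ev M) F ∂μ
  map_add' F G := by
    simp only [map_add]
    exact integral_add (integrable_cont μ (continuous_eval F)) (integrable_cont μ (continuous_eval G))
  map_smul' c F := by
    simp [MvPolynomial.smul_eval, integral_const_mul]

lemma En_apply (μ : Measure (USp n)) [IsProbabilityMeasure μ] (F : MvPolynomial ℕ ℝ) :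
    En μ F = ∫ M, MvPolynomial.eval (ev M) F ∂μ := rfl

lemma hasDeriv_eval (F : MvPolynomial ℕ ℝ) (N : ℕ) (hN : ∀ i ∈ F.vars, i < N)
    (x : ℝ → ℕ → ℝ) (x' : ℕ → ℝ) (t : ℝ)
    (hx : ∀ l, HasDerivAt (fun t => x t l) (x' l) t) :
    HasDerivAt (fun t => MvPolynomial.eval (x t) F)
      (∑ l ∈ Finset.range N, MvPolynomial.eval (x t) (MvPolynomial.pderiv l F) * x' l) t := by
  have h1 : ∀ G : MvPolynomial ℕ ℝ, HasDerivAt (fun t => MvPolynomial.eval (x t) G)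
      (MvPolynomial.eval (x t) (MvPolynomial.mkDerivation ℝ
        (fun l => (MvPolynomial.C (x' l) : MvPolynomial ℕ ℝ)) G)) t := by
    intro G
    induction G using MvPolynomial.induction_on with
    | C a => simpa using hasDerivAt_const t a
    | add p q hp hq => simp only [map_add]; exact hp.add hq
    | mul_X p i hp =>
      have := hp.mul (hx i)
      simp only [map_mul, MvPolynomial.eval_X]
      refine this.congr_deriv ?_
      rw [Derivation.leibniz, MvPolynomial.mkDerivation_X]
      simp; ring
  refine (h1 F).congr_deriv ?_
  have : MvPolynomial.mkDerivation ℝ (fun l => (MvPolynomial.C (x' l) : MvPolynomial ℕ ℝ)) F =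
    (∑ l ∈ Finset.range N, (MvPolynomial.C (x' l) : MvPolynomial ℕ ℝ) •
      MvPolynomial.pderiv (R := ℝ) l) F := by
    apply MvPolynomial.derivation_eq_of_forall_mem_vars
    intro i hi
    rw [MvPolynomial.mkDerivation_X, deriv_sum_apply, Finset.sum_eq_single i]
    · simp
    · intro b _ hb
      rw [Derivation.smul_apply, MvPolynomial.pderiv_X_of_ne hb.symm, smul_zero]
    · intro h; exact absurd (Finset.mem_range.2 (hN i hi)) h
  rw [this, deriv_sum_apply, map_sum]
  apply Finset.sum_congr rfl
  intro l _
  simp; ring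

lemma En_SD (μ : Measure (USp n)) [IsProbabilityMeasure μ] [μ.IsMulLeftInvariant]
    (k : ℕ) (F : MvPolynomial ℕ ℝ) : En μ (lk n k * F) = En μ (dK n k F) := by
  obtain ⟨K, hK⟩ : ∃ K, ∀ i ∈ F.vars, i < K := ⟨F.vars.sup id + 1, fun i hi =>
    Nat.lt_succ_of_le (Finset.le_sup (f := id) hi)⟩
  have h := ibp μ (fun M => MvPolynomial.eval (ev M) F) (Finset.range K)
    (fun l M => MvPolynomial.eval (ev M) (MvPolynomial.pderiv l F)) (continuous_eval F)
    (fun l => continuous_eval _) (fun X hX M t => hasDeriv_eval F K hK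
      (fun t => ev (ex hX t * M)) _ t (fun l => (hasDeriv_pt hX M t l).add_const (eta l))) k
  rw [En_apply, En_apply, dK_eq n k K F hK]
  simp only [lk, map_mul, map_sum, map_add, eval_PP, MvPolynomial.smul_eval, map_sub]
  simp only [mul_comm _ (MvPolynomial.eval _ F)]
  rw [h]
  congr 1; ext M
  apply Finset.sum_congr rfl
  intro l _; ring

lemma En_eq (μ : Measure (USp n)) [IsProbabilityMeasure μ] [μ.IsMulLeftInvariant]
    (s : Multiset ℕ) (hs : ∀ i ∈ s, 0 < i) (hN : s.sum ≤ 2 * n) :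
    ∫ M, (s.map (pt M)).prod ∂μ = gE (QQ n s) := by
  rw [← eq_gE n (En μ) (by simp [En_apply]) (fun k _ F => En_SD μ k F) s hs hN, En_apply]
  congr 1; ext M
  rw [QQ, map_multiset_prod, Multiset.map_map]
  congr 1
  apply Multiset.map_congr rfl
  intro i _
  simp [eval_PP]

end moments
end USpCLT


namespace USpCLT
section stein

noncomputable def gd (t : ℝ) : ℝ := Real.exp (-t ^ 2 / 2)

lemma gd_pos (t : ℝ) : 0 < gd t := Real.exp_pos _

lemma gd_cont : Continuous gd := by unfold gd; fun_prop

lemma gd_int : Integrable gd := by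
  have := integrable_exp_neg_mul_sq (b := 1 / 2) (by norm_num)
  refine this.congr (Filter.Eventually.of_forall fun t => ?_)
  simp only [gd]; congr 1; ring

lemma gd_integral : ∫ t, gd t = Real.sqrt (2 * Real.pi) := by
  have := integral_gaussian (1 / 2)
  rw [show Real.pi / (1 / 2) = 2 * Real.pi by ring] at this
  rw [← this]; congr 1; ext t; simp only [gd]; congr 1; ring

lemma gd_neg (t : ℝ) : gd (-t) = gd t := by simp [gd]

lemma gd_deriv (t : ℝ) : HasDerivAt gd (-t * gd t) t := by
  unfold gd
  have h1 : HasDerivAt (fun t : ℝ => -t ^ 2 / 2) (-t) t := by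
    have := ((hasDerivAt_pow 2 t).neg.div_const 2)
    refine this.congr_deriv ?_
    simp; ring
  refine h1.exp.congr_deriv ?_
  ring

lemma gd_id_int : Integrable (fun t => t * gd t) := by
  have := integrable_mul_exp_neg_mul_sq (b := 1 / 2) (by norm_num)
  refine this.congr (Filter.Eventually.of_forall fun t => ?_)
  simp only [gd]; congr 2; ring

lemma gd_tendsto : Filter.Tendsto gd Filter.atTop (nhds 0) := by
  unfold gd
  apply Real.tendsto_exp_atBot.comp
  have : Filter.Tendsto (fun t : ℝ => t ^ 2) Filter.atTop Filter.atTop :=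
    Filter.tendsto_pow_atTop two_ne_zero
  have h2 := (Filter.tendsto_neg_atTop_atBot.comp this).atBot_div_const (r := 2) (by norm_num)
  exact h2

lemma mills_pos (x : ℝ) : x * ∫ t in Set.Ioi x, gd t ≤ gd x := by
  have h1 : ∫ t in Set.Ioi x, t * gd t = gd x := by
    have := integral_Ioi_of_hasDerivAt_of_tendsto' (f := fun t => - gd t) (f' := fun t => t * gd t)
      (a := x) (m := 0) (fun t _ => (gd_deriv t).neg.congr_deriv (by ring))
      gd_id_int.integrableOn (by simpa using gd_tendsto.neg)
    rw [this]; ring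
  rw [← h1, ← integral_const_mul]
  apply setIntegral_mono_on (gd_int.const_mul x).integrableOn gd_id_int.integrableOn
    measurableSet_Ioi
  intro t ht
  exact mul_le_mul_of_nonneg_right (le_of_lt ht) (gd_pos t).le

lemma mills_neg (x : ℝ) : -x * ∫ t in Set.Iic x, gd t ≤ gd x := by
  have := integral_comp_neg_Iic x gd
  simp only [gd_neg] at this
  rw [this, ← gd_neg x]
  exact mills_pos (-x)

noncomputable def Kst : ℝ := 1 + Real.exp (1 / 2) * Real.sqrt (2 * Real.pi)

/-- Gaussian mean -/
noncomputable def gm (h : ℝ → ℝ) : ℝ := (Real.sqrt (2 * Real.pi))⁻¹ * ∫ t, h t * gd t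

lemma sq_pos' : 0 < Real.sqrt (2 * Real.pi) := Real.sqrt_pos.2 (by positivity)

lemma hgd_int {h : ℝ → ℝ} (hc : Continuous h) (h0 : ∀ x, 0 ≤ h x) (h1 : ∀ x, h x ≤ 1) :
    Integrable (fun t => h t * gd t) := by
  refine gd_int.mono' (hc.mul gd_cont).aestronglyMeasurable
    (Filter.Eventually.of_forall fun t => ?_)
  rw [Real.norm_eq_abs, abs_of_nonneg (mul_nonneg (h0 t) (gd_pos t).le)]
  exact mul_le_of_le_one_left (gd_pos t).le (h1 t)

lemma gm_mem {h : ℝ → ℝ} (hc : Continuous h) (h0 : ∀ x, 0 ≤ h x) (h1 : ∀ x, h x ≤ 1) :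
    0 ≤ gm h ∧ gm h ≤ 1 := by
  have hs := sq_pos'
  constructor
  · exact mul_nonneg (inv_nonneg.2 hs.le)
      (integral_nonneg fun t => mul_nonneg (h0 t) (gd_pos t).le)
  · have : ∫ t, h t * gd t ≤ ∫ t, gd t := integral_mono (hgd_int hc h0 h1) gd_int
      (fun t => mul_le_of_le_one_left (gd_pos t).le (h1 t))
    rw [gd_integral] at this
    unfold gm
    rw [inv_mul_le_iff₀ hs]; simpa using this

lemma stein_exists {h : ℝ → ℝ} (hc : Continuous h) (h0 : ∀ x, 0 ≤ h x) (h1 : ∀ x, h x ≤ 1) :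
    ∃ g g' : ℝ → ℝ, Continuous g' ∧ (∀ x, HasDerivAt g (g' x) x) ∧ (∀ x, |g x| ≤ Kst) ∧
      (∀ x, |g' x| ≤ 2) ∧ ∀ x, g' x - x * g x = h x - gm h := by
  obtain ⟨c0, c1⟩ := gm_mem hc h0 h1
  set c := gm h with hcdef
  set f : ℝ → ℝ := fun t => (h t - c) * gd t with hf
  have fc : Continuous f := (hc.sub continuous_const).mul gd_cont
  have fle : ∀ t, |f t| ≤ gd t := by
    intro t
    simp only [hf, abs_mul, abs_of_pos (gd_pos t)]
    apply mul_le_of_le_one_left (gd_pos t).le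
    rw [abs_le]; constructor <;> linarith [h0 t, h1 t]
  have fint : Integrable f := gd_int.mono' fc.aestronglyMeasurable
    (Filter.Eventually.of_forall fle)
  have f0 : ∫ t, f t = 0 := by
    simp only [hf, sub_mul]
    rw [integral_sub (hgd_int hc h0 h1) (gd_int.const_mul c), integral_const_mul, gd_integral,
      hcdef, gm]
    field_simp [sq_pos'.ne']
    simp
  set F : ℝ → ℝ := fun x => ∫ t in Set.Iic x, f t with hF
  have Fd : ∀ x, HasDerivAt F (f x) x := by
    intro x
    have e : F = fun y => F 0 + ∫ t in (0:ℝ)..y, f t := by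
      ext y
      rw [← intervalIntegral.integral_Iic_sub_Iic fint.integrableOn fint.integrableOn]
      ring
    rw [e]
    exact (intervalIntegral.integral_hasDerivAt_right (fc.intervalIntegrable _ _)
      fc.stronglyMeasurable.stronglyMeasurableAtFilter fc.continuousAt).const_add _
  have B1 : ∀ s, MeasurableSet s → |∫ t in s, f t| ≤ ∫ t in s, gd t := by
    intro s hs
    rw [← Real.norm_eq_abs]
    exact norm_integral_le_of_norm_le gd_int.integrableOn (Filter.Eventually.of_forall fle)
  have F1 : ∀ x, |F x| ≤ ∫ t in Set.Iic x, gd t := fun x => B1 _ measurableSet_Iic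
  have F2 : ∀ x, |F x| ≤ ∫ t in Set.Ioi x, gd t := by
    intro x
    have e : F x = - ∫ t in Set.Ioi x, f t := by
      have := integral_add_compl (μ := volume) (s := Set.Iic x) measurableSet_Iic fint
      rw [Set.compl_Iic, f0] at this
      simp only [hF]; linarith
    rw [e, abs_neg]; exact B1 _ measurableSet_Ioi
  have F3 : ∀ x, |x| * |F x| ≤ gd x := by
    intro x
    rcases le_total 0 x with hx | hx
    · rw [abs_of_nonneg hx]
      exact (mul_le_mul_of_nonneg_left (F2 x) hx).trans (mills_pos x)
    · rw [abs_of_nonpos hx]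
      exact (mul_le_mul_of_nonneg_left (F1 x) (by linarith)).trans (mills_neg x)
  have F4 : ∀ x, |F x| ≤ Real.sqrt (2 * Real.pi) := by
    intro x
    rw [← gd_integral]
    exact (F1 x).trans (setIntegral_le_integral gd_int
      (Filter.Eventually.of_forall fun t => (gd_pos t).le))
  have X1 : ∀ x, |x| * |F x / gd x| ≤ 1 := by
    intro x
    rw [abs_div, abs_of_pos (gd_pos x), ← mul_div_assoc, div_le_one (gd_pos x)]
    exact F3 x
  have gcont : ∀ x, HasDerivAt (fun x => F x / gd x) (x * (F x / gd x) + (h x - c)) x := by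
    intro x
    refine ((Fd x).div (gd_deriv x) (gd_pos x).ne').congr_deriv ?_
    have := (gd_pos x).ne'
    simp only [hf]
    field_simp
    ring
  refine ⟨fun x => F x / gd x, fun x => x * (F x / gd x) + (h x - c), ?_, gcont, ?_, ?_, ?_⟩
  · have : Continuous (fun x => F x / gd x) :=
      continuous_iff_continuousAt.2 fun x => (gcont x).continuousAt
    fun_prop
  · intro x
    have hx1 := X1 x
    rcases le_total 1 |x| with hx | hx
    · have : |F x / gd x| ≤ |x| * |F x / gd x| := le_mul_of_one_le_left (abs_nonneg _) hx
      have : 0 ≤ Real.exp (1 / 2) * Real.sqrt (2 * Real.pi) := by positivity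
      unfold Kst; linarith
    · have e : F x / gd x = Real.exp (x ^ 2 / 2) * F x := by
        rw [gd, neg_div, Real.exp_neg]; field_simp
      have hx2 : x ^ 2 ≤ 1 := by
        rw [← sq_abs]; exact pow_le_one₀ (abs_nonneg _) hx
      change |F x / gd x| ≤ Kst
      rw [e, abs_mul, abs_of_pos (Real.exp_pos _)]
      have : Real.exp (x ^ 2 / 2) * |F x| ≤ Real.exp (1 / 2) * Real.sqrt (2 * Real.pi) :=
        mul_le_mul (Real.exp_le_exp.2 (by linarith)) (F4 x) (abs_nonneg _) (Real.exp_pos _).le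
      unfold Kst; linarith
  · intro x
    have hx1 := X1 x
    rw [← abs_mul] at hx1
    have : |h x - c| ≤ 1 := by rw [abs_le]; constructor <;> linarith [h0 x, h1 x]
    exact (abs_add_le _ _).trans (by linarith)
  · intro x; ring

lemma Phi_eq (a : ℝ) : Phi a = (Real.sqrt (2 * Real.pi))⁻¹ * ∫ t in Set.Iic a, gd t := rfl

lemma Phi_cont : Continuous Phi := by
  have e : Phi = fun y => (Real.sqrt (2 * Real.pi))⁻¹ *
      ((∫ t in Set.Iic 0, gd t) + ∫ t in (0:ℝ)..y, gd t) := by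
    ext y
    rw [← intervalIntegral.integral_Iic_sub_Iic gd_int.integrableOn gd_int.integrableOn, Phi_eq]
    ring
  rw [e]
  have : Continuous fun y => ∫ t in (0:ℝ)..y, gd t :=
    intervalIntegral.continuous_primitive (fun a b => gd_cont.intervalIntegrable a b) 0
  fun_prop

lemma Phi_mem (a : ℝ) : 0 ≤ Phi a ∧ Phi a ≤ 1 := by
  have hs := sq_pos'
  rw [Phi_eq]
  constructor
  · exact mul_nonneg (inv_nonneg.2 hs.le) (integral_nonneg fun t => (gd_pos t).le)
  · rw [inv_mul_le_iff₀ hs, mul_one, ← gd_integral]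
    exact setIntegral_le_integral gd_int (Filter.Eventually.of_forall fun t => (gd_pos t).le)

noncomputable def ramp (a ε : ℝ) (t : ℝ) : ℝ := max 0 (min 1 ((a + ε - t) / ε))

lemma ramp_cont (a ε : ℝ) : Continuous (ramp a ε) := by unfold ramp; fun_prop
lemma ramp_nonneg (a ε t : ℝ) : 0 ≤ ramp a ε t := le_max_left _ _
lemma ramp_le (a ε t : ℝ) : ramp a ε t ≤ 1 := max_le zero_le_one (min_le_left _ _)
lemma ramp_one {a ε t : ℝ} (hε : 0 < ε) (ht : t ≤ a) : ramp a ε t = 1 := by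
  unfold ramp
  have : 1 ≤ (a + ε - t) / ε := by rw [le_div_iff₀ hε]; linarith
  rw [min_eq_left this]; simp
lemma ramp_zero {a ε t : ℝ} (hε : 0 < ε) (ht : a + ε ≤ t) : ramp a ε t = 0 := by
  unfold ramp
  have : (a + ε - t) / ε ≤ 0 := div_nonpos_of_nonpos_of_nonneg (by linarith) hε.le
  exact max_eq_left ((min_le_right _ _).trans this)

lemma gm_ramp_ge {a ε : ℝ} (hε : 0 < ε) : Phi a ≤ gm (ramp a ε) := by
  rw [Phi_eq, gm]
  apply mul_le_mul_of_nonneg_left _ (inv_nonneg.2 sq_pos'.le)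
  rw [← integral_indicator measurableSet_Iic]
  apply integral_mono (gd_int.indicator measurableSet_Iic)
    (hgd_int (ramp_cont a ε) (ramp_nonneg a ε) (ramp_le a ε))
  intro t
  by_cases ht : t ≤ a
  · simp [Set.indicator, ht, ramp_one hε ht]
  · simp only [Set.indicator, Set.mem_Iic, ht, if_false]
    exact mul_nonneg (ramp_nonneg _ _ _) (gd_pos t).le

lemma gm_ramp_le {a ε : ℝ} (hε : 0 < ε) : gm (ramp a ε) ≤ Phi (a + ε) := by
  rw [Phi_eq, gm]
  apply mul_le_mul_of_nonneg_left _ (inv_nonneg.2 sq_pos'.le)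
  rw [← integral_indicator measurableSet_Iic]
  apply integral_mono (hgd_int (ramp_cont a ε) (ramp_nonneg a ε) (ramp_le a ε))
    (gd_int.indicator measurableSet_Iic)
  intro t
  by_cases ht : t ≤ a + ε
  · simp only [Set.indicator, Set.mem_Iic, ht, if_true]
    exact mul_le_of_le_one_left (gd_pos t).le (ramp_le _ _ _)
  · simp [Set.indicator, ht, ramp_zero hε (not_le.1 ht).le]

lemma stein_bound {Ω : Type*} [MeasurableSpace Ω] (μ : Measure Ω) [IsProbabilityMeasure μ]
    (W : Ω → ℝ) (hW : Measurable W) (δ : ℝ)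
    (H : ∀ g g' : ℝ → ℝ, Continuous g' → (∀ x, HasDerivAt g (g' x) x) → (∀ x, |g x| ≤ Kst) →
      (∀ x, |g' x| ≤ 2) → |∫ ω, (g' (W ω) - W ω * g (W ω)) ∂μ| ≤ δ) (x₀ : ℝ) :
    |(μ {ω | W ω ≤ x₀}).toReal - Phi x₀| ≤ δ := by
  have hms : MeasurableSet {ω | W ω ≤ x₀} := hW measurableSet_Iic
  have hri : ∀ a ε, Integrable (fun ω => ramp a ε (W ω)) μ := by
    intro a ε
    refine (integrable_const (1:ℝ)).mono' ((ramp_cont a ε).measurable.comp hW).aestronglyMeasurable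
      (Filter.Eventually.of_forall fun ω => ?_)
    rw [Real.norm_eq_abs, abs_of_nonneg (ramp_nonneg _ _ _)]
    exact ramp_le _ _ _
  have hE : ∀ a ε, |∫ ω, ramp a ε (W ω) ∂μ - gm (ramp a ε)| ≤ δ := by
    intro a ε
    obtain ⟨g, g', c1, c2, c3, c4, c5⟩ := stein_exists (ramp_cont a ε) (ramp_nonneg a ε)
      (ramp_le a ε)
    have := H g g' c1 c2 c3 c4
    simp only [c5] at this
    rw [integral_sub (hri a ε) (integrable_const _)] at this
    simpa using this
  have hP : (μ {ω | W ω ≤ x₀}).toReal = ∫ ω, Set.indicator {ω | W ω ≤ x₀} (fun _ => (1:ℝ)) ω ∂μ := by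
    rw [integral_indicator hms]; simp [Measure.real]
  have hii : Integrable (Set.indicator {ω | W ω ≤ x₀} (fun _ => (1:ℝ))) μ :=
    (integrable_const _).indicator hms
  have up : ∀ ε > 0, (μ {ω | W ω ≤ x₀}).toReal ≤ Phi (x₀ + ε) + δ := by
    intro ε hε
    have h1 : (μ {ω | W ω ≤ x₀}).toReal ≤ ∫ ω, ramp x₀ ε (W ω) ∂μ := by
      rw [hP]
      apply integral_mono hii (hri _ _)
      intro ω
      by_cases hω : W ω ≤ x₀
      · simp [Set.indicator, hω, ramp_one hε hω]
      · simp only [Set.indicator, Set.mem_ofPred_eq, hω, if_false]; exact ramp_nonneg _ _ _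
    have h2 := (abs_le.1 (hE x₀ ε)).2
    have h3 := gm_ramp_le (a := x₀) hε
    linarith
  have lo : ∀ ε > 0, Phi (x₀ - ε) - δ ≤ (μ {ω | W ω ≤ x₀}).toReal := by
    intro ε hε
    have h1 : ∫ ω, ramp (x₀ - ε) ε (W ω) ∂μ ≤ (μ {ω | W ω ≤ x₀}).toReal := by
      rw [hP]
      apply integral_mono (hri _ _) hii
      intro ω
      by_cases hω : W ω ≤ x₀
      · simp only [Set.indicator, Set.mem_ofPred_eq, hω, if_true]; exact ramp_le _ _ _
      · have : ramp (x₀ - ε) ε (W ω) = 0 := ramp_zero hε (by linarith)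
        simp [Set.indicator, hω, this]
    have h2 := (abs_le.1 (hE (x₀ - ε) ε)).1
    have h3 := gm_ramp_ge (a := x₀ - ε) hε
    linarith
  have t1 : Filter.Tendsto (fun ε => Phi (x₀ + ε) + δ) (nhdsWithin 0 (Set.Ioi 0))
      (nhds (Phi x₀ + δ)) := by
    have : Continuous (fun ε => Phi (x₀ + ε) + δ) := by have := Phi_cont; fun_prop
    have := this.tendsto 0
    simp only [add_zero] at this
    exact this.mono_left nhdsWithin_le_nhds
  have t2 : Filter.Tendsto (fun ε => Phi (x₀ - ε) - δ) (nhdsWithin 0 (Set.Ioi 0))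
      (nhds (Phi x₀ - δ)) := by
    have : Continuous (fun ε => Phi (x₀ - ε) - δ) := by have := Phi_cont; fun_prop
    have := this.tendsto 0
    simp only [sub_zero] at this
    exact this.mono_left nhdsWithin_le_nhds
  have u1 := ge_of_tendsto t1 (Filter.eventually_of_mem self_mem_nhdsWithin fun ε hε => up ε hε)
  have u2 := le_of_tendsto t2 (Filter.eventually_of_mem self_mem_nhdsWithin fun ε hε => lo ε hε)
  rw [abs_le]; constructor <;> linarith

end stein
end USpCLT


namespace USpCLT
section final
variable {n : ℕ}

lemma m_two (μ : Measure (USp n)) [IsProbabilityMeasure μ] [μ.IsMulLeftInvariant]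
    {a : ℕ} (ha : 0 < a) (h : a ≤ n) : ∫ M, pt M a ^ 2 ∂μ ≤ a + 1 := by
  have h1 := En_eq μ {a, a} (by simp [ha]) (by simp; omega)
  have h2 : ∀ M : USp n, (Multiset.map (pt M) {a, a}).prod = pt M a ^ 2 := by
    intro M; simp [sq]
  simp only [h2] at h1
  rw [h1]
  have h3 : QQ n {a, a} = PP n a * PP n a := by simp [QQ]
  rw [h3, gE_two ha ha]
  have := eta_nonneg a
  have := eta_le a
  simp only [cv, if_true]
  nlinarith

lemma abs_le_sqrt' (μ : Measure (USp n)) [IsProbabilityMeasure μ] {f : USp n → ℝ}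
    (hf : Continuous f) (c : ℝ) (hc : ∫ M, f M ^ 2 ∂μ ≤ c ^ 2) (hc0 : 0 ≤ c) :
    ∫ M, |f M| ∂μ ≤ c := by
  set m := ∫ M, |f M| ∂μ with hm
  have h0 : 0 ≤ ∫ M, (|f M| - m) ^ 2 ∂μ := integral_nonneg fun M => sq_nonneg _
  have e : ∀ M, (|f M| - m) ^ 2 = f M ^ 2 - 2 * m * |f M| + m ^ 2 := by
    intro M; rw [← sq_abs (f M)]; ring
  simp only [e] at h0
  rw [integral_add (integrable_cont μ (by fun_prop)) (integrable_const _),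
    integral_sub (integrable_cont μ (by fun_prop)) (integrable_cont μ (by fun_prop)),
    integral_const_mul, ← hm] at h0
  simp at h0
  apply le_of_sq_le_sq _ hc0
  nlinarith

/-- the quadratic term -/
noncomputable def tB (q : ℕ) (M : USp n) : ℝ := ∑ i ∈ Finset.range q, pt M (i + 1) * pt M (q - i)

noncomputable def tC (q : ℕ) (M : USp n) : ℝ :=
  ∑ i ∈ Finset.range q, if dd (q + 1) (2 * (i + 1)) = 0 then 0 else pt M (dd (q + 1) (2 * (i + 1)))

lemma continuous_tB (q : ℕ) : Continuous (tB (n := n) q) := by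
  have := continuous_pt (n := n)
  unfold tB; fun_prop

lemma continuous_tC (q : ℕ) : Continuous (tC (n := n) q) := by
  have := continuous_pt (n := n)
  unfold tC
  apply continuous_finsetSum
  intro i _
  split_ifs
  · exact continuous_const
  · exact this _

lemma m_tB (μ : Measure (USp n)) [IsProbabilityMeasure μ] [μ.IsMulLeftInvariant]
    (q : ℕ) (h : q + 1 ≤ n) : ∫ M, tB q M ^ 2 ∂μ ≤ 10 * ((q : ℝ) + 1) ^ 3 := by
  have hpt := continuous_pt (n := n)
  refine le_trans (le_of_eq ?_) (sum_four_le n q)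
  have e : ∀ M : USp n, tB q M ^ 2 = ∑ i ∈ Finset.range q, ∑ k ∈ Finset.range q,
      pt M (i + 1) * (pt M (q - i) * (pt M (k + 1) * pt M (q - k))) := by
    intro M
    rw [sq, tB, Finset.sum_mul_sum]
    simp only [mul_assoc]
  simp only [e]
  rw [integral_finsetSum _ (fun i _ => integrable_cont μ (by fun_prop))]
  apply Finset.sum_congr rfl; intro i hi
  rw [integral_finsetSum _ (fun i _ => integrable_cont μ (by fun_prop))]
  apply Finset.sum_congr rfl; intro k hk
  rw [Finset.mem_range] at hi hk
  have h1 := En_eq μ {i + 1, q - i, k + 1, q - k} (by simp; omega) (by simp; omega)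
  simpa [QQ] using h1

lemma m_tC (μ : Measure (USp n)) [IsProbabilityMeasure μ] [μ.IsMulLeftInvariant]
    (q : ℕ) (h : q + 1 ≤ n) : ∫ M, tC q M ^ 2 ∂μ ≤ ((q : ℝ) + 1) ^ 3 := by
  have hpt := continuous_pt (n := n)
  set r : ℕ → USp n → ℝ := fun i M =>
    if dd (q + 1) (2 * (i + 1)) = 0 then 0 else pt M (dd (q + 1) (2 * (i + 1))) with hr
  have hrc : ∀ i, Continuous (r i) := by
    intro i; simp only [hr]; split_ifs
    · exact continuous_const
    · exact hpt _
  have hrb : ∀ i ∈ Finset.range q, ∫ M, r i M ^ 2 ∂μ ≤ q + 1 := by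
    intro i hi
    rw [Finset.mem_range] at hi
    simp only [hr]; split_ifs with h0
    · simp; positivity
    · have hd : dd (q + 1) (2 * (i + 1)) + 1 ≤ q + 1 := by unfold dd; omega
      refine (m_two μ (Nat.pos_of_ne_zero h0) (by omega)).trans ?_
      exact_mod_cast hd
  calc ∫ M, tC q M ^ 2 ∂μ ≤ ∫ M, (q : ℝ) * ∑ i ∈ Finset.range q, r i M ^ 2 ∂μ := by
        apply integral_mono (integrable_cont μ ((continuous_tC q).pow 2))
          (integrable_cont μ (by fun_prop))
        intro M
        have := sq_sum_le_card_mul_sum_sq (s := Finset.range q) (f := fun i => r i M)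
        rw [Finset.card_range] at this
        exact this
    _ = q * ∑ i ∈ Finset.range q, ∫ M, r i M ^ 2 ∂μ := by
        rw [integral_const_mul, integral_finsetSum _ (fun i _ => integrable_cont μ (by fun_prop))]
    _ ≤ q * ∑ i ∈ Finset.range q, ((q : ℝ) + 1) :=
        mul_le_mul_of_nonneg_left (Finset.sum_le_sum hrb) (by positivity)
    _ ≤ ((q : ℝ) + 1) ^ 3 := by
        rw [Finset.sum_const, Finset.card_range, nsmul_eq_mul]
        have : (0:ℝ) ≤ q := by positivity
        nlinarith [mul_nonneg this this, mul_nonneg (mul_nonneg this this) this]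

lemma loop_expand (q : ℕ) (M : USp n) :
    ∑ i ∈ Finset.range (q + 1), (pt M i * pt M (q + 1 - i) + pt M (dd (q + 1) (2 * i))) =
      2 * n * (pt M (q + 1) + eta (q + 1)) + (pt M (q + 1) + tB q M + tC q M) := by
  rw [Finset.sum_range_succ']
  have h0 : dd (q + 1) (2 * 0) = q + 1 := by unfold dd; omega
  rw [h0, pt_zero, Nat.sub_zero, Finset.sum_add_distrib]
  have hB : ∑ i ∈ Finset.range q, pt M (i + 1) * pt M (q + 1 - (i + 1)) = tB q M := by
    unfold tB
    apply Finset.sum_congr rfl; intro i _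
    rw [show q + 1 - (i + 1) = q - i by omega]
  have hC : ∑ i ∈ Finset.range q, pt M (dd (q + 1) (2 * (i + 1))) =
      tC q M + 2 * n * eta (q + 1) := by
    have e1 : ∀ i ∈ Finset.range q, pt M (dd (q + 1) (2 * (i + 1))) =
        (if dd (q + 1) (2 * (i + 1)) = 0 then 0 else pt M (dd (q + 1) (2 * (i + 1)))) +
        if i + 1 = (q + 1) / 2 then 2 * n * eta (q + 1) else 0 := by
      intro i _
      by_cases hd : dd (q + 1) (2 * (i + 1)) = 0
      · have h1 : i + 1 = (q + 1) / 2 := by unfold dd at hd; omega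
        have h2 : Even (q + 1) := ⟨i + 1, by unfold dd at hd; omega⟩
        rw [if_pos hd, if_pos h1, hd, pt_zero, eta, if_pos h2]; ring
      · rw [if_neg hd]
        split_ifs with h1
        · have h2 : ¬ Even (q + 1) := by
            rintro ⟨r, hr⟩; apply hd; unfold dd; omega
          rw [eta, if_neg h2]; ring
        · ring
    rw [Finset.sum_congr rfl e1, Finset.sum_add_distrib]
    congr 1
    by_cases hq : q = 0
    · subst hq; simp [eta]
    · rw [Finset.sum_eq_single ((q + 1) / 2 - 1)]
      · rw [if_pos (by omega)]
      · intro b _ hb; rw [if_neg (by omega)]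
      · intro hh; exact absurd (Finset.mem_range.2 (by omega)) hh
  rw [hB, hC]; ring

lemma m_T (μ : Measure (USp n)) [IsProbabilityMeasure μ] [μ.IsMulLeftInvariant]
    (q : ℕ) (h : q + 1 ≤ n) :
    ∫ M, |pt M (q + 1) + tB q M + tC q M| ∂μ ≤ 7 * ((q + 1 : ℕ) : ℝ) * Real.sqrt ((q + 1 : ℕ) : ℝ) := by
  have hpt := continuous_pt (n := n) (q + 1)
  have hB := continuous_tB (n := n) q
  have hC := continuous_tC (n := n) q
  apply abs_le_sqrt' μ (by fun_prop) _ _ (by positivity)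
  have h1 : ∫ M, (pt M (q + 1) + tB q M + tC q M) ^ 2 ∂μ ≤
      ∫ M, (3 * pt M (q + 1) ^ 2 + 3 * tB q M ^ 2 + 3 * tC q M ^ 2) ∂μ := by
    apply integral_mono (integrable_cont μ (by fun_prop)) (integrable_cont μ (by fun_prop))
    intro M
    simp only
    nlinarith [sq_nonneg (pt M (q + 1) - tB q M), sq_nonneg (pt M (q + 1) - tC q M),
      sq_nonneg (tB q M - tC q M)]
  rw [integral_add (integrable_cont μ (by fun_prop)) (integrable_cont μ (by fun_prop)),
    integral_add (integrable_cont μ (by fun_prop)) (integrable_cont μ (by fun_prop)),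
    integral_const_mul, integral_const_mul, integral_const_mul] at h1
  have a1 := m_two μ (Nat.succ_pos q) h
  have a2 := m_tB μ q h
  have a3 := m_tC μ q h
  rw [mul_pow, Real.sq_sqrt (by positivity)]
  push_cast at *
  have hq : (0:ℝ) ≤ q := by positivity
  nlinarith [mul_nonneg hq hq, mul_nonneg (mul_nonneg hq hq) hq]

lemma stein_W (μ : Measure (USp n)) [IsProbabilityMeasure μ] [μ.IsMulLeftInvariant]
    (q : ℕ) (h : 2 * (q + 1) ≤ n) (g g' : ℝ → ℝ) (hg' : Continuous g')
    (hd : ∀ x, HasDerivAt g (g' x) x) (hb : ∀ x, |g x| ≤ Kst) (hb' : ∀ x, |g' x| ≤ 2) :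
    |∫ M, (g' ((pt M (q + 1) + eta (q + 1)) / Real.sqrt ((q + 1 : ℕ) : ℝ)) -
      (pt M (q + 1) + eta (q + 1)) / Real.sqrt ((q + 1 : ℕ) : ℝ) *
      g ((pt M (q + 1) + eta (q + 1)) / Real.sqrt ((q + 1 : ℕ) : ℝ))) ∂μ| ≤
      (7 * Kst + 4) * ((q + 1 : ℕ) : ℝ) / n := by
  have hpt := continuous_pt (n := n)
  have hB := continuous_tB (n := n) q
  have hC := continuous_tC (n := n) q
  have hg : Continuous g := continuous_iff_continuousAt.2 fun x => (hd x).continuousAt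
  set s := Real.sqrt ((q + 1 : ℕ) : ℝ) with hs
  have hs2 : s * s = ((q + 1 : ℕ) : ℝ) := Real.mul_self_sqrt (by positivity)
  have hj1 : (1:ℝ) ≤ ((q + 1 : ℕ) : ℝ) := by exact_mod_cast Nat.succ_le_succ (Nat.zero_le q)
  have hs1 : 1 ≤ s := by rw [hs]; exact Real.one_le_sqrt.2 hj1
  have hspos : 0 < s := by linarith
  set W : USp n → ℝ := fun M => (pt M (q + 1) + eta (q + 1)) / s with hW
  have hWc : Continuous W := by simp only [hW]; fun_prop
  have key := ibp μ (fun M => g (W M)) {q + 1} (fun _ M => g' (W M) / s) (by fun_prop)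
    (fun _ => by fun_prop) (fun X hX M t => by
      simp only [Finset.sum_singleton]
      have h1 := ((hasDeriv_pt hX M t (q + 1)).add_const (eta (q + 1))).div_const s
      refine ((hd (W (ex hX t * M))).comp t h1).congr_deriv ?_
      ring) (q + 1)
  simp only [loop_expand, Finset.sum_singleton] at key
  have hdd : dd (q + 1) (q + 1) = 0 := by unfold dd; omega
  rw [hdd] at key
  simp only [pt_zero] at key
  set T : USp n → ℝ := fun M => pt M (q + 1) + tB q M + tC q M with hT
  have hTc : Continuous T := by simp only [hT]; fun_prop
  have hWe : ∀ M, pt M (q + 1) + eta (q + 1) = s * W M := by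
    intro M; simp only [hW]; field_simp
  have e1 : ∀ M, g (W M) * (2 * n * (pt M (q + 1) + eta (q + 1)) +
      (pt M (q + 1) + tB q M + tC q M)) = 2 * n * s * (W M * g (W M)) + g (W M) * T M := by
    intro M; rw [hWe]; simp only [hT]; ring
  have e2 : ∀ M : USp n, ((q + 1 : ℕ) : ℝ) * (g' (W M) / s) * (2 * n - pt M (q + 1 + (q + 1))) =
      2 * n * s * g' (W M) - s * (g' (W M) * pt M (q + 1 + (q + 1))) := by
    intro M; rw [← hs2]; field_simp
  simp only [e1, e2] at key
  rw [integral_add (integrable_cont μ (by fun_prop)) (integrable_cont μ (by fun_prop)),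
    integral_sub (integrable_cont μ (by fun_prop)) (integrable_cont μ (by fun_prop)),
    integral_const_mul, integral_const_mul, integral_const_mul] at key
  rw [integral_sub (integrable_cont μ (by fun_prop)) (integrable_cont μ (by fun_prop))]
  have b1 : |∫ M, g (W M) * T M ∂μ| ≤ Kst * (7 * ((q + 1 : ℕ) : ℝ) * s) := by
    calc |∫ M, g (W M) * T M ∂μ| ≤ ∫ M, |g (W M) * T M| ∂μ := abs_integral_le_integral_abs
      _ ≤ ∫ M, Kst * |T M| ∂μ := by
        apply integral_mono (integrable_cont μ (by fun_prop)) (integrable_cont μ (by fun_prop))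
        intro M
        simp only [abs_mul]
        exact mul_le_mul_of_nonneg_right (hb _) (abs_nonneg _)
      _ = Kst * ∫ M, |T M| ∂μ := integral_const_mul _ _
      _ ≤ _ := mul_le_mul_of_nonneg_left (m_T μ q (by omega)) (by unfold Kst; positivity)
  have b2 : |∫ M, g' (W M) * pt M (q + 1 + (q + 1)) ∂μ| ≤ 2 * (2 * s) := by
    calc |∫ M, g' (W M) * pt M (q + 1 + (q + 1)) ∂μ| ≤
        ∫ M, |g' (W M) * pt M (q + 1 + (q + 1))| ∂μ := abs_integral_le_integral_abs
      _ ≤ ∫ M, 2 * |pt M (q + 1 + (q + 1))| ∂μ := by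
        apply integral_mono (integrable_cont μ (by fun_prop)) (integrable_cont μ (by fun_prop))
        intro M
        simp only [abs_mul]
        exact mul_le_mul_of_nonneg_right (hb' _) (abs_nonneg _)
      _ = 2 * ∫ M, |pt M (q + 1 + (q + 1))| ∂μ := integral_const_mul _ _
      _ ≤ _ := by
        apply mul_le_mul_of_nonneg_left _ (by norm_num)
        apply abs_le_sqrt' μ (hpt _) _ _ (by positivity)
        refine (m_two μ (by omega) (by omega)).trans ?_
        rw [mul_pow, sq s, hs2]
        push_cast at *
        linarith
  have hn : (0:ℝ) < n := by exact_mod_cast (by omega : 0 < n)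
  set D := ∫ M, g' (W M) ∂μ - ∫ M, W M * g (W M) ∂μ with hD
  have hk : 2 * n * s * D = ∫ M, g (W M) * T M ∂μ +
      s * ∫ M, g' (W M) * pt M (q + 1 + (q + 1)) ∂μ := by
    rw [hD]; linarith
  have hk2 : 2 * n * s * |D| ≤ Kst * (7 * ((q + 1 : ℕ) : ℝ) * s) + s * (2 * (2 * s)) := by
    rw [← abs_of_pos (show 0 < 2 * n * s by positivity), ← abs_mul, hk]
    refine (abs_add_le _ _).trans (add_le_add b1 ?_)
    rw [abs_mul, abs_of_pos hspos]
    exact mul_le_mul_of_nonneg_left b2 hspos.le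
  rw [le_div_iff₀ hn]
  have hK : 0 ≤ Kst := by unfold Kst; positivity
  have hk3 : 2 * n * |D| ≤ Kst * (7 * ((q + 1 : ℕ) : ℝ)) + 4 * s := by
    refine le_of_mul_le_mul_right ?_ hspos
    linarith
  have hsj : s ≤ ((q + 1 : ℕ) : ℝ) := by rw [← hs2]; nlinarith
  have : 0 ≤ Kst * (7 * ((q + 1 : ℕ) : ℝ)) := by positivity
  have : 0 ≤ n * |D| := by positivity
  linarith

end final
end USpCLT

open USpCLT

/-- CLT with rate `O(j/n)` for traces of powers of Haar-distributed elements of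
`USp(2n,ℂ)`: there is a universal constant `C > 0` such that for all `n, j ≥ 1` and all
`x₀`, `|P(W ≤ x₀) − Φ(x₀)| ≤ C·j/n`, where `W = Tr(M^j)/√j` (`j` odd) or
`W = (Tr(M^j) + 1)/√j` (`j` even); these are real numbers, recorded via the real part. -/
theorem usp_trace_power_clt :
    ∃ C : ℝ, 0 < C ∧
      ∀ (n j : ℕ), 0 < n → 0 < j →
        ∀ (μ : Measure (USp n)), IsProbabilityMeasure μ → μ.IsHaarMeasure →
          ∀ x₀ : ℝ,
            |(μ {M : USp n |
                (if Odd j then (trUSp M j).re / Real.sqrt j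
                 else ((trUSp M j).re + 1) / Real.sqrt j) ≤ x₀}).toReal - Phi x₀|
              ≤ C * j / n := by
  have hK : 0 ≤ Kst := by unfold Kst; positivity
  refine ⟨7 * Kst + 4, by positivity, ?_⟩
  intro n j hn hj μ hp hh x₀
  have hn' : (0:ℝ) < n := by exact_mod_cast hn
  by_cases hjn : 2 * j ≤ n
  · obtain ⟨q, rfl⟩ : ∃ q, j = q + 1 := ⟨j - 1, by omega⟩
    have hpt := continuous_pt (n := n) (q + 1)
    have e : ∀ M : USp n, (if Odd (q + 1) then (trUSp M (q + 1 : ℕ)).re / Real.sqrt (q + 1 : ℕ)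
        else ((trUSp M (q + 1 : ℕ)).re + 1) / Real.sqrt (q + 1 : ℕ)) =
        (pt M (q + 1) + eta (q + 1)) / Real.sqrt ((q + 1 : ℕ) : ℝ) := by
      intro M
      rw [trUSp_eq]
      split_ifs with ho
      · rw [eta, if_neg (Nat.not_even_iff_odd.2 ho), add_zero]
      · rw [eta, if_pos (Nat.not_odd_iff_even.1 ho)]
    simp only [e]
    apply stein_bound μ (fun M => (pt M (q + 1) + eta (q + 1)) / Real.sqrt ((q + 1 : ℕ) : ℝ))
      (by apply Continuous.measurable; fun_prop)
    intro g g' h1 h2 h3 h4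
    exact stein_W μ q hjn g g' h1 h2 h3 h4
  · have h1 : (μ {M : USp n |
                (if Odd j then (trUSp M j).re / Real.sqrt j
                 else ((trUSp M j).re + 1) / Real.sqrt j) ≤ x₀}).toReal ≤ 1 :=
      ENNReal.toReal_le_of_le_ofReal zero_le_one (by simpa using prob_le_one)
    have h0 := ENNReal.toReal_nonneg (a := μ {M : USp n |
                (if Odd j then (trUSp M j).re / Real.sqrt j
                 else ((trUSp M j).re + 1) / Real.sqrt j) ≤ x₀})
    have h2 := Phi_mem x₀
    have h3 : (1:ℝ) ≤ (7 * Kst + 4) * j / n := by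
      rw [le_div_iff₀ hn']
      have : (n : ℝ) ≤ 2 * j := by exact_mod_cast (by omega : n ≤ 2 * j)
      have : 0 ≤ Kst * j := by positivity
      linarith
    refine le_trans ?_ h3
    rw [abs_le]; constructor <;> linarith
end
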